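/- arXiv:2005.01590 — 6 statements merged into one kernel-verified Lean document; each statement's English description precedes it below -/
import Mathlib

section
/- Let H be a finite directed multigraph with incidence matrix D = D(H) ∈ ℝ^{V×E}, let K = ker D ⊆ ℝ^{E}, and let A = K \ ⋃_{e∈E} { x ∈ K : x(e) = 0 }. For each connected component R of A and each point p ∈ R, define ε_R : E → {+1, −1} by ε_R(e) = +1 if p(e) > 0 and ε_R(e) = −1 if p(e) < 0. Then ε_R does not depend on the choice of the point p ∈ R, and the assignment R ↦ ε_R is a bijection from the set of connected components of A onto the set of totally cyclic orientations of H. -/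
/-!
On the complement `A` of the coordinate hyperplanes in `ker D(H)` the sign vector is locally
constant, hence constant on connected components; conversely, two points of `A` with equal sign
vectors are joined by a segment inside `A`, so the sign vector separates components.

It remains to identify the sign vectors that occur. Multiplying by `ε` identifies
`ker D(H_ε)` with `ker D(H)`, so `ε` occurs iff `H_ε` carries a strictly positive vector in the
kernel of its incidence matrix, i.e. a positive circulation. This is equivalent to `H_ε` being
totally cyclic:

* if every edge lies on a directed cycle, the sum of the indicator vectors of one cycle per edge is
  a positive circulation (`exists_pos_of_isTotallyCyclic`);
* given a positive circulation and an edge `e`, let `S` be the set of vertices reachable from the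
  head of `e`. No edge leaves `S`, and the net flow into `S` is zero, so no edge enters `S` either;
  hence the tail of `e` is in `S`, and a simple path from the head of `e` back to its tail closes
  up to a directed cycle (`isTotallyCyclic_of_pos`).
-/

/-- A finite directed multigraph on vertex type `V` with edge type `E`. -/
structure Multigraph (V E : Type) where
  head : E → V
  tail : E → V

namespace Multigraph

variable {V E : Type}

/-- `H.IsWalkFrom u v es` : `es` is the edge list of a directed walk from `u` to `v`. -/
def IsWalkFrom (H : Multigraph V E) : V → V → List E → Prop
  | u, v, [] => u = v
  | u, v, e :: es => H.tail e = u ∧ IsWalkFrom H (H.head e) v es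

/-- A directed cycle based at `v` with edge list `es`: a closed directed walk of positive
length with no repeated edges and no repeated vertices (except first = last). -/
def IsDirectedCycle (H : Multigraph V E) (v : V) (es : List E) : Prop :=
  es ≠ [] ∧ es.Nodup ∧ (es.map H.head).Nodup ∧ H.IsWalkFrom v v es

/-- The edge `e` lies on a directed cycle of `H`. -/
def OnCycle (H : Multigraph V E) (e : E) : Prop :=
  ∃ v es, H.IsDirectedCycle v es ∧ e ∈ es

/-- Every edge of `H` lies on a directed cycle. -/
def IsTotallyCyclic (H : Multigraph V E) : Prop := ∀ e, H.OnCycle e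

/-- `H` has no directed cycle. -/
def IsAcyclic (H : Multigraph V E) : Prop := ∀ v es, ¬ H.IsDirectedCycle v es

/-- The multigraph obtained from `H` by reversing every edge `e` with `ε e = -1`. -/
def reorient (H : Multigraph V E) (ε : E → ℤ) : Multigraph V E where
  head e := if ε e = 1 then H.head e else H.tail e
  tail e := if ε e = 1 then H.tail e else H.head e

/-- An orientation is a map to `{+1, -1}`. -/
def IsOrientation (ε : E → ℤ) : Prop := ∀ e, ε e = 1 ∨ ε e = -1

/-- The incidence matrix of `H`: `D v e = [v = head e] - [v = tail e]`. -/
def incMatrix (H : Multigraph V E) [DecidableEq V] : Matrix V E ℝ :=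
  Matrix.of fun v e => (if v = H.head e then (1 : ℝ) else 0) - (if v = H.tail e then 1 else 0)

/-- A flow with values in `R`: at each vertex, the sum over incoming edges equals
the sum over outgoing edges. -/
def IsFlow {R : Type*} [AddCommMonoid R] (H : Multigraph V E) [Fintype E] [DecidableEq V]
    (f : E → R) : Prop :=
  ∀ v : V, ∑ e, (if H.head e = v then f e else 0) = ∑ e, (if H.tail e = v then f e else 0)

/-- Contraction of the edge set `A`: vertices are identified along edges of `A`
(the quotient by the equivalence relation generated by `tail e ∼ head e` for `e ∈ A`),
and the edges of `A` are removed. -/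
def contract (H : Multigraph V E) (A : Set E) :
    Multigraph (Quot fun u v => ∃ e ∈ A, H.tail e = u ∧ H.head e = v) {e : E // e ∉ A} where
  head e := Quot.mk _ (H.head e.1)
  tail e := Quot.mk _ (H.tail e.1)

/-- Deletion of the edge set `A`. -/
def deleteEdges (H : Multigraph V E) (A : Set E) : Multigraph V {e : E // e ∉ A} where
  head e := H.head e.1
  tail e := H.tail e.1

/-- The starting vertex of the directed edge `(e, b)`; `b = true` means `e` is
traversed from its tail to its head. -/
def dirTail (H : Multigraph V E) (q : E × Bool) : V := if q.2 then H.tail q.1 else H.head q.1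

/-- The ending vertex of the directed edge `(e, b)`. -/
def dirHead (H : Multigraph V E) (q : E × Bool) : V := if q.2 then H.head q.1 else H.tail q.1

/-- A walk in the underlying undirected multigraph, where each edge may be traversed
in either direction. -/
def IsSignedWalkFrom (H : Multigraph V E) : V → V → List (E × Bool) → Prop
  | u, v, [] => u = v
  | u, v, q :: qs => H.dirTail q = u ∧ IsSignedWalkFrom H (H.dirHead q) v qs

/-- A cycle of the underlying undirected multigraph, traversed in a chosen direction. -/
def IsUndirectedCycle (H : Multigraph V E) (v : V) (qs : List (E × Bool)) : Prop :=
  qs ≠ [] ∧ (qs.map Prod.fst).Nodup ∧ (qs.map H.dirHead).Nodup ∧ H.IsSignedWalkFrom v v qs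

/-- A tension with values in `R`: the signed sum along every cycle of the underlying
undirected multigraph vanishes. -/
def IsTension {R : Type*} [AddCommGroup R] (H : Multigraph V E) (t : E → R) : Prop :=
  ∀ v qs, H.IsUndirectedCycle v qs →
    (qs.map fun q => if q.2 then t q.1 else -t q.1).sum = 0

end Multigraph

namespace Multigraph

variable {V E : Type}

/-! ### Walks and simple paths -/

/-- A simple path to `v` starting at `w` can be truncated to start at any vertex `u` it visits. -/
lemma exists_simple_suffix (G : Multigraph V E) (u v : V) (es : List E) :
    ∀ w, G.IsWalkFrom w v es → (w :: es.map G.head).Nodup → u ∈ w :: es.map G.head →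
      ∃ es', G.IsWalkFrom u v es' ∧ (u :: es'.map G.head).Nodup := by
  induction es with
  | nil =>
    intro w hw hn hu
    obtain rfl : u = w := by simpa using hu
    exact ⟨[], hw, hn⟩
  | cons e es ih =>
    intro w hw hn hu
    rcases List.mem_cons.1 hu with rfl | hu
    · exact ⟨e :: es, hw, hn⟩
    · exact ih (G.head e) hw.2 (List.nodup_cons.1 hn).2 hu

lemma exists_simple_path (G : Multigraph V E) (v : V) (es : List E) :
    ∀ u, G.IsWalkFrom u v es →
      ∃ es', G.IsWalkFrom u v es' ∧ (u :: es'.map G.head).Nodup := by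
  induction es with
  | nil => intro u hu; exact ⟨[], hu, by simp⟩
  | cons e es ih =>
    intro u hu
    obtain ⟨es', hw, hn⟩ := ih _ hu.2
    by_cases hmem : u ∈ G.head e :: es'.map G.head
    · exact exists_simple_suffix G u v es' _ hw hn hmem
    · exact ⟨e :: es', ⟨hu.1, hw⟩, List.nodup_cons.2 ⟨hmem, hn⟩⟩

lemma IsWalkFrom.append_edge {G : Multigraph V E} {f : E} {es : List E} :
    ∀ {u : V}, G.IsWalkFrom u (G.tail f) es → G.IsWalkFrom u (G.head f) (es ++ [f]) := by
  induction es with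
  | nil => intro u hu; exact ⟨Eq.symm hu, rfl⟩
  | cons e es ih => intro u hu; exact ⟨hu.1, ih hu.2⟩

lemma onCycle_of_walk (G : Multigraph V E) (e : E) (es : List E)
    (h : G.IsWalkFrom (G.head e) (G.tail e) es) : G.OnCycle e := by
  obtain ⟨es', hw, hn⟩ := exists_simple_path G _ es _ h
  have hn' : ((e :: es').map G.head).Nodup := hn
  exact ⟨G.tail e, e :: es', ⟨by simp, hn'.of_map, hn', rfl, hw⟩, by simp⟩

/-! ### Sign vectors -/

/-- The sign vector of a real vector; zero entries get the sign `-1`, but all vectors of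
interest have nonzero entries. -/
noncomputable def signVec (x : E → ℝ) : E → ℤ := fun e => if 0 < x e then 1 else -1

lemma isOrientation_signVec (x : E → ℝ) : IsOrientation (signVec x) := by
  intro e
  by_cases h : 0 < x e <;> simp [signVec, h]

/-! ### Positive circulations and total cyclicity -/

variable [Fintype E] [DecidableEq V]

lemma isTotallyCyclic_of_pos [Fintype V] (G : Multigraph V E) (x : E → ℝ)
    (hx : G.incMatrix.mulVec x = 0) (hpos : ∀ e, 0 < x e) : G.IsTotallyCyclic := by
  classical
  intro e
  by_contra hcon
  let R : V → Prop := fun w => ∃ es, G.IsWalkFrom (G.head e) w es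
  have htail : ¬ R (G.tail e) := fun ⟨es, hes⟩ => hcon (onCycle_of_walk G e es hes)
  have hhead : R (G.head e) := ⟨[], rfl⟩
  have hstep : ∀ f, R (G.tail f) → R (G.head f) := fun f ⟨es, hes⟩ => ⟨_, hes.append_edge⟩
  -- The net flow into the reachable set vanishes; regroup it edge by edge.
  have hsum : ∑ f, ((if R (G.head f) then (1 : ℝ) else 0) - (if R (G.tail f) then 1 else 0)) * x f
      = 0 := by
    have h0 : ∑ v, (if R v then (1 : ℝ) else 0) * G.incMatrix.mulVec x v = 0 := by simp [hx]
    refine Eq.trans ?_ h0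
    simp only [Matrix.mulVec, dotProduct, Finset.mul_sum]
    rw [Finset.sum_comm]
    refine Finset.sum_congr rfl fun f _ => ?_
    simp only [← mul_assoc, ← Finset.sum_mul]
    congr 1
    simp [incMatrix, mul_sub, Finset.sum_sub_distrib]
  have hnonneg : ∀ f ∈ Finset.univ,
      0 ≤ ((if R (G.head f) then (1 : ℝ) else 0) - (if R (G.tail f) then 1 else 0)) * x f := by
    intro f _
    refine mul_nonneg ?_ (hpos f).le
    by_cases ht : R (G.tail f)
    · simp [ht, hstep f ht]
    · by_cases hh : R (G.head f) <;> simp [ht, hh]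
  have he := (Finset.sum_eq_zero_iff_of_nonneg hnonneg).1 hsum e (Finset.mem_univ e)
  simp only [hhead, htail, if_true, if_false, sub_zero, one_mul] at he
  exact (hpos e).ne' he

/-- The boundary of the edge-count vector of a walk from `u` to `v` is `v - u`. -/
lemma mulVec_count [DecidableEq E] (G : Multigraph V E) (v : V) (es : List E) :
    ∀ u, G.IsWalkFrom u v es →
      G.incMatrix.mulVec (fun e => (es.count e : ℝ)) = Pi.single v 1 - Pi.single u 1 := by
  induction es with
  | nil =>
    rintro u rfl
    ext w
    simp [Matrix.mulVec, dotProduct]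
  | cons e es ih =>
    rintro u ⟨rfl, hw⟩
    have hsplit : (fun f => ((e :: es).count f : ℝ))
        = (fun f => (es.count f : ℝ)) + Pi.single e 1 := by
      ext f
      by_cases h : e = f
      · subst h; simp
      · simp [h, Ne.symm h]
    rw [hsplit, Matrix.mulVec_add, ih _ hw]
    ext w
    simp [incMatrix, Pi.single_apply]

lemma exists_pos_of_isTotallyCyclic (G : Multigraph V E) (h : G.IsTotallyCyclic) :
    ∃ x : E → ℝ, G.incMatrix.mulVec x = 0 ∧ ∀ e, 0 < x e := by
  classical
  choose v es hcyc hmem using h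
  refine ⟨∑ f, fun e => ((es f).count e : ℝ), ?_, fun e => ?_⟩
  · rw [Matrix.mulVec_sum]
    exact Finset.sum_eq_zero fun f _ => by rw [mulVec_count G _ _ _ (hcyc f).2.2.2, sub_self]
  · rw [Finset.sum_apply]
    refine Finset.sum_pos' (fun f _ => Nat.cast_nonneg _) ⟨e, Finset.mem_univ e, ?_⟩
    exact_mod_cast List.count_pos_iff.2 (hmem e)

/-- Multiplication by `ε` carries `ker D(H_ε)` to `ker D(H)`. -/
lemma reorient_mulVec (H : Multigraph V E) (ε : E → ℤ) (hε : IsOrientation ε) (x : E → ℝ) :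
    (H.reorient ε).incMatrix.mulVec x = H.incMatrix.mulVec (fun e => (ε e : ℝ) * x e) := by
  ext v
  simp only [Matrix.mulVec, dotProduct]
  refine Finset.sum_congr rfl fun e _ => ?_
  rcases hε e with h | h
  · simp [incMatrix, reorient, h]
  · simp [incMatrix, reorient, h]
    ring

/-! ### Connected components of the arrangement complement -/

/-- The complement in `ker D(H)` of the coordinate hyperplanes. -/
abbrev openPart (H : Multigraph V E) : Set (E → ℝ) :=
  {x : E → ℝ | H.incMatrix.mulVec x = 0 ∧ ∀ e, x e ≠ 0}

lemma isTotallyCyclic_signVec [Fintype V] (H : Multigraph V E) (x : E → ℝ)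
    (hx : x ∈ H.openPart) : (H.reorient (signVec x)).IsTotallyCyclic := by
  refine isTotallyCyclic_of_pos _ (fun e => |x e|) ?_ fun e => abs_pos.2 (hx.2 e)
  rw [reorient_mulVec H _ (isOrientation_signVec x), ← hx.1]
  congr 1
  ext e
  by_cases h : 0 < x e
  · simp [signVec, h, abs_of_pos h]
  · simp [signVec, h, abs_of_nonpos (not_lt.1 h)]

lemma continuous_signVec (H : Multigraph V E) :
    Continuous fun x : H.openPart => signVec x.1 := by
  refine continuous_pi fun e => ?_
  have hc : Continuous fun x : H.openPart => x.1 e :=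
    (continuous_apply e).comp continuous_subtype_val
  -- Since `x e ≠ 0` on `openPart`, positivity of `x e` is also a closed condition.
  have hclopen : IsClopen {x : H.openPart | 0 < x.1 e} := by
    refine ⟨?_, isOpen_lt continuous_const hc⟩
    have : {x : H.openPart | 0 < x.1 e} = {x : H.openPart | 0 ≤ x.1 e} := by
      ext x
      simp only [Set.mem_ofPred_eq]
      exact ⟨fun h => le_of_lt h, fun h => lt_of_le_of_ne h (x.2.2 e).symm⟩
    rw [this]
    exact isClosed_le continuous_const hc
  refine Continuous.if (fun a ha => ?_) continuous_const continuous_const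
  rw [hclopen.frontier_eq] at ha
  exact ha.elim

lemma mk_eq_of_signVec_eq (H : Multigraph V E) (x y : H.openPart)
    (h : signVec x.1 = signVec y.1) :
    (ConnectedComponents.mk x) = ConnectedComponents.mk y := by
  have hseg : segment ℝ x.1 y.1 ⊆ H.openPart := by
    rintro _ ⟨a, b, ha, hb, hab, rfl⟩
    refine ⟨by simp [Matrix.mulVec_add, Matrix.mulVec_smul, x.2.1, y.2.1], fun e => ?_⟩
    have he := congrFun h e
    simp only [signVec] at he
    simp only [Pi.add_apply, Pi.smul_apply, smul_eq_mul]
    have hab' : 0 < a ∨ 0 < b := by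
      by_contra! hcon
      linarith
    by_cases hx : 0 < x.1 e
    · have hy : 0 < y.1 e := by
        by_contra hy
        simp [hx, hy] at he
      apply ne_of_gt
      rcases hab' with h | h <;> positivity
    · have hy : ¬ 0 < y.1 e := by
        intro hy
        simp [hx, hy] at he
      have hx' : 0 < -x.1 e := neg_pos.2 (lt_of_le_of_ne (not_lt.1 hx) (x.2.2 e))
      have hy' : 0 < -y.1 e := neg_pos.2 (lt_of_le_of_ne (not_lt.1 hy) (y.2.2 e))
      have : 0 < a * -x.1 e + b * -y.1 e := by
        rcases hab' with h | h <;> positivity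
      apply ne_of_lt
      linarith
  have hj : Joined x y := (joinedIn_iff_joined x.2 y.2).1 (JoinedIn.of_segment_subset hseg)
  exact ConnectedComponents.coe_eq_coe'.2 (pathComponent_subset_component y hj.symm)

end Multigraph

open Multigraph in
/-- the sign vector of a point in a connected component of
`ker D(H) \ ⋃ₑ {x : x e = 0}` is well defined, and the assignment
(component ↦ its sign vector) is a bijection onto the totally cyclic orientations of `H`. -/
theorem components_equiv_totallyCyclicOrientations (V E : Type) [Fintype V] [Fintype E]
    [DecidableEq V] (H : Multigraph V E) :
    ∃ Φ : ConnectedComponents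
        ({x : E → ℝ | H.incMatrix.mulVec x = 0 ∧ ∀ e, x e ≠ 0} : Set (E → ℝ)) ≃
        {ε : E → ℤ // IsOrientation ε ∧ (H.reorient ε).IsTotallyCyclic},
      ∀ x : ({x : E → ℝ | H.incMatrix.mulVec x = 0 ∧ ∀ e, x e ≠ 0} : Set (E → ℝ)),
        (Φ (ConnectedComponents.mk x) : E → ℤ) = fun e => if 0 < x.1 e then 1 else -1 := by
  let F : ConnectedComponents H.openPart → (E → ℤ) :=
    (continuous_signVec H).connectedComponentsLift
  have hF : ∀ x : H.openPart, F (ConnectedComponents.mk x) = signVec x.1 := fun x =>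
    (continuous_signVec H).connectedComponentsLift_apply_coe x
  have hmem : ∀ c, IsOrientation (F c) ∧ (H.reorient (F c)).IsTotallyCyclic := by
    intro c
    obtain ⟨x, rfl⟩ := ConnectedComponents.surjective_coe c
    rw [hF]
    exact ⟨isOrientation_signVec _, isTotallyCyclic_signVec H _ x.2⟩
  let Ψ : ConnectedComponents H.openPart →
      {ε : E → ℤ // IsOrientation ε ∧ (H.reorient ε).IsTotallyCyclic} := fun c => ⟨F c, hmem c⟩
  have hΨ : Function.Bijective Ψ := by
    constructor
    · intro c d hcd
      obtain ⟨x, rfl⟩ := ConnectedComponents.surjective_coe c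
      obtain ⟨y, rfl⟩ := ConnectedComponents.surjective_coe d
      have hFF : F (ConnectedComponents.mk x) = F (ConnectedComponents.mk y) :=
        congrArg Subtype.val hcd
      rw [hF, hF] at hFF
      exact mk_eq_of_signVec_eq H x y hFF
    · rintro ⟨ε, hε, hcyc⟩
      obtain ⟨p, hp, hpos⟩ := exists_pos_of_isTotallyCyclic _ hcyc
      rw [reorient_mulVec H ε hε] at hp
      have hne : ∀ e, (ε e : ℝ) * p e ≠ 0 := fun e =>
        mul_ne_zero (by rcases hε e with h | h <;> simp [h]) (hpos e).ne'
      refine ⟨ConnectedComponents.mk ⟨fun e => (ε e : ℝ) * p e, hp, hne⟩, Subtype.ext ?_⟩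
      refine (hF _).trans ?_
      ext e
      rcases hε e with h | h
      · simp [signVec, h, hpos e]
      · simp [signVec, h, (hpos e).le]
  exact ⟨Equiv.ofBijective Ψ hΨ, hF⟩
end

section
/- Let H = (V, E, head, tail) be a finite directed multigraph, let c(H) be the number of connected components of its underlying undirected multigraph, and let p be the unique polynomial such that for every integer k ≥ 1, p(k) equals the number of nowhere-zero ℤ/kℤ-flows of H. Then for every integer k ≥ 1, (−1)^{|E|−|V|+c(H)} · p(−k) equals the number of pairs (f, ε) where f is a ℤ/kℤ-flow of H (not necessarily nowhere-zero) and ε is a totally cyclic orientation of the contraction H // supp(f), where supp(f) = { e ∈ E : f(e) ≠ 0 }. -/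
namespace FlowReciprocity

open Multigraph Relation

/-! ### Adding an arc to a relation -/

section Relations

variable {V : Type}

/-- The relation `r` enlarged by the single arc from `u` to `v`. -/
def addArc (r : V → V → Prop) (u v : V) : V → V → Prop :=
  fun x y => r x y ∨ (x = u ∧ y = v)

/-- Every arc of `r` can be closed up to a directed closed walk, i.e. the digraph `r` is
totally cyclic. -/
def Rev (r : V → V → Prop) : Prop := ∀ x y, r x y → ReflTransGen r y x

theorem reach_addArc {r : V → V → Prop} {u v a b : V} (h : ReflTransGen (addArc r u v) a b) :
    ReflTransGen r a b ∨ (ReflTransGen r a u ∧ ReflTransGen r v b) := by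
  induction h with
  | refl => exact Or.inl .refl
  | tail _ hbc ih =>
    rcases hbc with hbc | ⟨rfl, rfl⟩
    · rcases ih with ih | ⟨h1, h2⟩
      · exact Or.inl (ih.tail hbc)
      · exact Or.inr ⟨h1, h2.tail hbc⟩
    · rcases ih with ih | ⟨h1, h2⟩
      · exact Or.inr ⟨ih, .refl⟩
      · exact Or.inr ⟨h1, .refl⟩

theorem reach_mono {r s : V → V → Prop} (hrs : ∀ x y, r x y → s x y) {a b : V}
    (h : ReflTransGen r a b) : ReflTransGen s a b := ReflTransGen.mono hrs _ _ h

theorem addArc_comm (r : V → V → Prop) (u v u' v' : V) :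
    addArc (addArc r u v) u' v' = addArc (addArc r u' v') u v := by
  funext x y
  simp only [addArc, eq_iff_iff]
  tauto

theorem Rev.reach_symm {r : V → V → Prop} (hr : Rev r) {a b : V} (h : ReflTransGen r a b) :
    ReflTransGen r b a := by
  induction h with
  | refl => exact .refl
  | tail _ hbc ih => exact (hr _ _ hbc).trans ih

theorem Rev.reach_of_eqvGen {r : V → V → Prop} (hr : Rev r) {a b : V} (h : EqvGen r a b) :
    ReflTransGen r a b := by
  induction h with
  | rel _ _ h => exact .single h
  | refl _ => exact .refl
  | symm _ _ _ ih => exact hr.reach_symm ih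
  | trans _ _ _ _ _ ih1 ih2 => exact ih1.trans ih2

theorem eqvGen_of_reach {r : V → V → Prop} {a b : V} (h : ReflTransGen r a b) :
    EqvGen r a b := by
  induction h with
  | refl => exact .refl _
  | tail _ hbc ih => exact .trans _ _ _ ih (.rel _ _ hbc)

/-- If `u` is reachable from `v` in `r`, then the arc `v → u` is redundant: it can be dropped without
losing total cyclicity. -/
theorem rev_addArc_of_reach {r : V → V → Prop} {u v : V} (hvu : ReflTransGen r v u)
    (h : Rev (addArc (addArc r u v) v u)) : Rev (addArc r u v) := by
  have hvu' : ReflTransGen (addArc r u v) v u := reach_mono (fun _ _ h => Or.inl h) hvu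
  intro x y hxy
  rcases reach_addArc (h x y (Or.inl hxy)) with h1 | ⟨h1, h2⟩
  · exact h1
  · exact (h1.trans hvu').trans h2

theorem rev_addArc_iff {r : V → V → Prop} {u v : V} :
    Rev (addArc r u v) ↔ ReflTransGen r v u ∧ Rev (addArc (addArc r u v) v u) := by
  constructor
  · intro h
    have hvu : ReflTransGen r v u := by
      rcases reach_addArc (h u v (Or.inr ⟨rfl, rfl⟩)) with h1 | ⟨h1, _⟩ <;> exact h1
    refine ⟨hvu, ?_⟩
    rintro x y (hxy | ⟨rfl, rfl⟩)
    · exact reach_mono (fun _ _ h => Or.inl h) (h x y hxy)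
    · exact .single (Or.inl (Or.inr ⟨rfl, rfl⟩))
  · rintro ⟨h1, h2⟩
    exact rev_addArc_of_reach h1 h2

theorem reach_addArc_both {r : V → V → Prop} {u v a b : V}
    (h : ReflTransGen (addArc (addArc r u v) v u) a b) :
    ReflTransGen r a b ∨ (ReflTransGen r a u ∧ ReflTransGen r v b) ∨
      (ReflTransGen r a v ∧ ReflTransGen r u b) := by
  rcases reach_addArc h with h1 | ⟨h1, h2⟩
  · rcases reach_addArc h1 with h3 | h3
    · exact Or.inl h3
    · exact Or.inr (Or.inl h3)
  · rcases reach_addArc h1 with h3 | ⟨h3, h3'⟩ <;> rcases reach_addArc h2 with h4 | ⟨h4, h4'⟩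
    · exact Or.inr (Or.inr ⟨h3, h4⟩)
    · exact Or.inl (h3.trans h4')
    · exact Or.inl (h3.trans h4)
    · exact Or.inr (Or.inl ⟨h3, h4'⟩)

/-- If adding both arcs between `u` and `v` gives a totally cyclic digraph and neither of `u`, `v`
reaches the other in `r`, then `r` is totally cyclic: a closed walk through an arc of `r` that
uses one of the two new arcs would connect `u` and `v` inside `r`. -/
theorem rev_of_rev_both {r : V → V → Prop} {u v : V} (huv : ¬ ReflTransGen r u v)
    (hvu : ¬ ReflTransGen r v u) (h : Rev (addArc (addArc r u v) v u)) : Rev r := by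
  intro x y hxy
  rcases reach_addArc_both (h x y (Or.inl (Or.inl hxy))) with h1 | ⟨h1, h2⟩ | ⟨h1, h2⟩
  · exact h1
  · exact absurd ((h2.tail hxy).trans h1) hvu
  · exact absurd ((h2.tail hxy).trans h1) huv

theorem Rev.both {r : V → V → Prop} {u v : V} (h : Rev r) :
    Rev (addArc (addArc r u v) v u) := by
  rintro x y ((hxy | ⟨rfl, rfl⟩) | ⟨rfl, rfl⟩)
  · exact reach_mono (fun _ _ h => Or.inl (Or.inl h)) (h x y hxy)
  · exact .single (Or.inr ⟨rfl, rfl⟩)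
  · exact .single (Or.inl (Or.inr ⟨rfl, rfl⟩))

open Classical in
/-- Deletion–contraction for totally cyclic orientations, with the rest of the graph oriented as
`r`: orienting an edge `uv` in the two possible ways, versus making it bidirected (contracting it)
and deleting it. The sign depends on whether the edge is a bridge. -/
theorem rev_deletion_contraction (r : V → V → Prop) (u v : V) :
    (if Rev (addArc r v u) then (1 : ℤ) else 0) + (if Rev (addArc r u v) then 1 else 0) =
      (if Rev (addArc (addArc r u v) v u) then 1 else 0) +
        (if EqvGen r u v then 1 else -1) * (if Rev r then 1 else 0) := by
  rw [rev_addArc_iff (u := u), rev_addArc_iff (u := v), addArc_comm r v u u v]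
  have e1 : ReflTransGen r u v → EqvGen r u v := eqvGen_of_reach
  have e2 : ReflTransGen r v u → EqvGen r u v := fun h => (eqvGen_of_reach h).symm
  by_cases hr : Rev r
  · have hb : Rev (addArc (addArc r u v) v u) := hr.both
    by_cases hc : EqvGen r u v
    · have h1 : ReflTransGen r u v := hr.reach_of_eqvGen hc
      have h2 : ReflTransGen r v u := hr.reach_symm h1
      simp [hr, hb, hc, h1, h2]
    · have h1 : ¬ ReflTransGen r u v := fun h => hc (e1 h)
      have h2 : ¬ ReflTransGen r v u := fun h => hc (e2 h)
      simp [hr, hb, hc, h1, h2]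
  · by_cases hb : Rev (addArc (addArc r u v) v u)
    · by_cases h1 : ReflTransGen r u v
      · -- If both directions were reachable, the new arcs would add nothing.
        have h2 : ¬ ReflTransGen r v u := by
          intro h2
          refine hr fun x y hxy => ?_
          rcases reach_addArc_both (hb x y (Or.inl (Or.inl hxy))) with m | ⟨m1, m2⟩ | ⟨m1, m2⟩
          · exact m
          · exact (m1.trans h1).trans m2
          · exact (m1.trans h2).trans m2
        simp [hr, hb, h1, h2]
      · have h2 : ReflTransGen r v u := by
          by_contra h2
          exact hr (rev_of_rev_both h1 h2 hb)
        simp [hr, hb, h1, h2]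
    · simp [hr, hb]

open Classical in
/-- Joining two elements lowers the number of classes by one, unless they were already
equivalent. -/
theorem card_quot_addArc [Finite V] (r : V → V → Prop) (u v : V) :
    Nat.card (Quot (addArc r u v)) + (if EqvGen r u v then 0 else 1) = Nat.card (Quot r) := by
  -- `φ` sends the merged class to the class of `v`; its range misses only the class of `u`.
  let φ : Quot (addArc r u v) → Quot r :=
    Quot.lift (fun x => if Quot.mk r x = Quot.mk r u then Quot.mk r v else Quot.mk r x) (by
      rintro x y (h | ⟨rfl, rfl⟩)
      · rw [Quot.sound h]
      · simp)
  let ψ : Quot r → Quot (addArc r u v) :=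
    Quot.lift (fun x => Quot.mk _ x) (fun x y h => Quot.sound (Or.inl h))
  have hψφ : ∀ q, ψ (φ q) = q := by
    rintro ⟨x⟩
    change ψ (if Quot.mk r x = Quot.mk r u then Quot.mk r v else Quot.mk r x) = Quot.mk _ x
    split_ifs with h
    · have h1 : ψ (Quot.mk r x) = ψ (Quot.mk r u) := by rw [h]
      change Quot.mk _ x = Quot.mk _ u at h1
      change Quot.mk _ v = Quot.mk _ x
      rw [h1]
      exact (Quot.sound (show addArc r u v u v from Or.inr ⟨rfl, rfl⟩)).symm
    · rfl
  have hinj : Function.Injective φ := Function.LeftInverse.injective hψφ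
  by_cases huv : EqvGen r u v
  · have e : Quot.mk r u = Quot.mk r v := Quot.eqvGen_sound huv
    rw [if_pos huv, add_zero]
    refine Nat.card_congr (Equiv.ofBijective φ ⟨hinj, ?_⟩)
    rintro ⟨x⟩
    refine ⟨Quot.mk _ x, ?_⟩
    change (if Quot.mk r x = Quot.mk r u then Quot.mk r v else Quot.mk r x) = Quot.mk r x
    split_ifs with h
    · rw [h, e]
    · rfl
  · have e : Quot.mk r u ≠ Quot.mk r v := fun h => huv (Quot.eqvGen_exact h)
    rw [if_neg huv]
    have hrange : Set.range φ = {Quot.mk r u}ᶜ := by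
      ext q
      constructor
      · rintro ⟨⟨x⟩, rfl⟩
        change (if Quot.mk r x = Quot.mk r u then Quot.mk r v else Quot.mk r x) ≠ Quot.mk r u
        split_ifs with h
        · exact e.symm
        · exact h
      · intro hq
        induction q using Quot.ind with
        | mk x =>
          refine ⟨Quot.mk _ x, ?_⟩
          exact if_neg hq
    have h1 : Nat.card (Quot (addArc r u v)) = (Set.range φ).ncard := by
      rw [← Nat.card_coe_set_eq]
      exact Nat.card_congr (Equiv.ofInjective φ hinj)
    rw [h1, hrange]
    have := Set.ncard_add_ncard_compl ({Quot.mk r u} : Set (Quot r))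
    rw [Set.ncard_singleton] at this
    omega

end Relations

section Graphs

variable {V E : Type}

/-! ### Components and the count of totally cyclic orientations -/

/-- `u` and `v` are the tail and the head of an edge of `C`. -/
def joined (H : Multigraph V E) (C : Finset E) : V → V → Prop :=
  fun u v => ∃ e ∈ C, H.tail e = u ∧ H.head e = v

/-- The number of connected components of the spanning subgraph with edge set `C`. -/
noncomputable def numComp (H : Multigraph V E) (C : Finset E) : ℕ :=
  Nat.card (Quot (joined H C))

/-- The digraph in which the edges of `P` may be traversed forwards and those of `Q` backwards. -/
def arcs (H : Multigraph V E) (P Q : Finset E) : V → V → Prop :=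
  fun x y => (∃ e ∈ P, H.tail e = x ∧ H.head e = y) ∨ (∃ e ∈ Q, H.head e = x ∧ H.tail e = y)

open Classical in
theorem joined_insert (H : Multigraph V E) (C : Finset E) (e : E) :
    joined H (insert e C) = addArc (joined H C) (H.tail e) (H.head e) := by
  funext x y
  simp only [joined, addArc, Finset.mem_insert, eq_iff_iff]
  constructor
  · rintro ⟨e', rfl | h, rfl, rfl⟩
    · exact Or.inr ⟨rfl, rfl⟩
    · exact Or.inl ⟨e', h, rfl, rfl⟩
  · rintro (⟨e', h, rfl, rfl⟩ | ⟨rfl, rfl⟩)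
    · exact ⟨e', Or.inr h, rfl, rfl⟩
    · exact ⟨e, Or.inl rfl, rfl, rfl⟩

open Classical in
theorem arcs_insert_left (H : Multigraph V E) (P Q : Finset E) (e : E) :
    arcs H (insert e P) Q = addArc (arcs H P Q) (H.tail e) (H.head e) := by
  funext x y
  simp only [arcs, addArc, Finset.exists_mem_insert, eq_iff_iff, @eq_comm _ x, @eq_comm _ y]
  generalize (∃ e ∈ P, H.tail e = x ∧ H.head e = y) = a
  generalize (∃ e ∈ Q, H.head e = x ∧ H.tail e = y) = b
  tauto

open Classical in
theorem arcs_insert_right (H : Multigraph V E) (P Q : Finset E) (e : E) :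
    arcs H P (insert e Q) = addArc (arcs H P Q) (H.head e) (H.tail e) := by
  funext x y
  simp only [arcs, addArc, Finset.exists_mem_insert, eq_iff_iff, @eq_comm _ x, @eq_comm _ y]
  generalize (∃ e ∈ P, H.tail e = x ∧ H.head e = y) = a
  generalize (∃ e ∈ Q, H.head e = x ∧ H.tail e = y) = b
  tauto

open Classical in
theorem numComp_insert [Finite V] (H : Multigraph V E) (C : Finset E) (e : E) :
    numComp H (insert e C) +
      (if EqvGen (joined H C) (H.tail e) (H.head e) then 0 else 1) = numComp H C := by
  rw [numComp, joined_insert]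
  exact card_quot_addArc _ _ _

theorem eqvGen_iff_of_symm_iff {r s : V → V → Prop}
    (h1 : ∀ x y, r x y → s x y ∨ s y x) (h2 : ∀ x y, s x y → r x y ∨ r y x) (a b : V) :
    EqvGen r a b ↔ EqvGen s a b := by
  have key : ∀ {r s : V → V → Prop}, (∀ x y, r x y → s x y ∨ s y x) → ∀ {a b},
      EqvGen r a b → EqvGen s a b := by
    intro r s h a b hab
    induction hab with
    | rel x y hxy =>
      rcases h x y hxy with h | h
      · exact .rel _ _ h
      · exact .symm _ _ (.rel _ _ h)
    | refl _ => exact .refl _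
    | symm _ _ _ ih => exact .symm _ _ ih
    | trans _ _ _ _ _ ih1 ih2 => exact .trans _ _ _ ih1 ih2
  exact ⟨key h1, key h2⟩

open Classical in
theorem eqvGen_arcs (H : Multigraph V E) (P Q : Finset E) (a b : V) :
    EqvGen (arcs H P Q) a b ↔ EqvGen (joined H (P ∪ Q)) a b := by
  apply eqvGen_iff_of_symm_iff
  · rintro x y (⟨e, he, h⟩ | ⟨e, he, h⟩)
    · exact Or.inl ⟨e, Finset.mem_union_left _ he, h⟩
    · exact Or.inr ⟨e, Finset.mem_union_right _ he, h.symm⟩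
  · rintro x y ⟨e, he, h⟩
    rcases Finset.mem_union.1 he with he | he
    · exact Or.inl (Or.inl ⟨e, he, h⟩)
    · exact Or.inr (Or.inr ⟨e, he, h.symm⟩)

open Classical in
/-- The number of totally cyclic orientations of the graph with edge set `B ∪ U` after contraction
of `B`, as a signed sum over the edge sets between `B` and `B ∪ U`. An orientation of `U` is encoded by the set `P ⊆ U` of forward edges, and
contracting `B` amounts to making its edges bidirected. -/
theorem card_rev_orientations [Finite V] (H : Multigraph V E) (U B : Finset E) :
    (∑ P ∈ U.powerset, if Rev (arcs H (B ∪ P) (B ∪ (U \ P))) then (1 : ℤ) else 0) =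
      ∑ C ∈ U.powerset, (-1) ^ (numComp H (B ∪ U) + numComp H (B ∪ C)) := by
  induction U using Finset.induction_on generalizing B with
  | empty =>
    have hrev : Rev (arcs H B B) := by
      rintro x y (h | h)
      · obtain ⟨e, he, h1, h2⟩ := h
        exact .single (Or.inr ⟨e, he, h2, h1⟩)
      · obtain ⟨e, he, h1, h2⟩ := h
        exact .single (Or.inl ⟨e, he, h2, h1⟩)
    rw [Finset.powerset_empty, Finset.sum_singleton, Finset.sum_singleton]
    simp [hrev, ← two_mul]
  | insert e U he ih =>
    rw [Finset.sum_powerset_insert he, Finset.sum_powerset_insert he, ← Finset.sum_add_distrib]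
    set σ : ℤ := if EqvGen (joined H (B ∪ U)) (H.tail e) (H.head e) then 1 else -1 with hσ
    have hstep : ∀ P ∈ U.powerset,
        ((if Rev (arcs H (B ∪ P) (B ∪ (insert e U \ P))) then (1 : ℤ) else 0) +
          if Rev (arcs H (B ∪ insert e P) (B ∪ (insert e U \ insert e P))) then 1 else 0) =
        (if Rev (arcs H (insert e B ∪ P) (insert e B ∪ (U \ P))) then 1 else 0) +
          σ * (if Rev (arcs H (B ∪ P) (B ∪ (U \ P))) then 1 else 0) := by
      intro P hP
      rw [Finset.mem_powerset] at hP
      have heP : e ∉ P := fun h => he (hP h)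
      have s1 : insert e U \ P = insert e (U \ P) := Finset.insert_sdiff_of_notMem _ heP
      have s2 : insert e U \ insert e P = U \ P := by
        ext x
        simp only [Finset.mem_sdiff, Finset.mem_insert]
        constructor
        · tauto
        · rintro ⟨h1, h2⟩
          refine ⟨Or.inr h1, ?_⟩
          rintro (rfl | h)
          · exact he h1
          · exact h2 h
      have s3 : (B ∪ P) ∪ (B ∪ (U \ P)) = B ∪ U := by
        ext x
        have := @hP x
        simp only [Finset.mem_union, Finset.mem_sdiff]
        tauto
      rw [s1, s2, Finset.union_insert, Finset.union_insert, Finset.insert_union,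
        Finset.insert_union, arcs_insert_right, arcs_insert_left, arcs_insert_right,
        arcs_insert_left, rev_deletion_contraction, eqvGen_arcs, s3]
    rw [Finset.sum_congr rfl hstep, Finset.sum_add_distrib, ← Finset.mul_sum, ih, ih,
      add_comm (∑ C ∈ U.powerset, _) (∑ C ∈ U.powerset, (-1 : ℤ) ^ (_ + numComp H (B ∪ insert e C)))]
    congr 1
    · refine Finset.sum_congr rfl fun C _ => ?_
      simp only [Finset.insert_union, Finset.union_insert]
    · rw [Finset.mul_sum]
      refine Finset.sum_congr rfl fun C _ => ?_
      have h := numComp_insert H (B ∪ U) e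
      rw [Finset.union_insert, ← h, hσ]
      split_ifs
      · simp
      · ring

/-! ### Counting flows supported on an edge set -/

/-- The nullity (dimension of the cycle space) of the spanning subgraph with edge set `C`. The
truncated subtraction is harmless by `card_le_card_add_numComp`. -/
noncomputable def nullity [Fintype V] (H : Multigraph V E) (C : Finset E) : ℕ :=
  C.card + numComp H C - Fintype.card V

theorem numComp_empty [Fintype V] (H : Multigraph V E) :
    numComp H ∅ = Fintype.card V := by
  rw [← Nat.card_eq_fintype_card]
  refine (Nat.card_congr (Equiv.ofBijective (Quot.mk (joined H ∅)) ⟨?_, Quot.mk_surjective⟩)).symm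
  intro x y hxy
  have := Quot.eqvGen_exact hxy
  induction this with
  | rel _ _ h => simp [joined] at h
  | refl _ => rfl
  | symm _ _ _ ih => exact (ih hxy.symm).symm
  | trans a b c hab hbc ih1 ih2 =>
    exact (ih1 (Quot.eqvGen_sound hab)).trans (ih2 (Quot.eqvGen_sound hbc))

theorem card_le_card_add_numComp [Fintype V] (H : Multigraph V E) (C : Finset E) :
    Fintype.card V ≤ C.card + numComp H C := by
  classical
  induction C using Finset.induction_on with
  | empty => simp [numComp_empty]
  | insert e C he ih =>
    have := numComp_insert H C e
    rw [Finset.card_insert_of_notMem he]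
    split_ifs at this <;> omega

open Classical in
theorem nullity_insert [Fintype V] (H : Multigraph V E) {C : Finset E} {e : E} (he : e ∉ C) :
    nullity H (insert e C) = nullity H C +
      (if EqvGen (joined H C) (H.tail e) (H.head e) then 1 else 0) := by
  have h1 := numComp_insert H C e
  have h2 := card_le_card_add_numComp H C
  have h3 := card_le_card_add_numComp H (insert e C)
  rw [Finset.card_insert_of_notMem he] at h3
  rw [nullity, nullity, Finset.card_insert_of_notMem he]
  split_ifs at h1 ⊢ <;> omega

variable [Fintype E] [DecidableEq V] {R : Type} [CommRing R]

/-- The net inflow of `f` at `v`. -/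
def div (H : Multigraph V E) (f : E → R) (v : V) : R :=
  ∑ e, f e * ((if H.head e = v then 1 else 0) - (if H.tail e = v then 1 else 0))

theorem isFlow_iff (H : Multigraph V E) (f : E → R) : H.IsFlow f ↔ ∀ v, div H f v = 0 := by
  refine forall_congr' fun v => ?_
  simp [div, mul_sub, Finset.sum_sub_distrib, sub_eq_zero]

theorem div_add (H : Multigraph V E) (f g : E → R) (v : V) :
    div H (f + g) v = div H f v + div H g v := by
  simp [div, add_mul, Finset.sum_add_distrib]

theorem div_smul (H : Multigraph V E) (a : R) (f : E → R) (v : V) :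
    div H (a • f) v = a * div H f v := by
  simp [div, Finset.mul_sum, mul_assoc]

open Classical in
theorem div_single (H : Multigraph V E) (e : E) (a : R) (v : V) :
    div H (Pi.single e a) v =
      a * ((if H.head e = v then 1 else 0) - (if H.tail e = v then 1 else 0)) := by
  rw [div, Finset.sum_eq_single e]
  · simp
  · intro b _ hb
    simp [hb]
  · simp

theorem sum_mul_div [Fintype V] (H : Multigraph V E) (f : E → R) (φ : V → R) :
    ∑ v, φ v * div H f v = ∑ e, f e * (φ (H.head e) - φ (H.tail e)) := by
  simp only [div, Finset.mul_sum]
  rw [Finset.sum_comm]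
  refine Finset.sum_congr rfl fun e _ => ?_
  have : ∀ v, φ v * (f e * ((if H.head e = v then 1 else 0) - (if H.tail e = v then 1 else 0))) =
      (if H.head e = v then f e * φ v else 0) - (if H.tail e = v then f e * φ v else 0) := by
    intro v
    split_ifs <;> ring
  simp only [this, Finset.sum_sub_distrib, Finset.sum_ite_eq, Finset.mem_univ, if_true]
  ring

/-- A unit flow along an undirected walk inside `C`. -/
theorem exists_path_flow (H : Multigraph V E) (C : Finset E) {x y : V}
    (h : EqvGen (joined H C) x y) : ∃ g : E → R, (∀ e ∉ C, g e = 0) ∧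
      ∀ v, div H g v = (if x = v then 1 else 0) - (if y = v then 1 else 0) := by
  classical
  induction h with
  | rel x y h =>
    obtain ⟨e, he, rfl, rfl⟩ := h
    refine ⟨Pi.single e (-1), ?_, ?_⟩
    · intro e' he'
      exact Pi.single_eq_of_ne (by rintro rfl; exact he' he) _
    · intro v
      rw [div_single]
      ring
  | refl x => exact ⟨0, fun _ _ => rfl, fun v => by simp [div]⟩
  | symm x y _ ih =>
    obtain ⟨g, h1, h2⟩ := ih
    refine ⟨(-1 : R) • g, fun e he => by simp [h1 e he], fun v => ?_⟩
    rw [div_smul, h2]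
    ring
  | trans x y z _ _ ih1 ih2 =>
    obtain ⟨g, h1, h2⟩ := ih1
    obtain ⟨g', h1', h2'⟩ := ih2
    refine ⟨g + g', fun e he => by simp [h1 e he, h1' e he], fun v => ?_⟩
    rw [div_add, h2, h2']
    ring

/-- A flow vanishes on every bridge of its supporting graph: sum the conservation law over one
side of the bridge. -/
theorem flow_bridge_eq_zero [Fintype V] (H : Multigraph V E) {C : Finset E} {e : E}
    (hbr : ¬ EqvGen (joined H C) (H.tail e) (H.head e)) {f : E → R} (hf : H.IsFlow f)
    (hsupp : ∀ e' ∉ C, e' ≠ e → f e' = 0) : f e = 0 := by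
  classical
  rw [isFlow_iff] at hf
  have h := sum_mul_div H f (fun v => if EqvGen (joined H C) v (H.head e) then 1 else 0)
  simp only [hf, mul_zero, Finset.sum_const_zero] at h
  rw [Finset.sum_eq_single e] at h
  · simpa [hbr, EqvGen.refl] using h.symm
  · intro b _ hb
    by_cases hbC : b ∈ C
    · have hrel : EqvGen (joined H C) (H.tail b) (H.head b) := .rel _ _ ⟨b, hbC, rfl, rfl⟩
      have : EqvGen (joined H C) (H.head b) (H.head e) ↔
          EqvGen (joined H C) (H.tail b) (H.head e) :=
        ⟨fun h => hrel.trans _ _ _ h, fun h => (hrel.symm).trans _ _ _ h⟩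
      simp [this]
    · simp [hsupp b hbC hb]
  · simp

theorem card_flows_supported [Fintype V] (H : Multigraph V E) (k : ℕ) (C : Finset E) :
    Nat.card {f : E → ZMod k // H.IsFlow f ∧ ∀ e ∉ C, f e = 0} = k ^ nullity H C := by
  classical
  induction C using Finset.induction_on with
  | empty =>
    have : Unique {f : E → ZMod k // H.IsFlow f ∧ ∀ e ∉ (∅ : Finset E), f e = 0} :=
      { default := ⟨0, by simp [isFlow_iff, div], fun _ _ => rfl⟩
        uniq := fun f => Subtype.ext (funext fun e => f.2.2 e (by simp)) }
    rw [Nat.card_unique]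
    simp [nullity, numComp_empty]
  | insert e C he ih =>
    rw [nullity_insert H he]
    split_ifs with hc
    · obtain ⟨g0, hg1, hg2⟩ := exists_path_flow (R := ZMod k) H C hc
      -- The fundamental cycle flow through `e`.
      set g : E → ZMod k := g0 + Pi.single e 1 with hg
      have hge : g e = 1 := by simp [hg, hg1 e he]
      have hgd : ∀ v, div H g v = 0 := by
        intro v
        rw [hg, div_add, hg2, div_single]
        ring
      have hgs : ∀ e' ∉ insert e C, g e' = 0 := by
        intro e' he'
        rw [Finset.mem_insert, not_or] at he'
        simp [hg, hg1 e' he'.2, he'.1]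
      have hcard : Nat.card ({f : E → ZMod k // H.IsFlow f ∧ ∀ e ∉ C, f e = 0} × ZMod k) =
          k ^ nullity H C * k := by
        rw [Nat.card_prod, ih, Nat.card_zmod]
      rw [pow_succ, ← hcard]
      refine Nat.card_congr
        { toFun := fun f => (⟨f.1 + (-(f.1 e)) • g, ?_, ?_⟩, f.1 e)
          invFun := fun p => ⟨p.1.1 + p.2 • g, ?_, ?_⟩
          left_inv := ?_
          right_inv := ?_ }
      · rw [isFlow_iff]
        intro v
        rw [div_add, div_smul, hgd, (isFlow_iff H _).1 f.2.1]
        simp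
      · intro e' he'
        by_cases h : e' = e
        · subst h
          simp [hge]
        · have : e' ∉ insert e C := by simp [h, he']
          simp [f.2.2 e' this, hgs e' this]
      · rw [isFlow_iff]
        intro v
        rw [div_add, div_smul, hgd, (isFlow_iff H _).1 p.1.2.1]
        simp
      · intro e' he'
        have : e' ∉ C := fun h => he' (Finset.mem_insert_of_mem h)
        simp [hgs e' he', p.1.2.2 e' this]
      · intro f
        apply Subtype.ext
        simp
      · rintro ⟨f, a⟩
        have hfe : f.1 e = 0 := f.2.2 e he
        refine Prod.ext (Subtype.ext ?_) ?_
        · simp [hfe, hge]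
        · simp [hfe, hge]
    · rw [add_zero, ← ih]
      refine Nat.card_congr (Equiv.subtypeEquivRight fun f => ?_)
      constructor
      · rintro ⟨h1, h2⟩
        refine ⟨h1, fun e' he' => ?_⟩
        have hs : ∀ e' ∉ C, e' ≠ e → f e' = 0 := fun e' h h' => h2 e' (by simp [h, h'])
        by_cases h : e' = e
        · rw [h]
          exact flow_bridge_eq_zero H hc h1 hs
        · exact hs e' he' h
      · rintro ⟨h1, h2⟩
        exact ⟨h1, fun e' he' => h2 e' fun h => he' (Finset.mem_insert_of_mem h)⟩

end Graphs

/-! ### Directed cycles, contraction and reachability -/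

section Cycles

variable {V E : Type}

/-- The arc relation of a directed multigraph. -/
def step (G : Multigraph V E) : V → V → Prop := fun x y => ∃ e, G.tail e = x ∧ G.head e = y

theorem reach_of_mem_walk (G : Multigraph V E) {v : V} {e : E} (es : List E) :
    ∀ u, G.IsWalkFrom u v es → ReflTransGen (step G) u v ∧
      (e ∈ es → ReflTransGen (step G) u (G.tail e) ∧ ReflTransGen (step G) (G.head e) v) := by
  induction es with
  | nil =>
    rintro u rfl
    exact ⟨.refl, by simp⟩
  | cons a es ih =>
    rintro u ⟨rfl, h⟩
    obtain ⟨h1, h2⟩ := ih _ h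
    have ha : step G (G.tail a) (G.head a) := ⟨a, rfl, rfl⟩
    refine ⟨h1.head ha, fun he => ?_⟩
    rcases List.mem_cons.1 he with rfl | he
    · exact ⟨.refl, h1⟩
    · exact ⟨(h2 he).1.head ha, (h2 he).2⟩

/-- A walk that visits `x` can be cut down to a path starting at the last visit of `x`. -/
theorem exists_truncated_walk (G : Multigraph V E) {x y : V} (es : List E) :
    ∀ z, G.IsWalkFrom z y es → (es.map G.head).Nodup → x ∈ es.map G.head →
      ∃ es', G.IsWalkFrom x y es' ∧ (es'.map G.head).Nodup ∧ x ∉ es'.map G.head := by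
  induction es with
  | nil => simp
  | cons a es ih =>
    rintro z ⟨_, h⟩ hn hx
    rw [List.map_cons, List.nodup_cons] at hn
    rw [List.map_cons, List.mem_cons] at hx
    by_cases hxa : x = G.head a
    · subst hxa
      exact ⟨es, h, hn.2, hn.1⟩
    · exact ih _ h hn.2 (hx.resolve_left hxa)

theorem exists_path_of_reach (G : Multigraph V E) {x y : V} (h : ReflTransGen (step G) x y) :
    ∃ es, G.IsWalkFrom x y es ∧ (es.map G.head).Nodup ∧ x ∉ es.map G.head := by
  induction h using ReflTransGen.head_induction_on with
  | refl => exact ⟨[], rfl, by simp, by simp⟩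
  | head hxz _ ih =>
    obtain ⟨e, rfl, rfl⟩ := hxz
    obtain ⟨es, h1, h2, h3⟩ := ih
    by_cases hx : G.tail e ∈ es.map G.head
    · exact exists_truncated_walk G es _ h1 h2 hx
    · by_cases hl : G.tail e = G.head e
      · exact ⟨es, hl ▸ h1, h2, hx⟩
      · refine ⟨e :: es, ⟨rfl, h1⟩, ?_, ?_⟩
        · rw [List.map_cons, List.nodup_cons]
          exact ⟨h3, h2⟩
        · rw [List.map_cons, List.mem_cons, not_or]
          exact ⟨hl, hx⟩

theorem onCycle_iff (G : Multigraph V E) (e : E) :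
    G.OnCycle e ↔ ReflTransGen (step G) (G.head e) (G.tail e) := by
  constructor
  · rintro ⟨v, es, ⟨_, _, _, hw⟩, he⟩
    have h := (reach_of_mem_walk G (e := e) es v hw).2 he
    exact h.2.trans h.1
  · intro h
    obtain ⟨es, h1, h2, h3⟩ := exists_path_of_reach G h
    have hn : ((e :: es).map G.head).Nodup := by
      rw [List.map_cons, List.nodup_cons]
      exact ⟨h3, h2⟩
    exact ⟨G.tail e, e :: es, ⟨by simp, hn.of_map _, hn, rfl, h1⟩, by simp⟩

theorem isTotallyCyclic_iff (G : Multigraph V E) : G.IsTotallyCyclic ↔ Rev (step G) := by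
  constructor
  · rintro h x y ⟨e, rfl, rfl⟩
    exact (onCycle_iff G e).1 (h e)
  · intro h e
    exact (onCycle_iff G e).2 (h _ _ ⟨e, rfl, rfl⟩)

/-- Total cyclicity of the digraph induced by `a` on the quotient by `t` is total cyclicity of `a`
together with all pairs of `t` made bidirected. -/
theorem rev_quot_iff (t a : V → V → Prop) :
    Rev (fun q q' : Quot t => ∃ x y, Quot.mk t x = q ∧ Quot.mk t y = q' ∧ a x y) ↔
      Rev (fun x y => (t x y ∨ t y x) ∨ a x y) := by
  set qs := fun q q' : Quot t => ∃ x y, Quot.mk t x = q ∧ Quot.mk t y = q' ∧ a x y with hqs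
  set full := fun x y => (t x y ∨ t y x) ∨ a x y with hfull
  have reach1 : ∀ x y, EqvGen t x y → ReflTransGen full x y ∧ ReflTransGen full y x := by
    intro x y h
    induction h with
    | rel x y h => exact ⟨.single (Or.inl (Or.inl h)), .single (Or.inl (Or.inr h))⟩
    | refl _ => exact ⟨.refl, .refl⟩
    | symm _ _ _ ih => exact ih.symm
    | trans _ _ _ _ _ ih1 ih2 => exact ⟨ih1.1.trans ih2.1, ih2.2.trans ih1.2⟩
  have reach2 : ∀ x y, ReflTransGen qs (Quot.mk t x) (Quot.mk t y) → ReflTransGen full x y := by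
    intro x y h
    generalize hq : Quot.mk t y = q at h
    induction h generalizing y with
    | refl => exact (reach1 _ _ (Quot.eqvGen_exact hq.symm)).1
    | tail _ hbc ih =>
      obtain ⟨c, d, rfl, rfl, hcd⟩ := hbc
      exact ((ih c rfl).tail (Or.inr hcd)).trans (reach1 _ _ (Quot.eqvGen_exact hq.symm)).1
  have reach3 : ∀ x y, ReflTransGen full x y → ReflTransGen qs (Quot.mk t x) (Quot.mk t y) := by
    intro x y h
    induction h with
    | refl => exact .refl
    | tail _ hbc ih =>
      rcases hbc with (h | h) | h
      · rwa [← Quot.sound h]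
      · rwa [Quot.sound h]
      · exact ih.tail ⟨_, _, rfl, rfl, h⟩
  constructor
  · rintro h x y ((hxy | hxy) | hxy)
    · exact .single (Or.inl (Or.inr hxy))
    · exact .single (Or.inl (Or.inl hxy))
    · exact reach2 _ _ (h _ _ ⟨x, y, rfl, rfl, hxy⟩)
  · rintro h _ _ ⟨x, y, rfl, rfl, hxy⟩
    exact reach3 _ _ (h x y (Or.inr hxy))

variable [Fintype E]

open Classical in
/-- The set of forward edges of an orientation of the edges outside `A`. -/
noncomputable def forward {A : Set E} (ε : {e : E // e ∉ A} → ℤ) : Finset E :=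
  Finset.univ.filter fun e => ∃ h : e ∉ A, ε ⟨e, h⟩ = 1

open Classical in
theorem contract_isTotallyCyclic_iff (H : Multigraph V E) (A : Set E) (B : Finset E)
    (hB : ∀ e, e ∈ B ↔ e ∈ A) (ε : {e : E // e ∉ A} → ℤ) :
    ((H.contract A).reorient ε).IsTotallyCyclic ↔
      Rev (arcs H (B ∪ forward ε) (B ∪ (Bᶜ \ forward ε))) := by
  have hstep : step ((H.contract A).reorient ε) = fun q q' => ∃ x y,
      Quot.mk (fun u v => ∃ e ∈ A, H.tail e = u ∧ H.head e = v) x = q ∧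
      Quot.mk _ y = q' ∧ arcs H (forward ε) (Bᶜ \ forward ε) x y := by
    funext q q'
    rw [eq_iff_iff]
    constructor
    · rintro ⟨⟨e, he⟩, rfl, rfl⟩
      by_cases h1 : ε ⟨e, he⟩ = 1
      · refine ⟨H.tail e, H.head e, ?_, ?_, Or.inl ⟨e, ?_, rfl, rfl⟩⟩
        · simp [reorient, contract, h1]
        · simp [reorient, contract, h1]
        · simp [forward, he, h1]
      · refine ⟨H.head e, H.tail e, ?_, ?_, Or.inr ⟨e, ?_, rfl, rfl⟩⟩
        · simp [reorient, contract, h1]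
        · simp [reorient, contract, h1]
        · simp [forward, he, h1, hB]
    · rintro ⟨x, y, rfl, rfl, ⟨e, he, rfl, rfl⟩ | ⟨e, he, rfl, rfl⟩⟩
      · simp only [forward, Finset.mem_filter, Finset.mem_univ, true_and] at he
        obtain ⟨h, h1⟩ := he
        exact ⟨⟨e, h⟩, by simp [reorient, contract, h1], by simp [reorient, contract, h1]⟩
      · simp only [forward, Finset.mem_sdiff, Finset.mem_compl, hB, Finset.mem_filter,
          Finset.mem_univ, true_and, not_exists] at he
        obtain ⟨h, h1⟩ := he
        exact ⟨⟨e, h⟩, by simp [reorient, contract, h1 h], by simp [reorient, contract, h1 h]⟩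
  have hfull : arcs H (B ∪ forward ε) (B ∪ (Bᶜ \ forward ε)) = fun x y =>
      ((∃ e ∈ A, H.tail e = x ∧ H.head e = y) ∨ (∃ e ∈ A, H.tail e = y ∧ H.head e = x)) ∨
        arcs H (forward ε) (Bᶜ \ forward ε) x y := by
    funext x y
    simp only [arcs, eq_iff_iff, Finset.mem_union, or_and_right, exists_or, hB,
      and_comm (a := H.tail _ = y)]
    exact or_or_or_comm
  rw [isTotallyCyclic_iff, hstep, hfull, rev_quot_iff]

open Classical in
/-- Totally cyclic orientations of `H // A`, encoded by their sets of forward edges. -/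
noncomputable def orientationEquiv (H : Multigraph V E) (A : Set E) (B : Finset E)
    (hB : ∀ e, e ∈ B ↔ e ∈ A) :
    {ε : {e : E // e ∉ A} → ℤ //
      IsOrientation ε ∧ ((H.contract A).reorient ε).IsTotallyCyclic} ≃
    {P // P ∈ Bᶜ.powerset.filter fun P => Rev (arcs H (B ∪ P) (B ∪ (Bᶜ \ P)))} :=
  have hinv : ∀ P ⊆ Bᶜ, forward (A := A) (fun e => if e.1 ∈ P then 1 else -1) = P := by
    intro P hP
    ext e
    simp only [forward, Finset.mem_filter, Finset.mem_univ, true_and]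
    constructor
    · rintro ⟨_, h⟩
      by_contra hn
      rw [if_neg hn] at h
      norm_num at h
    · intro h
      have := hP h
      rw [Finset.mem_compl, hB] at this
      exact ⟨this, if_pos h⟩
  { toFun := fun ε => ⟨forward ε.1, by
      rw [Finset.mem_filter, Finset.mem_powerset]
      refine ⟨fun e he => ?_, (contract_isTotallyCyclic_iff H A B hB ε.1).1 ε.2.2⟩
      simp only [forward, Finset.mem_filter, Finset.mem_univ, true_and] at he
      rw [Finset.mem_compl, hB]
      exact he.1⟩
    invFun := fun P => ⟨fun e => if e.1 ∈ P.1 then 1 else -1, by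
      have hP := Finset.mem_filter.1 P.2
      refine ⟨fun e => by by_cases h : e.1 ∈ P.1 <;> simp [h], ?_⟩
      rw [contract_isTotallyCyclic_iff H A B hB, hinv _ (Finset.mem_powerset.1 hP.1)]
      exact hP.2⟩
    left_inv := by
      intro ε
      apply Subtype.ext
      funext e
      rcases ε.2.1 e with h | h
      · simp [forward, h, e.2]
      · simp [forward, h]
    right_inv := by
      intro P
      exact Subtype.ext (hinv _ (Finset.mem_powerset.1 (Finset.mem_filter.1 P.2).1)) }

end Cycles

/-! ### Inclusion–exclusion and reciprocity -/

section Final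

variable {V E : Type} [Fintype E]

open Classical in
theorem sum_superset (S : Finset E) (w : Finset E → ℤ) :
    ∑ D ∈ Finset.univ.filter (fun D => S ⊆ D), w D = ∑ C ∈ Sᶜ.powerset, w (S ∪ C) := by
  refine Finset.sum_bij' (fun D _ => D \ S) (fun C _ => S ∪ C) ?_ ?_ ?_ ?_ ?_
  · intro D _
    rw [Finset.mem_powerset]
    intro e he
    simpa using (Finset.mem_sdiff.1 he).2
  · intro C _
    simp
  · intro D hD
    exact Finset.union_sdiff_of_subset (Finset.mem_filter.1 hD).2
  · intro C hC
    rw [Finset.mem_powerset] at hC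
    ext e
    have := @hC e
    simp only [Finset.mem_compl] at this
    simp only [Finset.mem_sdiff, Finset.mem_union]
    tauto
  · intro D hD
    rw [Finset.union_sdiff_of_subset (Finset.mem_filter.1 hD).2]

open Classical in
theorem sum_superset_sign (S : Finset E) :
    ∑ D ∈ Finset.univ.filter (fun D => S ⊆ D), (-1 : ℤ) ^ (Fintype.card E + D.card) =
      if S = Finset.univ then 1 else 0 := by
  rw [sum_superset]
  have h : ∀ C ∈ Sᶜ.powerset, (-1 : ℤ) ^ (Fintype.card E + (S ∪ C).card) =
      (-1) ^ (Fintype.card E + S.card) * (-1) ^ C.card := by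
    intro C hC
    rw [Finset.mem_powerset] at hC
    have hd : Disjoint S C := Finset.disjoint_left.2 fun e he he' => by
      simpa [he] using hC he'
    rw [Finset.card_union_of_disjoint hd, ← add_assoc, pow_add]
  rw [Finset.sum_congr rfl h, ← Finset.mul_sum, Finset.sum_powerset_neg_one_pow_card]
  by_cases hS : S = Finset.univ
  · subst hS
    simp [Finset.card_univ, ← two_mul]
  · rw [if_neg hS, if_neg (by simpa using hS), mul_zero]

variable [Fintype V] [DecidableEq V]

open Classical in
/-- The support of `f`. -/
noncomputable def supp {k : ℕ} (f : E → ZMod k) : Finset E := Finset.univ.filter fun e => f e ≠ 0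

open Classical in
/-- Summing weights of edge sets containing the support of a flow, over all flows. -/
theorem sum_flows_superset (H : Multigraph V E) (k : ℕ)
    [Fintype {f : E → ZMod k // H.IsFlow f}] (w : Finset E → ℤ) :
    ∑ f : {f : E → ZMod k // H.IsFlow f},
        ∑ D ∈ Finset.univ.filter (fun D => supp f.1 ⊆ D), w D =
      ∑ D : Finset E, w D * (k : ℤ) ^ nullity H D := by
  simp only [Finset.sum_filter]
  rw [Finset.sum_comm]
  refine Finset.sum_congr rfl fun D _ => ?_
  have hcard : k ^ nullity H D =
      (Finset.univ.filter fun f : {f : E → ZMod k // H.IsFlow f} => supp f.1 ⊆ D).card := by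
    rw [← card_flows_supported, ← Fintype.card_subtype, ← Nat.card_eq_fintype_card]
    refine (Nat.card_congr ((Equiv.subtypeSubtypeEquivSubtypeInter H.IsFlow
      fun f : E → ZMod k => supp f ⊆ D).trans
      (Equiv.subtypeEquivRight fun f => and_congr_right fun _ => ?_))).symm
    constructor
    · intro h e he
      by_contra hn
      exact he (h (by simp [supp, hn]))
    · intro h e he
      by_contra hn
      exact (Finset.mem_filter.1 he).2 (h e hn)
  rw [← Finset.sum_filter, Finset.sum_const, nsmul_eq_mul, ← hcard]
  push_cast
  ring

open Classical in
theorem card_nowhereZero (H : Multigraph V E) (k : ℕ) (hk : 1 ≤ k) :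
    (Nat.card {f : E → ZMod k // H.IsFlow f ∧ ∀ e, f e ≠ 0} : ℤ) =
      ∑ D : Finset E, (-1) ^ (Fintype.card E + D.card) * (k : ℤ) ^ nullity H D := by
  have : NeZero k := ⟨by omega⟩
  rw [← sum_flows_superset]
  simp only [sum_superset_sign]
  rw [Finset.sum_boole, ← Fintype.card_subtype, ← Nat.card_eq_fintype_card]
  congr 1
  refine Nat.card_congr ((Equiv.subtypeEquivRight fun f => and_congr_right fun _ => ?_).trans
    (Equiv.subtypeSubtypeEquivSubtypeInter H.IsFlow fun f : E → ZMod k =>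
      supp f = Finset.univ).symm)
  simp [supp, Finset.filter_eq_self]

open Classical in
theorem card_pairs (H : Multigraph V E) (k : ℕ) (hk : 1 ≤ k) :
    (Nat.card (Σ f : {f : E → ZMod k // H.IsFlow f},
        {ε : {e : E // e ∉ {e' : E | f.1 e' ≠ 0}} → ℤ //
          IsOrientation ε ∧
            ((H.contract {e' : E | f.1 e' ≠ 0}).reorient ε).IsTotallyCyclic}) : ℤ) =
      ∑ D : Finset E, (-1) ^ (numComp H Finset.univ + numComp H D) *
        (k : ℤ) ^ nullity H D := by
  have : NeZero k := ⟨by omega⟩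
  have hB : ∀ f : E → ZMod k, ∀ e, e ∈ supp f ↔ e ∈ {e' : E | f e' ≠ 0} := by
    intro f e
    simp [supp]
  have hfin : ∀ f : {f : E → ZMod k // H.IsFlow f},
      Finite {ε : {e : E // e ∉ {e' : E | f.1 e' ≠ 0}} → ℤ // IsOrientation ε ∧
        ((H.contract {e' : E | f.1 e' ≠ 0}).reorient ε).IsTotallyCyclic} :=
    fun f => Finite.of_equiv _ (orientationEquiv H _ (supp f.1) (hB f.1)).symm
  rw [Nat.card_sigma, ← sum_flows_superset, Nat.cast_sum]
  refine Finset.sum_congr rfl fun f _ => ?_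
  rw [Nat.card_congr (orientationEquiv H _ (supp f.1) (hB f.1)), sum_superset,
    Nat.card_eq_fintype_card, Fintype.card_coe, ← Finset.sum_boole, card_rev_orientations,
    Finset.union_compl]

end Final

end FlowReciprocity

open Multigraph in
/-- reciprocity for the flow polynomial. If `p(k)` counts nowhere-zero
`ℤ/kℤ`-flows of `H` for all `k ≥ 1`, then `(-1)^(|E|-|V|+c(H)) ⬝ p(-k)` counts pairs
`(f, ε)` of a `ℤ/kℤ`-flow `f` and a totally cyclic orientation `ε` of `H // supp f`. -/
theorem flow_reciprocity (V E : Type) [Fintype V] [Fintype E] [DecidableEq V]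
    (H : Multigraph V E) (p : Polynomial ℚ)
    (hp : ∀ k : ℕ, 1 ≤ k →
      p.eval (k : ℚ) = Nat.card {f : E → ZMod k // H.IsFlow f ∧ ∀ e, f e ≠ 0}) :
    ∀ k : ℕ, 1 ≤ k →
      (-1 : ℚ) ^ ((Fintype.card E : ℤ) - (Fintype.card V : ℤ) +
          (Nat.card (Quot fun u v : V => ∃ e : E, H.tail e = u ∧ H.head e = v) : ℤ)) *
        p.eval (-(k : ℚ)) =
      Nat.card (Σ f : {f : E → ZMod k // H.IsFlow f},
        {ε : {e : E // e ∉ {e' : E | f.1 e' ≠ 0}} → ℤ //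
          IsOrientation ε ∧ ((H.contract {e' : E | f.1 e' ≠ 0}).reorient ε).IsTotallyCyclic}) := by
  classical
  intro k hk
  let q : Polynomial ℚ := ∑ D : Finset E,
    Polynomial.C ((-1) ^ (Fintype.card E + D.card)) *
      Polynomial.X ^ FlowReciprocity.nullity H D
  have hq : ∀ x : ℚ, q.eval x = ∑ D : Finset E,
      (-1) ^ (Fintype.card E + D.card) * x ^ FlowReciprocity.nullity H D := by
    intro x
    simp [q, Polynomial.eval_finsetSum]
  have hpq : p = q := by
    refine Polynomial.eq_of_infinite_eval_eq p q
      (Set.Infinite.mono (s := (fun n : ℕ => (n : ℚ)) '' Set.Ici 1) ?_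
        ((Set.Ici_infinite 1).image Nat.cast_injective.injOn))
    rintro _ ⟨n, hn, rfl⟩
    have h := FlowReciprocity.card_nowhereZero H n hn
    have h' := congrArg (Int.cast : ℤ → ℚ) h
    push_cast at h'
    change p.eval (n : ℚ) = q.eval (n : ℚ)
    rw [hp n hn, hq, h']
  have hpairs := congrArg (Int.cast : ℤ → ℚ) (FlowReciprocity.card_pairs H k hk)
  push_cast at hpairs
  rw [hpairs, hpq, hq, Finset.mul_sum]
  have hc : Nat.card (Quot fun u v : V => ∃ e : E, H.tail e = u ∧ H.head e = v) =
      FlowReciprocity.numComp H Finset.univ := by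
    have hj : FlowReciprocity.joined H Finset.univ =
        fun u v : V => ∃ e : E, H.tail e = u ∧ H.head e = v := by
      funext u v
      simp [FlowReciprocity.joined]
    rw [FlowReciprocity.numComp, hj]
  have hE := FlowReciprocity.card_le_card_add_numComp H Finset.univ
  rw [Finset.card_univ] at hE
  have hexp : ((Fintype.card E : ℤ) - (Fintype.card V : ℤ) +
      (FlowReciprocity.numComp H Finset.univ : ℤ)) =
      ((Fintype.card E + FlowReciprocity.numComp H Finset.univ - Fintype.card V : ℕ) : ℤ) := by
    omega
  rw [hc, hexp, zpow_natCast]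
  refine Finset.sum_congr rfl fun D _ => ?_
  have hD := FlowReciprocity.card_le_card_add_numComp H D
  rw [neg_pow (k : ℚ), ← mul_assoc, ← mul_assoc, ← pow_add, ← pow_add]
  congr 1
  -- The exponents `n(E) + |E| + |D| + n(D)` and `c(E) + c(D)` have the same parity.
  apply neg_one_pow_congr
  rw [FlowReciprocity.nullity, Nat.even_iff, Nat.even_iff]
  omega
end

section
/- Let H = (V, E, head, tail) be a finite directed multigraph. There is a unique polynomial p such that for every integer k ≥ 1, p(k) equals the number of nowhere-zero integral k-flows of H, and for every integer k ≥ 0, |p(−k)| equals the number of pairs (x, ε) where x is an integral (k+1)-flow of H (not necessarily nowhere-zero) and ε is a totally cyclic orientation of H compatible with x, meaning ε(e) = +1 whenever x(e) > 0 and ε(e) = −1 whenever x(e) < 0. In particular, |p(0)| equals the number of totally cyclic orientations of H. -/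
namespace FlowRecip
open Polynomial Module

/-! ### Half-open lattice cones -/

/-- `(a, r) ≥ 0` in the lexicographic order on `ℤ × ℝ`; think of `a + δ r ≥ 0` for an infinitesimal
`δ > 0`. -/
def LexNonneg (a : ℤ) (r : ℝ) : Prop := 0 < a ∨ (a = 0 ∧ 0 ≤ r)

/-- Lattice points at level `l x = k` of the half-open cone `{x | f x ≥ 0 for f ∈ Φ}`, from which the
walls `f = 0` with `q f < 0` are removed. The map `q` plays the role of evaluation at a generic
real point, and `x` belongs to the half-open cone when `x + δ q` lies in the closed one for an
infinitesimal `δ > 0`. -/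
def Slice {L : Type} [AddCommGroup L] (Φ : Finset (Dual ℤ L)) (l : Dual ℤ L)
    (q : Dual ℤ L →+ ℝ) (k : ℤ) : Set L :=
  {x | l x = k ∧ ∀ f ∈ Φ, LexNonneg (f x) (q f)}

/-- The cone `{x | f x ≥ 0 for f ∈ Φ}`, graded by `l`, has finite slices at nonnegative levels, and
the smallest face containing any nonzero lattice point `x` contains a lattice point `v` of level
one on which every `f ∈ Φ` is `0` or `1`. -/
structure Compressed {L : Type} [AddCommGroup L] (Φ : Finset (Dual ℤ L)) (l : Dual ℤ L) :
    Prop where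
  level_nonneg : ∀ x, (∀ f ∈ Φ, 0 ≤ f x) → 0 ≤ l x
  finite : ∀ k, {x | l x = k ∧ ∀ f ∈ Φ, 0 ≤ f x}.Finite
  vertex : ∀ x, x ≠ 0 → (∀ f ∈ Φ, 0 ≤ f x) →
    ∃ v, l v = 1 ∧ ∀ f ∈ Φ, (f v = 0 ∨ f v = 1) ∧ (f x = 0 → f v = 0)

lemma LexNonneg.nonneg {a : ℤ} {r : ℝ} (h : LexNonneg a r) : 0 ≤ a := by
  rcases h with h | h <;> omega

lemma LexNonneg.add {a b : ℤ} {r s : ℝ} (h : LexNonneg a r) (h' : LexNonneg b s) :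
    LexNonneg (a + b) (r + s) := by
  rcases h with h | ⟨h, hr⟩ <;> rcases h' with h' | ⟨h', hs⟩
  · left; omega
  · left; omega
  · left; omega
  · right; exact ⟨by omega, by linarith⟩

/-- Bernoulli polynomials provide discrete antiderivatives. -/
lemma exists_antidifference (g : ℚ[X]) :
    ∃ P : ℚ[X], ∀ x : ℚ, P.eval (x + 1) - P.eval x = g.eval x := by
  induction g using Polynomial.induction_on' with
  | add p q hp hq =>
    obtain ⟨P, hP⟩ := hp
    obtain ⟨Q, hQ⟩ := hq
    refine ⟨P + Q, fun x => ?_⟩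
    rw [eval_add, eval_add, eval_add, ← hP, ← hQ]; ring
  | monomial n a =>
    refine ⟨C (a / (n + 1)) * Polynomial.bernoulli (n + 1), fun x => ?_⟩
    have h := Polynomial.bernoulli_eval_one_add (n + 1) x
    rw [add_comm x 1, eval_mul, eval_mul, h, eval_C, eval_C, eval_monomial]
    have : (n : ℚ) + 1 ≠ 0 := by positivity
    push_cast
    field_simp
    ring

lemma exists_poly_of_difference (h : ℤ → ℚ) (g : ℚ[X])
    (hg : ∀ k : ℤ, h (k + 1) - h k = g.eval (k : ℚ)) :
    ∃ P : ℚ[X], ∀ k : ℤ, P.eval (k : ℚ) = h k := by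
  obtain ⟨P, hP⟩ := exists_antidifference g
  refine ⟨P + C (h 0 - P.eval 0), fun k => ?_⟩
  induction k using Int.induction_on with
  | zero => simp
  | succ i ih =>
    have h1 := hg i
    have h2 := hP i
    simp only [eval_add, eval_C] at ih ⊢
    push_cast at *
    linarith
  | pred i ih =>
    have h1 := hg (-i - 1)
    have h2 := hP ((-i - 1 : ℤ) : ℚ)
    simp only [eval_add, eval_C, sub_add_cancel] at ih h1 ⊢
    push_cast at *
    simp only [sub_add_cancel] at h2
    linarith

/-- A finite family of functionals on a nonzero lattice, all nonnegative at the generic real point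
`q`, is also nonnegative at some nonzero lattice point: approximate `q` by a rational point and
clear denominators. -/
lemma exists_nonneg_of_pos {L : Type} [AddCommGroup L] [Module.Free ℤ L] [Module.Finite ℤ L]
    [Nontrivial L] (Φ : Finset (Dual ℤ L)) (q : Dual ℤ L →+ ℝ) (hq : Function.Injective q)
    (h : ∀ f ∈ Φ, 0 ≤ q f) : ∃ x : L, x ≠ 0 ∧ ∀ f ∈ Φ, 0 ≤ f x := by
  classical
  by_cases h0 : ∀ f ∈ Φ, f = 0
  · obtain ⟨x, hx⟩ := exists_ne (0 : L)
    exact ⟨x, hx, fun f hf => by simp [h0 f hf]⟩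
  push Not at h0
  obtain ⟨f₀, hf₀, hf₀'⟩ := h0
  let b := Module.Free.chooseBasis ℤ L
  let ι := Module.Free.ChooseBasisIndex ℤ L
  have hqf : ∀ f : Dual ℤ L, q f = ∑ i, (f (b i) : ℝ) * q (b.coord i) := by
    intro f
    have : f = ∑ i, f (b i) • b.coord i := by
      apply b.ext
      intro j
      simp
    conv_lhs => rw [this]
    rw [map_sum]
    simp
  let U : Set (ι → ℝ) := {c | ∀ f ∈ Φ, f ≠ 0 → 0 < ∑ i, (f (b i) : ℝ) * c i}
  have hU : IsOpen U := by
    have : U = ⋂ f ∈ Φ, {c | f ≠ 0 → 0 < ∑ i, (f (b i) : ℝ) * c i} := by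
      ext; simp [U]
    rw [this]
    apply isOpen_biInter_finset
    intro f _
    by_cases hf : f = 0
    · simp [hf]
    · simp only [ne_eq, hf, not_false_eq_true, forall_const]
      exact isOpen_lt continuous_const (by fun_prop)
  have hne : U.Nonempty := by
    refine ⟨fun i => q (b.coord i), fun f hf hf0 => ?_⟩
    rw [← hqf]
    refine lt_of_le_of_ne (h f hf) fun h' => hf0 (hq ?_)
    rw [← h', map_zero]
  have hdense : DenseRange (fun (c : ι → ℚ) (i : ι) => (c i : ℝ)) :=
    DenseRange.piMap (fun _ => Rat.denseRange_cast)
  obtain ⟨c, hc⟩ := hdense.exists_mem_open hU hne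
  let N : ℕ := ∏ i, (c i).den
  have hN : 0 < N := Finset.prod_pos fun i _ => (c i).den_pos
  have hz : ∀ i, ∃ z : ℤ, (z : ℚ) = N * c i := by
    intro i
    refine ⟨(c i).num * ∏ j ∈ Finset.univ.erase i, ((c j).den : ℤ), ?_⟩
    have : N = (c i).den * ∏ j ∈ Finset.univ.erase i, (c j).den :=
      (Finset.mul_prod_erase _ _ (Finset.mem_univ i)).symm
    rw [this]
    push_cast
    have h2 := Rat.mul_den_eq_num (c i)
    rw [← h2]; ring
  choose z hz using hz
  have key : ∀ f : Dual ℤ L, ((f (∑ i, z i • b i) : ℤ) : ℝ) =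
      N * ∑ i, (f (b i) : ℝ) * (c i : ℝ) := by
    intro f
    rw [map_sum, Finset.mul_sum]
    push_cast
    refine Finset.sum_congr rfl fun i _ => ?_
    have : (z i : ℝ) = N * (c i : ℝ) := by exact_mod_cast congrArg (fun t : ℚ => (t : ℝ)) (hz i)
    simp only [map_smul, smul_eq_mul, Int.cast_mul, this]; ring
  have hpos : ∀ f ∈ Φ, f ≠ 0 → 0 < f (∑ i, z i • b i) := by
    intro f hf hf0
    have h1 := hc f hf hf0
    have : (0 : ℝ) < (f (∑ i, z i • b i) : ℤ) := by
      rw [key]; exact mul_pos (by exact_mod_cast hN) h1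
    exact_mod_cast this
  refine ⟨∑ i, z i • b i, fun hx => ?_, fun f hf => ?_⟩
  · have := hpos f₀ hf₀ hf₀'
    rw [hx, map_zero] at this
    exact lt_irrefl _ this
  · by_cases hf0 : f = 0
    · simp [hf0]
    · exact (hpos f hf hf0).le

/-! ### Coning over the facets that miss a vertex -/
section Cone
variable {L : Type} [AddCommGroup L]

lemma Compressed.slice_finite {Φ : Finset (Dual ℤ L)} {l : Dual ℤ L} (hC : Compressed Φ l)
    (q : Dual ℤ L →+ ℝ) (k : ℤ) : (Slice Φ l q k).Finite :=
  (hC.finite k).subset fun _ hx => ⟨hx.1, fun f hf => (hx.2 f hf).nonneg⟩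

lemma Compressed.slice_neg {Φ : Finset (Dual ℤ L)} {l : Dual ℤ L} (hC : Compressed Φ l)
    (q : Dual ℤ L →+ ℝ) {k : ℤ} (hk : k < 0) : Slice Φ l q k = ∅ := by
  ext x
  simp only [Set.mem_empty_iff_false, iff_false]
  intro hx
  have := hC.level_nonneg x fun f hf => (hx.2 f hf).nonneg
  have := hx.1
  omega

/-- Restriction of a functional to the hyperplane `f₀ = 0`. -/
def resKer (f₀ : Dual ℤ L) (g : Dual ℤ L) : Dual ℤ (LinearMap.ker f₀) :=
  g.domRestrict (LinearMap.ker f₀)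

/-- The projection `x ↦ x - f₀ x • v` onto the hyperplane `f₀ = 0` along `v`. -/
def projKer (f₀ : Dual ℤ L) (v : L) (hv : f₀ v = 1) : L →ₗ[ℤ] LinearMap.ker f₀ :=
  LinearMap.codRestrict (LinearMap.ker f₀) (LinearMap.id - f₀.smulRight v)
    (fun x => by simp [hv])

lemma projKer_coe (f₀ : Dual ℤ L) (v : L) (hv : f₀ v = 1) (x : L) :
    ((projKer f₀ v hv x : LinearMap.ker f₀) : L) = x - f₀ x • v := rfl

/-- The image of the generic point `q` under the projection along `v`. -/
def pullKer (f₀ : Dual ℤ L) (v : L) (hv : f₀ v = 1) (q : Dual ℤ L →+ ℝ) :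
    Dual ℤ (LinearMap.ker f₀) →+ ℝ :=
  q.comp ((projKer f₀ v hv).dualMap : Dual ℤ (LinearMap.ker f₀) →+ Dual ℤ L)

lemma pullKer_resKer (f₀ : Dual ℤ L) (v : L) (hv : f₀ v = 1) (q : Dual ℤ L →+ ℝ)
    (g : Dual ℤ L) : pullKer f₀ v hv q (resKer f₀ g) = q g - g v * q f₀ := by
  have : (projKer f₀ v hv).dualMap (resKer f₀ g) = g - g v • f₀ := by
    ext x
    simp [resKer, LinearMap.domRestrict_apply, projKer_coe, mul_comm]
  change q ((projKer f₀ v hv).dualMap (resKer f₀ g)) = _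
  rw [this, map_sub, map_zsmul]
  simp

/-- Genericity passes to the facet `f₀ = 0`. -/
lemma pullKer_injective (f₀ : Dual ℤ L) (v : L) (hv : f₀ v = 1) (q : Dual ℤ L →+ ℝ)
    (hq : Function.Injective q) : Function.Injective (pullKer f₀ v hv q) := by
  refine hq.comp ?_
  intro a b hab
  ext y
  have h : (projKer f₀ v hv) (y : L) = y := by
    apply Subtype.ext
    have hy : f₀ (y : L) = 0 := y.2
    rw [projKer_coe, hy]
    simp
  have := congrArg (fun t : Dual ℤ L => t (y : L)) hab
  simpa [h] using this

lemma pullKer_neg (f₀ : Dual ℤ L) (v : L) (hv : f₀ v = 1) (q : Dual ℤ L →+ ℝ) :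
    pullKer f₀ v hv (-q) = - pullKer f₀ v hv q := rfl

open Classical in
/-- The inequalities cutting out the facet `f₀ = 0` inside its own hyperplane. -/
noncomputable def facetFamily (f₀ : Dual ℤ L) (Φ : Finset (Dual ℤ L)) :
    Finset (Dual ℤ (LinearMap.ker f₀)) := Φ.image (resKer f₀)

lemma Compressed.facet {Φ : Finset (Dual ℤ L)} {l : Dual ℤ L} (hC : Compressed Φ l)
    {f₀ : Dual ℤ L} (hf₀ : f₀ ∈ Φ) : Compressed (facetFamily f₀ Φ) (resKer f₀ l) := by
  classical
  have key : ∀ y : LinearMap.ker f₀, (∀ f ∈ facetFamily f₀ Φ, 0 ≤ f y) ↔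
      ∀ f ∈ Φ, 0 ≤ f (y : L) := by
    intro y
    simp [facetFamily, resKer]
  refine ⟨fun y hy => hC.level_nonneg y ((key y).1 hy), fun k => ?_, fun y hy hy' => ?_⟩
  · refine Set.Finite.of_finite_image (f := Subtype.val) ?_ Subtype.val_injective.injOn
    refine (hC.finite k).subset ?_
    rintro _ ⟨y, hy, rfl⟩
    exact ⟨hy.1, (key y).1 hy.2⟩
  · obtain ⟨v, hv, hv'⟩ := hC.vertex y (by simpa using hy) ((key y).1 hy')
    refine ⟨⟨v, (hv' f₀ hf₀).2 y.2⟩, hv, ?_⟩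
    simpa [facetFamily, resKer] using hv'

/-- The least `a : ℤ` with `LexNonneg a (q f₀)`: it is `0` if the wall `f₀ = 0` is kept and `1` if it
is removed. -/
noncomputable def offset (q : Dual ℤ L →+ ℝ) (f₀ : Dual ℤ L) : ℤ := if 0 ≤ q f₀ then 0 else 1

lemma offset_neg (q : Dual ℤ L →+ ℝ) (f₀ : Dual ℤ L) (h : q f₀ ≠ 0) :
    offset (-q) f₀ = 1 - offset q f₀ := by
  unfold offset
  rcases lt_or_gt_of_ne h with h | h
  · simp [h.le, not_le.2 h]
  · simp [h.le, not_le.2 h]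

lemma lexNonneg_iff_offset (q : Dual ℤ L →+ ℝ) (f₀ : Dual ℤ L) (a : ℤ) :
    LexNonneg a (q f₀) ↔ offset q f₀ ≤ a := by
  unfold offset LexNonneg
  split_ifs with h
  · simp only [h, and_true]; omega
  · simp only [h, and_false, or_false]; omega

/-- The half-open cone spanned by the vertex `v` and the facet `f₀ = 0`, at level `k`. For `f₀ v = 1`
and all values `g v` in `{0, 1}`, its points are the `x` in the half-open cone at which `f₀` has the
lexicographically smallest value among the functionals taking the value `1` at `v`. -/
def Piece (Φ : Finset (Dual ℤ L)) (l : Dual ℤ L) (q : Dual ℤ L →+ ℝ) (v : L)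
    (f₀ : Dual ℤ L) (k : ℤ) : Set L :=
  {x | l x = k ∧ offset q f₀ ≤ f₀ x ∧
    ∀ g ∈ Φ, LexNonneg (g x - g v * f₀ x) (q g - g v * q f₀)}

lemma piece_subset_slice {Φ : Finset (Dual ℤ L)} {l : Dual ℤ L} (q : Dual ℤ L →+ ℝ) {v : L}
    (hv : ∀ f ∈ Φ, f v = 0 ∨ f v = 1) (f₀ : Dual ℤ L) (k : ℤ) :
    Piece Φ l q v f₀ k ⊆ Slice Φ l q k := by
  rintro x ⟨h1, h2, h3⟩
  refine ⟨h1, fun g hg => ?_⟩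
  have h := h3 g hg
  rcases hv g hg with h0 | h0
  · simpa [h0] using h
  · have := h.add ((lexNonneg_iff_offset q f₀ _).2 h2)
    simpa [h0] using this

/-- The half-open cone is the disjoint union of the pieces over the facets missing `v`: the minimiser
of `f ↦ (f x, q f)` exists, and it is unique because `q` is injective. -/
lemma ncard_slice {Φ : Finset (Dual ℤ L)} {l : Dual ℤ L} (hC : Compressed Φ l)
    (q : Dual ℤ L →+ ℝ) (hq : Function.Injective q) {v : L} (hlv : l v = 1)
    (hv : ∀ f ∈ Φ, f v = 0 ∨ f v = 1) (k : ℤ) :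
    (Slice Φ l q k).ncard = ∑ f₀ ∈ Φ.filter (fun f => f v = 1), (Piece Φ l q v f₀ k).ncard := by
  classical
  have hne : (Φ.filter (fun f => f v = 1)).Nonempty := by
    by_contra hcon
    rw [Finset.not_nonempty_iff_eq_empty, Finset.filter_eq_empty_iff] at hcon
    have := hC.level_nonneg (-v) fun f hf => by
      have := (hv f hf).resolve_right (hcon hf)
      simp [this]
    rw [map_neg, hlv] at this
    omega
  have hfin := fun f₀ => (hC.slice_finite q k).subset (piece_subset_slice q hv f₀ k)
  have hunion : (hC.slice_finite q k).toFinset =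
      (Φ.filter (fun f => f v = 1)).biUnion (fun f₀ => (hfin f₀).toFinset) := by
    ext x
    simp only [Set.Finite.mem_toFinset, Finset.mem_biUnion]
    constructor
    · intro hx
      obtain ⟨f₀, hf₀, hmin⟩ := Finset.exists_min_image _
        (fun f : Dual ℤ L => toLex (f x, q f)) hne
      refine ⟨f₀, hf₀, hx.1, ?_, fun g hg => ?_⟩
      · exact (lexNonneg_iff_offset q f₀ _).1 (hx.2 f₀ (Finset.mem_filter.1 hf₀).1)
      · rcases hv g hg with h0 | h0
        · simpa [h0] using hx.2 g hg
        · have := hmin g (Finset.mem_filter.2 ⟨hg, h0⟩)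
          rw [Prod.Lex.toLex_le_toLex] at this
          rw [h0]
          rcases this with h | ⟨h, h'⟩
          · left; simp only at h; omega
          · right; simp only at h h'
            constructor
            · omega
            · push_cast; linarith
    · rintro ⟨f₀, -, hx⟩
      exact piece_subset_slice q hv f₀ k hx
  rw [Set.ncard_eq_toFinset_card _ (hC.slice_finite q k), hunion, Finset.card_biUnion]
  · exact Finset.sum_congr rfl fun f₀ _ => (Set.ncard_eq_toFinset_card _ (hfin f₀)).symm
  · intro f hf g hg hfg
    rw [Function.onFun, Finset.disjoint_left]
    intro x hx hx'
    simp only [Set.Finite.mem_toFinset] at hx hx'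
    simp only [Finset.coe_filter, Set.mem_ofPred_eq] at hf hg
    have h1 := hx.2.2 g hg.1
    have h2 := hx'.2.2 f hf.1
    rw [hg.2] at h1
    rw [hf.2] at h2
    apply hfg
    apply hq
    rcases h1 with h1 | ⟨h1, h1'⟩ <;> rcases h2 with h2 | ⟨h2, h2'⟩
    · omega
    · omega
    · omega
    · push_cast at h1' h2'; linarith

/-- Translating by `v` embeds level `k` of a piece into level `k + 1`; the points left over form a
translate of a slice of the half-open facet. -/
lemma ncard_piece_succ {Φ : Finset (Dual ℤ L)} {l : Dual ℤ L} (hC : Compressed Φ l)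
    (q : Dual ℤ L →+ ℝ) {v : L} (hlv : l v = 1)
    (hv : ∀ f ∈ Φ, f v = 0 ∨ f v = 1) {f₀ : Dual ℤ L} (hf₀ : f₀ ∈ Φ) (hf₀v : f₀ v = 1) (k : ℤ) :
    (Piece Φ l q v f₀ (k + 1)).ncard = (Piece Φ l q v f₀ k).ncard +
      (Slice (facetFamily f₀ Φ) (resKer f₀ l) (pullKer f₀ v hf₀v q)
        (k + 1 - offset q f₀)).ncard := by
  classical
  have hslice : ∀ (y : LinearMap.ker f₀) (j : ℤ),
      y ∈ Slice (facetFamily f₀ Φ) (resKer f₀ l) (pullKer f₀ v hf₀v q) j ↔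
      l (y : L) = j ∧ ∀ g ∈ Φ, LexNonneg (g (y : L)) (q g - g v * q f₀) := by
    intro y j
    simp only [Slice, Set.mem_ofPred_eq, facetFamily, Finset.forall_mem_image, pullKer_resKer]
    rfl
  have hinj1 : Function.Injective (fun x : L => x + v) := add_left_injective v
  have hinj2 : Function.Injective
      (fun y : LinearMap.ker f₀ => (y : L) + offset q f₀ • v) :=
    (add_left_injective _).comp Subtype.val_injective
  have hunion : Piece Φ l q v f₀ (k + 1) = (fun x : L => x + v) '' Piece Φ l q v f₀ k ∪
      (fun y : LinearMap.ker f₀ => (y : L) + offset q f₀ • v) ''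
        Slice (facetFamily f₀ Φ) (resKer f₀ l) (pullKer f₀ v hf₀v q)
          (k + 1 - offset q f₀) := by
    ext x
    constructor
    · rintro ⟨h1, h2, h3⟩
      rcases h2.lt_or_eq with h2 | h2
      · left
        refine ⟨x - v, ⟨?_, ?_, fun g hg => ?_⟩, by simp⟩
        · rw [map_sub, hlv]; omega
        · rw [map_sub, hf₀v]; omega
        · have := h3 g hg
          rw [map_sub, map_sub, hf₀v]
          convert this using 1; ring
      · right
        refine ⟨⟨x - offset q f₀ • v, ?_⟩, ?_, by simp⟩
        · simp [hf₀v, h2]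
        · rw [hslice]
          refine ⟨?_, fun g hg => ?_⟩
          · simp [h1, hlv]
          · have := h3 g hg
            simp only [map_sub, map_smul, smul_eq_mul]
            convert this using 1
            rw [h2]; ring
    · rintro (⟨x, ⟨h1, h2, h3⟩, rfl⟩ | ⟨y, hy, rfl⟩)
      · refine ⟨?_, ?_, fun g hg => ?_⟩
        · simp only [map_add]; omega
        · simp only [map_add]; omega
        · have := h3 g hg
          simp only [map_add, hf₀v]
          convert this using 1; ring
      · rw [hslice] at hy
        have hy0 : f₀ (y : L) = 0 := y.2
        refine ⟨?_, ?_, fun g hg => ?_⟩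
        · simp [hy.1, hlv]
        · simp [hy0, hf₀v]
        · have := hy.2 g hg
          simp only [map_add, map_smul, smul_eq_mul, hf₀v, hy0]
          convert this using 1; ring
  have hfin : ∀ j, (Piece Φ l q v f₀ j).Finite := fun j =>
    (hC.slice_finite q j).subset (piece_subset_slice q hv f₀ j)
  rw [hunion, Set.ncard_union_eq ?_ ((hfin k).image _)
    (((hC.facet hf₀).slice_finite _ _).image _), Set.ncard_image_of_injective _ hinj1,
    Set.ncard_image_of_injective _ hinj2]
  rw [Set.disjoint_left]
  rintro _ ⟨x, ⟨-, h2, -⟩, rfl⟩ ⟨y, -, hxy⟩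
  have := congrArg f₀ hxy
  have hy0 : f₀ (y : L) = 0 := y.2
  simp only [map_add, map_smul, smul_eq_mul, hf₀v, hy0] at this
  omega

end Cone

/-- Reciprocity for half-open cones. Both counts vanish at negative levels, so for `k > 0` the
polynomial counts the slices of the cone with signs `q`, while for `k < 0` it counts, up to the
sign `-(-1) ^ d`, those of the cone with the complementary walls removed. Combining the two sides
into one function on `ℤ` turns the induction on `d` into taking one discrete antiderivative. -/
theorem cone_reciprocity (d : ℕ) : ∀ (L : Type) [AddCommGroup L] [Module.Free ℤ L]
    [Module.Finite ℤ L] (_ : finrank ℤ L = d) (Φ : Finset (Dual ℤ L)) (l : Dual ℤ L)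
    (_ : Compressed Φ l) (q : Dual ℤ L →+ ℝ) (_ : Function.Injective q),
    ∃ P : ℚ[X], ∀ k : ℤ, P.eval (k : ℚ) =
      (Slice Φ l q k).ncard - (-1) ^ d * (Slice Φ l (-q) (-k)).ncard := by
  induction d with
  | zero =>
    intro L _ _ _ hd Φ l hC q hq
    have hL : Subsingleton L := Module.finrank_zero_iff.1 hd
    refine ⟨0, fun k => ?_⟩
    have : Slice Φ l q k = Slice Φ l (-q) (-k) := by
      ext x
      obtain rfl : x = 0 := Subsingleton.elim _ _
      have h0 : ∀ f : Dual ℤ L, f = 0 := fun f => by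
        ext y; rw [Subsingleton.elim y 0, map_zero, map_zero]
      simp only [Slice, Set.mem_ofPred_eq, map_zero]
      refine and_congr (by omega) (forall₂_congr fun f _ => ?_)
      rw [h0 f, map_zero, map_zero]
    rw [this]; simp
  | succ d ih =>
    intro L _ _ _ hd Φ l hC q hq
    have hnt : Nontrivial L := Module.nontrivial_of_finrank_pos (R := ℤ) (by omega)
    by_cases hx : ∃ x : L, x ≠ 0 ∧ ∀ f ∈ Φ, 0 ≤ f x
    swap
    -- The cone is `{0}` although the lattice is not, so no point survives a generic perturbation.
    · have hempty : ∀ (q : Dual ℤ L →+ ℝ), Function.Injective q → ∀ k, Slice Φ l q k = ∅ := by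
        intro q hq k
        ext x
        simp only [Set.mem_empty_iff_false, iff_false]
        rintro ⟨-, h2⟩
        have hx0 : x = 0 := by
          by_contra h0
          exact hx ⟨x, h0, fun f hf => (h2 f hf).nonneg⟩
        refine hx (exists_nonneg_of_pos Φ q hq fun f hf => ?_)
        rcases h2 f hf with h | h
        · simp [hx0] at h
        · exact h.2
      refine ⟨0, fun k => ?_⟩
      rw [hempty q hq, hempty (-q) (neg_injective.comp hq)]
      simp
    obtain ⟨x, hx0, hx⟩ := hx
    obtain ⟨v, hlv, hv⟩ := hC.vertex x hx0 hx
    replace hv := fun f hf => (hv f hf).1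
    have hq' : Function.Injective (-q) := neg_injective.comp hq
    have hpiece : ∀ f₀ ∈ Φ.filter (fun f => f v = 1), ∃ P : ℚ[X], ∀ k : ℤ, P.eval (k : ℚ) =
        (Piece Φ l q v f₀ k).ncard - (-1) ^ (d + 1) * (Piece Φ l (-q) v f₀ (-k)).ncard := by
      intro f₀ hf₀
      obtain ⟨hf₀, hf₀v⟩ := Finset.mem_filter.1 hf₀
      have hrank : finrank ℤ (LinearMap.ker f₀) = d := by
        have h1 := Submodule.finrank_quotient_add_finrank (LinearMap.ker f₀)
        have h2 : Function.Surjective f₀ := fun z => ⟨z • v, by simp [hf₀v]⟩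
        rw [(f₀.quotKerEquivOfSurjective h2).finrank_eq, Module.finrank_self, hd] at h1
        omega
      obtain ⟨g, hg⟩ := ih (LinearMap.ker f₀) hrank (facetFamily f₀ Φ) (resKer f₀ l)
        (hC.facet hf₀) (pullKer f₀ v hf₀v q) (pullKer_injective f₀ v hf₀v q hq)
      have hqf : q f₀ ≠ 0 := by
        intro h0
        have : f₀ = 0 := hq (by rw [h0, map_zero])
        rw [this] at hf₀v
        simp at hf₀v
      refine exists_poly_of_difference _ (g.comp (X + C (1 - offset q f₀ : ℚ))) fun k => ?_
      have h1 := ncard_piece_succ hC q hlv hv hf₀ hf₀v k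
      have h2 := ncard_piece_succ hC (-q) hlv hv hf₀ hf₀v (-(k + 1))
      have h3 := hg (k + 1 - offset q f₀)
      rw [offset_neg q f₀ hqf, pullKer_neg] at h2
      rw [show -(k + 1) + 1 = -k by ring,
        show -k - (1 - offset q f₀) = -(k + 1 - offset q f₀) by ring] at h2
      rw [eval_comp]
      simp only [eval_add, eval_X, eval_C]
      rw [show (k : ℚ) + (1 - (offset q f₀ : ℚ)) = ((k + 1 - offset q f₀ : ℤ) : ℚ) by
        push_cast; ring, h3, h1, h2]
      push_cast
      ring
    choose! P hP using hpiece
    refine ⟨∑ f₀ ∈ Φ.filter (fun f => f v = 1), P f₀, fun k => ?_⟩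
    rw [eval_finsetSum, ncard_slice hC q hq hlv hv, ncard_slice hC (-q) hq' hlv hv,
      Finset.sum_congr rfl fun f₀ hf₀ => hP f₀ hf₀ k]
    push_cast
    rw [Finset.sum_sub_distrib, Finset.mul_sum]
end FlowRecip

namespace FlowRecip
open Multigraph

/-! ### Walks, cuts and circulations -/
variable {V E : Type}

lemma isWalkFrom_append (G : Multigraph V E) (a : E) : ∀ (es : List E) (u v : V),
    G.IsWalkFrom u v es → G.tail a = v → G.IsWalkFrom u (G.head a) (es ++ [a])
  | [], u, v, h, ha => by
    have h : u = v := h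
    exact ⟨ha.trans h.symm, rfl⟩
  | _ :: es, _, v, h, ha => ⟨h.1, isWalkFrom_append G a es _ v h.2 ha⟩

lemma exists_prefix_walk (G : Multigraph V E) (z : V) : ∀ (es : List E) (u v : V),
    G.IsWalkFrom u v es → z ∈ u :: es.map G.head → ∃ es', es' <+: es ∧ G.IsWalkFrom u z es'
  | [], u, v, h, hz => ⟨[], List.prefix_rfl, by simpa [IsWalkFrom, eq_comm] using hz⟩
  | e :: es, u, v, h, hz => by
    rcases List.mem_cons.1 hz with hz | hz
    · exact ⟨[], List.nil_prefix, hz.symm⟩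
    · obtain ⟨es', h1, h2⟩ := exists_prefix_walk G z es _ v h.2 hz
      exact ⟨e :: es', (List.prefix_cons_inj e).2 h1, h.1, h2⟩

/-- `v` is reached from `w` by a directed path without repeated vertices using edges of `A` only. -/
def PathReach (G : Multigraph V E) (A : Set E) (w v : V) : Prop :=
  ∃ es, G.IsWalkFrom w v es ∧ (w :: es.map G.head).Nodup ∧ ∀ a ∈ es, a ∈ A

lemma PathReach.refl (G : Multigraph V E) (A : Set E) (w : V) : PathReach G A w w :=
  ⟨[], rfl, by simp, by simp⟩

lemma PathReach.step {G : Multigraph V E} {A : Set E} {w : V} {a : E} (ha : a ∈ A)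
    (h : PathReach G A w (G.tail a)) : PathReach G A w (G.head a) := by
  obtain ⟨es, h1, h2, h3⟩ := h
  by_cases hz : G.head a ∈ w :: es.map G.head
  · obtain ⟨es', hp, hw⟩ := exists_prefix_walk G _ es w _ h1 hz
    refine ⟨es', hw, h2.sublist ?_, fun b hb => h3 b (hp.subset hb)⟩
    exact ((hp.sublist.map _).cons_cons w)
  · refine ⟨es ++ [a], isWalkFrom_append G a es w _ h1 rfl, ?_, ?_⟩
    · rw [List.map_append, ← List.cons_append]
      refine List.Nodup.append h2 (by simp) ?_
      simpa using hz
    · intro b hb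
      rcases List.mem_append.1 hb with hb | hb
      · exact h3 b hb
      · rw [List.mem_singleton.1 hb]; exact ha

variable [Fintype E] [DecidableEq V]

/-- A flow carries as much into a vertex set `R` as out of it. -/
lemma IsFlow_cut {G : Multigraph V E} {x : E → ℤ} (hx : G.IsFlow x) (R : Finset V) :
    ∑ e, (if G.head e ∈ R then x e else 0) = ∑ e, (if G.tail e ∈ R then x e else 0) := by
  have h := Finset.sum_congr (rfl : R = R) fun v _ => hx v
  rw [Finset.sum_comm, Finset.sum_comm (s := R)] at h
  simpa using h

/-- The edge multiplicities of a walk from `u` to `v` form a unit flow from `u` to `v`. -/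
lemma walk_count [BEq E] [LawfulBEq E] (G : Multigraph V E) (z : V) : ∀ (es : List E) (u v : V),
    G.IsWalkFrom u v es →
    ∑ e, (if G.head e = z then (es.count e : ℤ) else 0) + (if u = z then 1 else 0) =
    ∑ e, (if G.tail e = z then (es.count e : ℤ) else 0) + (if v = z then 1 else 0)
  | [], u, v, h => by
    have h : u = v := h
    simp [h]
  | a :: es, u, v, ⟨h, h'⟩ => by
    classical
    have ih := walk_count G z es _ v h'
    have key : ∀ p : E → V, ∑ e, (if p e = z then ((a :: es).count e : ℤ) else 0) =
        ∑ e, (if p e = z then (es.count e : ℤ) else 0) + (if p a = z then 1 else 0) := by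
      intro p
      have : ∀ e, (if p e = z then ((a :: es).count e : ℤ) else 0) =
          (if p e = z then (es.count e : ℤ) else 0) +
          (if a = e then (if p a = z then 1 else 0) else 0) := by
        intro e
        rw [List.count_cons]
        by_cases hae : a = e
        · subst hae; by_cases hp : p a = z <;> simp [hp]
        · simp [hae]
      rw [Finset.sum_congr rfl fun e _ => this e, Finset.sum_add_distrib]
      simp
    rw [key, key]
    subst h
    linarith

lemma IsFlow_count [BEq E] [LawfulBEq E] (G : Multigraph V E) {es : List E} {v : V}
    (h : G.IsWalkFrom v v es) : G.IsFlow (fun e => (es.count e : ℤ)) := fun z => by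
  have := walk_count G z es v v h
  linarith

lemma IsFlow.add {G : Multigraph V E} {x y : E → ℤ} (hx : G.IsFlow x) (hy : G.IsFlow y) :
    G.IsFlow (x + y) := by
  intro v
  have := hx v
  have := hy v
  simp only [Pi.add_apply, ite_add_zero, Finset.sum_add_distrib]
  linarith

lemma IsFlow.smul {G : Multigraph V E} {x : E → ℤ} (c : ℤ) (hx : G.IsFlow x) :
    G.IsFlow (c • x) := by
  intro v
  have := congrArg (c * ·) (hx v)
  simpa [Finset.mul_sum] using this

lemma IsFlow_zero (G : Multigraph V E) : G.IsFlow (0 : E → ℤ) := by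
  intro v; simp

/-- An edge carrying positive flow lies on a directed cycle: otherwise flow enters the set of vertices
reachable from its head, and none leaves. -/
lemma onCycle_of_flow [Fintype V] {G : Multigraph V E} {x : E → ℤ} (hx : G.IsFlow x)
    (h0 : ∀ e, 0 ≤ x e) {e : E} (he : 0 < x e) : G.OnCycle e := by
  classical
  let R : Finset V := Finset.univ.filter (PathReach G Set.univ (G.head e))
  have hR : ∀ v, v ∈ R ↔ PathReach G Set.univ (G.head e) v := fun v => by simp [R]
  have hstep : ∀ a, G.tail a ∈ R → G.head a ∈ R := fun a ha => by
    rw [hR] at ha ⊢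
    exact ha.step (Set.mem_univ _)
  by_cases ht : G.tail e ∈ R
  · obtain ⟨es, h1, h2, -⟩ := (hR _).1 ht
    have h2' : ((e :: es).map G.head).Nodup := h2
    exact ⟨G.tail e, e :: es, ⟨by simp, h2'.of_map, h2', rfl, h1⟩, by simp⟩
  · exfalso
    have hcut := IsFlow_cut hx R
    refine (Finset.sum_lt_sum (fun a _ => ?_) ⟨e, Finset.mem_univ e, ?_⟩).ne' hcut
    · by_cases ha : G.tail a ∈ R
      · simp [ha, hstep a ha]
      · rw [if_neg ha]; split_ifs
        · exact h0 a
        · exact le_rfl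
    · rw [if_neg ht, if_pos ((hR _).2 (PathReach.refl _ _ _))]
      exact he

/-- Summing directed cycles, one through each edge, gives a strictly positive flow. -/
lemma exists_pos_flow {G : Multigraph V E} (hG : G.IsTotallyCyclic) :
    ∃ x : E → ℤ, G.IsFlow x ∧ ∀ e, 0 < x e := by
  classical
  choose v es hc hmem using hG
  refine ⟨fun a => ∑ e, ((es e).count a : ℤ), ?_, fun a => ?_⟩
  · have : ∀ s : Finset E, G.IsFlow (fun a => ∑ e ∈ s, ((es e).count a : ℤ)) := by
      intro s
      induction s using Finset.induction_on with
      | empty => exact IsFlow_zero G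
      | insert e s hes ih =>
        simp only [Finset.sum_insert hes]
        exact IsFlow.add (IsFlow_count G (hc e).2.2.2) ih
    exact this _
  · refine Finset.sum_pos' (fun e _ => by positivity) ⟨a, Finset.mem_univ a, ?_⟩
    exact_mod_cast List.count_pos_iff.2 (hmem a)

/-- The multigraph in which every edge of `G` may be traversed in both directions. -/
def double (G : Multigraph V E) : Multigraph V (E × Bool) where
  head := G.dirHead
  tail := G.dirTail

lemma IsFlow_of_double {G : Multigraph V E} {y : E × Bool → ℤ} (hy : (double G).IsFlow y) :
    G.IsFlow (fun e => y (e, true) - y (e, false)) := by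
  intro v
  have h := hy v
  simp only [double, dirHead, dirTail, Fintype.sum_prod_type, Fintype.sum_bool, if_true,
    Bool.false_eq_true, if_false, Finset.sum_add_distrib] at h
  have key : ∀ p : E → V, ∑ e, (if p e = v then y (e, true) - y (e, false) else 0) =
      ∑ e, (if p e = v then y (e, true) else 0) - ∑ e, (if p e = v then y (e, false) else 0) := by
    intro p
    rw [← Finset.sum_sub_distrib]
    exact Finset.sum_congr rfl fun e _ => by split_ifs <;> simp
  rw [key, key]
  linarith

/-- The edges on which a flow is not divisible by `k` contain no cut edge, so each of them lies on an
undirected cycle of such edges, which carries a flow with values in `{0, 1, -1}`. -/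
lemma exists_cycle_flow [Fintype V] {G : Multigraph V E} {y : E → ℤ} (hy : G.IsFlow y) {k : ℤ}
    {e₀ : E} (he₀ : ¬ k ∣ y e₀) :
    ∃ z : E → ℤ, G.IsFlow z ∧ z e₀ ≠ 0 ∧ ∀ e, |z e| ≤ 1 ∧ (k ∣ y e → z e = 0) := by
  classical
  let A : Set (E × Bool) := {a | ¬ k ∣ y a.1 ∧ a.1 ≠ e₀}
  let R : Finset V := Finset.univ.filter (PathReach (double G) A (G.head e₀))
  have hR : ∀ v, v ∈ R ↔ PathReach (double G) A (G.head e₀) v := fun v => by simp [R]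
  have hstep : ∀ e, ¬ k ∣ y e → e ≠ e₀ → (G.tail e ∈ R ↔ G.head e ∈ R) := by
    intro e h1 h2
    rw [hR, hR]
    constructor
    · exact fun h => PathReach.step (G := double G) (a := (e, true)) ⟨h1, h2⟩ h
    · exact fun h => PathReach.step (G := double G) (a := (e, false)) ⟨h1, h2⟩ h
  have hhead : G.head e₀ ∈ R := (hR _).2 (PathReach.refl _ _ _)
  by_cases ht : G.tail e₀ ∈ R
  · obtain ⟨es, h1, h2, h3⟩ := (hR _).1 ht
    have h2' : (((e₀, true) :: es).map (double G).head).Nodup := h2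
    have hwalk : (double G).IsWalkFrom (G.tail e₀) (G.tail e₀) ((e₀, true) :: es) := ⟨rfl, h1⟩
    have hnd := h2'.of_map
    have hle : ∀ a, ((e₀, true) :: es).count a ≤ 1 := List.nodup_iff_count_le_one.1 hnd
    refine ⟨fun e => (((e₀, true) :: es).count (e, true) : ℤ) -
      (((e₀, true) :: es).count (e, false) : ℤ),
      IsFlow_of_double (IsFlow_count (double G) hwalk), ?_, fun e => ⟨?_, ?_⟩⟩
    · have h4 : ((e₀, true) :: es).count (e₀, true) = 1 :=
        List.count_eq_one_of_mem hnd (by simp)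
      have h5 : ((e₀, true) :: es).count (e₀, false) = 0 := by
        rw [List.count_eq_zero]
        intro hmem
        rcases List.mem_cons.1 hmem with h | h
        · simp at h
        · exact (h3 _ h).2 rfl
      simp only [h4, h5]
      norm_num
    · have h4 := hle (e, true)
      have h5 := hle (e, false)
      simp only
      rw [abs_le]
      omega
    · intro hdvd
      have h6 : ∀ b, ((e₀, true) :: es).count (e, b) = 0 := by
        intro b
        rw [List.count_eq_zero]
        intro hmem
        rcases List.mem_cons.1 hmem with h | h
        · have : e = e₀ := congrArg Prod.fst h
          exact he₀ (this ▸ hdvd)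
        · exact (h3 _ h).1 hdvd
      simp only [h6]
      norm_num
  · exfalso
    have hcut := IsFlow_cut hy R
    rw [← sub_eq_zero, ← Finset.sum_sub_distrib,
      ← Finset.add_sum_erase _ _ (Finset.mem_univ e₀), if_pos hhead, if_neg ht] at hcut
    have hdvd : k ∣ ∑ e ∈ Finset.univ.erase e₀,
        ((if G.head e ∈ R then y e else 0) - (if G.tail e ∈ R then y e else 0)) := by
      refine Finset.dvd_sum fun e he => ?_
      by_cases hk : k ∣ y e
      · split_ifs <;> simp [hk]
      · have := hstep e hk (Finset.ne_of_mem_erase he)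
        simp [this]
    refine he₀ ?_
    have h7 : y e₀ = - ∑ e ∈ Finset.univ.erase e₀,
        ((if G.head e ∈ R then y e else 0) - (if G.tail e ∈ R then y e else 0)) := by
      linarith
    rw [h7]
    exact (dvd_neg).2 hdvd

/-- Integrality of the circulation polytope: the smallest face of `[0, k]`-valued flows containing `x`
contains `k` times a `0/1`-flow. -/
lemma exists_zero_one_flow [Fintype V] {G : Multigraph V E} {x : E → ℤ} (hx : G.IsFlow x) {k : ℤ}
    (hk : 0 < k) (h : ∀ e, 0 ≤ x e ∧ x e ≤ k) :
    ∃ v : E → ℤ, G.IsFlow v ∧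
      ∀ e, (v e = 0 ∨ v e = 1) ∧ (x e = 0 → v e = 0) ∧ (x e = k → v e = 1) := by
  classical
  let Y : Set (E → ℤ) := {y | G.IsFlow y ∧
    ∀ e, (0 ≤ y e ∧ y e ≤ k) ∧ (x e = 0 → y e = 0) ∧ (x e = k → y e = k)}
  have hfin : Y.Finite := (Set.finite_Icc (fun _ => 0) (fun _ => k)).subset
    fun y hy => ⟨fun e => (hy.2 e).1.1, fun e => (hy.2 e).1.2⟩
  -- A maximiser of the strictly convex function `∑ y²` is a vertex: it cannot be the midpoint of
  -- `y + z` and `y - z` with `z` a cycle flow.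
  obtain ⟨y, hy, hmax⟩ := Set.exists_max_image Y (fun y => ∑ e, y e ^ 2) hfin
    ⟨x, hx, fun e => ⟨h e, id, id⟩⟩
  have hdvd : ∀ e, k ∣ y e := by
    by_contra! hcon
    obtain ⟨e₀, he₀⟩ := hcon
    obtain ⟨z, hz, hz0, hz1⟩ := exists_cycle_flow hy.1 he₀
    have hmem : ∀ c : ℤ, (c = 1 ∨ c = -1) → y + c • z ∈ Y := by
      intro c hc
      refine ⟨IsFlow.add hy.1 (IsFlow.smul c hz), fun e => ?_⟩
      obtain ⟨⟨h1, h2⟩, h3, h4⟩ := hy.2 e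
      obtain ⟨h5, h6⟩ := hz1 e
      rw [abs_le] at h5
      simp only [Pi.add_apply, Pi.smul_apply, smul_eq_mul]
      by_cases hd : k ∣ y e
      · rw [h6 hd, mul_zero, add_zero]
        exact ⟨⟨h1, h2⟩, h3, h4⟩
      · have hne0 : y e ≠ 0 := fun h => hd (by simp [h])
        have hnek : y e ≠ k := fun h => hd (by simp [h])
        refine ⟨?_, fun h => absurd (h3 h) hne0, fun h => absurd (h4 h) hnek⟩
        rcases hc with rfl | rfl <;> omega
    have hp := hmax _ (hmem 1 (Or.inl rfl))
    have hn := hmax _ (hmem (-1) (Or.inr rfl))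
    have hpar : ∑ e, (y + (1 : ℤ) • z) e ^ 2 + ∑ e, (y + (-1 : ℤ) • z) e ^ 2 =
        2 * ∑ e, y e ^ 2 + 2 * ∑ e, z e ^ 2 := by
      rw [Finset.mul_sum, Finset.mul_sum, ← Finset.sum_add_distrib, ← Finset.sum_add_distrib]
      refine Finset.sum_congr rfl fun e _ => ?_
      simp only [Pi.add_apply, Pi.smul_apply, smul_eq_mul]
      ring
    have hpos : 0 < ∑ e, z e ^ 2 :=
      Finset.sum_pos' (fun e _ => sq_nonneg _) ⟨e₀, Finset.mem_univ _, by positivity⟩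
    linarith
  choose v hv using hdvd
  refine ⟨v, ?_, fun e => ?_⟩
  · intro w
    have h1 := hy.1 w
    have key : ∀ p : E → V, ∑ e, (if p e = w then y e else 0) =
        k * ∑ e, (if p e = w then v e else 0) := by
      intro p
      rw [Finset.mul_sum]
      exact Finset.sum_congr rfl fun e _ => by rw [hv e]; split_ifs <;> simp
    rw [key, key] at h1
    exact mul_left_cancel₀ hk.ne' h1
  · obtain ⟨⟨h1, h2⟩, h3, h4⟩ := hy.2 e
    rw [hv e] at h1 h2 h3 h4
    have h5 : 0 ≤ v e := by nlinarith
    have h6 : v e ≤ 1 := by nlinarith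
    refine ⟨by omega, fun hx0 => ?_, fun hxk => ?_⟩
    · have := h3 hx0
      rcases mul_eq_zero.1 this with h | h
      · omega
      · exact h
    · have := h4 hxk
      exact mul_left_cancel₀ hk.ne' (by linarith)

lemma isFlow_reorient {H : Multigraph V E} {ε : E → ℤ} (hε : IsOrientation ε) (x : E → ℤ) :
    (H.reorient ε).IsFlow (fun e => ε e * x e) ↔ H.IsFlow x := by
  refine forall_congr' fun v => ?_
  rw [← sub_eq_zero, ← sub_eq_zero (b := ∑ e, if H.tail e = v then x e else 0),
    ← Finset.sum_sub_distrib, ← Finset.sum_sub_distrib]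
  refine Eq.congr_left (Finset.sum_congr rfl fun e _ => ?_)
  rcases hε e with h | h
  · simp [reorient, h]
  · simp only [reorient, h]
    norm_num
    split_ifs <;> simp
end FlowRecip

namespace FlowRecip
open Polynomial Module Multigraph

/-! ### The cone of flows in a totally cyclic orientation -/

/-- A lattice point `x` in the interior of a cone can be moved to a generic real interior point, by
adding `∑ t ^ (i + 1) • b i` for a basis `b` and a small transcendental `t`. -/
lemma exists_generic_pos {L : Type} [AddCommGroup L] [Module.Free ℤ L] [Module.Finite ℤ L]
    (Φ : Finset (Dual ℤ L)) (x : L) (hx : ∀ f ∈ Φ, 0 < f x) :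
    ∃ q : Dual ℤ L →+ ℝ, Function.Injective q ∧ ∀ f ∈ Φ, 0 < q f := by
  classical
  let b := Module.finBasis ℤ L
  let r : Dual ℤ L → ℝ → ℝ := fun f t => (f x : ℝ) + ∑ i, (f (b i) : ℝ) * t ^ ((i : ℕ) + 1)
  have hr : ∀ f, Continuous (r f) := fun f => by fun_prop
  let U : Set ℝ := ⋂ f ∈ Φ, {t | 0 < r f t}
  have hU : IsOpen U := isOpen_biInter_finset fun f _ => isOpen_lt continuous_const (hr f)
  have hne : U.Nonempty := by
    refine ⟨0, ?_⟩
    simp only [U, Set.mem_iInter]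
    intro f hf
    have : (0 : ℝ) < f x := by exact_mod_cast hx f hf
    simpa [r] using this
  have hdense : Dense {t : ℝ | IsAlgebraic ℤ t}ᶜ :=
    (Algebraic.countable ℤ ℝ).dense_compl ℝ
  obtain ⟨t, htU, ht⟩ := hdense.inter_open_nonempty U hU hne
  refine ⟨⟨⟨fun f => r f t, by simp [r]⟩, fun f g => ?_⟩, ?_, fun f hf => ?_⟩
  · simp only [r, LinearMap.add_apply, Int.cast_add, add_mul, Finset.sum_add_distrib]
    ring
  · rw [injective_iff_map_eq_zero]
    intro f hf
    have hf : r f t = 0 := hf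
    let P : ℤ[X] := C (f x) + ∑ i, C (f (b i)) * X ^ ((i : ℕ) + 1)
    have hP : aeval t P = 0 := by
      rw [← hf]
      simp [P, r]
    have hP0 : P = 0 := by
      by_contra h0
      exact ht ⟨P, h0, hP⟩
    apply b.ext
    intro i
    have := congrArg (fun p => coeff p ((i : ℕ) + 1)) hP0
    simp only [P, coeff_add, finsetSum_coeff, coeff_C_mul, coeff_X_pow, coeff_C_succ,
      coeff_zero, zero_add] at this
    simpa [Fin.val_inj] using this
  · simp only [U, Set.mem_iInter] at htU
    exact htU f hf

variable {V E : Type}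

lemma orientation_sq {ε : E → ℤ} (hε : IsOrientation ε) (e : E) : ε e * ε e = 1 := by
  rcases hε e with h | h <;> simp [h]

variable [Fintype E] [DecidableEq V]

/-- The lattice of pairs `(x, k)` of an integral flow `x` and a level `k : ℤ`. -/
def flowCone (H : Multigraph V E) : Submodule ℤ ((E → ℤ) × ℤ) where
  carrier := {p | H.IsFlow p.1}
  add_mem' ha hb := IsFlow.add ha hb
  zero_mem' := IsFlow_zero H
  smul_mem' c _ ha := IsFlow.smul c ha

/-- The functional `(x, k) ↦ k`. -/
def level (H : Multigraph V E) : Dual ℤ (flowCone H) :=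
  (LinearMap.snd ℤ (E → ℤ) ℤ).comp (flowCone H).subtype

/-- The functional `(x, k) ↦ ε e * x e`. -/
def edgeVal (H : Multigraph V E) (ε : E → ℤ) (e : E) : Dual ℤ (flowCone H) :=
  ε e • (LinearMap.proj e ∘ₗ LinearMap.fst ℤ (E → ℤ) ℤ ∘ₗ (flowCone H).subtype)

open Classical in
/-- The functionals defining the cone `0 ≤ ε e * x e ≤ k`. The level itself is included so that the
cone lies in nonnegative levels even when there are no edges. -/
noncomputable def boxFamily (H : Multigraph V E) (ε : E → ℤ) : Finset (Dual ℤ (flowCone H)) :=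
  insert (level H) (Finset.univ.image (edgeVal H ε) ∪
    Finset.univ.image (fun e => level H - edgeVal H ε e))

lemma level_apply (H : Multigraph V E) (x : flowCone H) : level H x = x.1.2 := rfl

lemma edgeVal_apply (H : Multigraph V E) (ε : E → ℤ) (e : E) (x : flowCone H) :
    edgeVal H ε e x = ε e * x.1.1 e := rfl

lemma forall_boxFamily (H : Multigraph V E) (ε : E → ℤ) (p : Dual ℤ (flowCone H) → Prop) :
    (∀ f ∈ boxFamily H ε, p f) ↔
      p (level H) ∧ ∀ e, p (edgeVal H ε e) ∧ p (level H - edgeVal H ε e) := by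
  simp only [boxFamily, Finset.forall_mem_insert, Finset.forall_mem_union,
    Finset.forall_mem_image, Finset.mem_univ, true_imp_iff, forall_and]

lemma compressed_boxFamily [Fintype V] (H : Multigraph V E) {ε : E → ℤ} (hε : IsOrientation ε) :
    Compressed (boxFamily H ε) (level H) := by
  classical
  refine ⟨fun x hx => ((forall_boxFamily H ε _).1 hx).1, fun k => ?_, fun x hx0 hx => ?_⟩
  · refine Set.Finite.of_finite_image (f := Subtype.val) ?_ Subtype.val_injective.injOn
    refine ((Set.finite_Icc (fun _ : E => -k) (fun _ => k)).prod (Set.finite_singleton k)).subset ?_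
    rintro _ ⟨x, ⟨hl, hx⟩, rfl⟩
    rw [forall_boxFamily] at hx
    have hb : ∀ e, -k ≤ x.1.1 e ∧ x.1.1 e ≤ k := by
      intro e
      have h1 := hx.2 e
      simp only [LinearMap.sub_apply, hl, edgeVal_apply] at h1
      rcases hε e with h | h <;> rw [h] at h1 <;> omega
    exact ⟨⟨fun e => (hb e).1, fun e => (hb e).2⟩, hl⟩
  · rw [forall_boxFamily] at hx
    simp only [LinearMap.sub_apply, level_apply, edgeVal_apply] at hx
    have hk : 0 < x.1.2 := by
      refine lt_of_le_of_ne hx.1 fun h0 => hx0 ?_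
      apply Subtype.ext
      refine Prod.ext (funext fun e => ?_) h0.symm
      have h1 := hx.2 e
      change x.1.1 e = 0
      rcases hε e with h | h <;> rw [h] at h1 <;> omega
    obtain ⟨w, hw, hw'⟩ := exists_zero_one_flow ((isFlow_reorient hε _).2 x.2) hk
      (fun e => ⟨(hx.2 e).1, by have := (hx.2 e).2; omega⟩)
    have hv : ∀ e, ε e * (ε e * w e) = w e := fun e => by
      rw [← mul_assoc, orientation_sq hε, one_mul]
    refine ⟨⟨(fun e => ε e * w e, 1), ?_⟩, rfl, ?_⟩
    · change H.IsFlow _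
      rw [← isFlow_reorient hε]
      simpa only [hv] using hw
    · rw [forall_boxFamily]
      simp only [LinearMap.sub_apply, level_apply, edgeVal_apply, hv]
      refine ⟨⟨Or.inr trivial, fun h => absurd h hk.ne'⟩, fun e => ?_⟩
      obtain ⟨h1, h2, h3⟩ := hw' e
      refine ⟨⟨h1, h2⟩, by omega, fun h => ?_⟩
      rw [h3 (by omega)]; rfl

/-- Flows with `0 < ε e * x e < k` on every edge. -/
def openFlows (H : Multigraph V E) (ε : E → ℤ) (k : ℤ) : Set (E → ℤ) :=
  {x | H.IsFlow x ∧ ∀ e, 0 < ε e * x e ∧ ε e * x e < k}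

/-- Flows with `0 ≤ ε e * x e ≤ k` on every edge. -/
def closedFlows (H : Multigraph V E) (ε : E → ℤ) (k : ℤ) : Set (E → ℤ) :=
  {x | H.IsFlow x ∧ ∀ e, 0 ≤ ε e * x e ∧ ε e * x e ≤ k}

/-- Ehrhart reciprocity for the polytope of flows of one totally cyclic orientation. The sign does not
depend on the orientation. -/
lemma exists_orientation_poly [Fintype V] (H : Multigraph V E) {ε : E → ℤ} (hε : IsOrientation ε)
    (hc : (H.reorient ε).IsTotallyCyclic) :
    ∃ P : ℚ[X], (∀ k : ℕ, 1 ≤ k → P.eval (k : ℚ) = (openFlows H ε k).ncard) ∧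
      ∀ k : ℕ, P.eval (-(k : ℚ)) =
        -(-1) ^ finrank ℤ (flowCone H) * (closedFlows H ε k).ncard := by
  classical
  have hC := compressed_boxFamily H hε
  -- Total cyclicity makes the cone full-dimensional, so a generic point `q` in its interior exists.
  obtain ⟨y, hy, hy0⟩ := exists_pos_flow hc
  have hv : ∀ e, ε e * (ε e * y e) = y e := fun e => by
    rw [← mul_assoc, orientation_sq hε, one_mul]
  have hyle : ∀ e, y e ≤ ∑ a, y a := fun e =>
    Finset.single_le_sum (fun a _ => (hy0 a).le) (Finset.mem_univ e)
  have hys : 0 ≤ ∑ a, y a := Finset.sum_nonneg fun a _ => (hy0 a).le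
  let x : flowCone H := ⟨(fun e => ε e * y e, ∑ a, y a + 1), by
    change H.IsFlow _
    rw [← isFlow_reorient hε]
    simpa only [hv] using hy⟩
  have hx : ∀ f ∈ boxFamily H ε, 0 < f x := by
    rw [forall_boxFamily]
    simp only [LinearMap.sub_apply, level_apply, edgeVal_apply, x, hv]
    exact ⟨by omega, fun e => ⟨hy0 e, by have := hyle e; omega⟩⟩
  obtain ⟨q, hq, hqpos⟩ := exists_generic_pos _ x hx
  obtain ⟨P, hP⟩ := cone_reciprocity _ (flowCone H) rfl _ _ hC (-q) (neg_injective.comp hq)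
  rw [neg_neg] at hP
  have hopen : ∀ k : ℤ, 1 ≤ k →
      (Slice (boxFamily H ε) (level H) (-q) k).ncard = (openFlows H ε k).ncard := by
    intro k hk
    refine Set.ncard_congr (fun x _ => x.1.1) ?_ ?_ ?_
    · rintro x ⟨hl, hx⟩
      have hx' : ∀ f ∈ boxFamily H ε, 0 < f x := fun f hf =>
        (hx f hf).resolve_right fun h => (neg_nonneg.1 h.2).not_gt (hqpos f hf)
      rw [forall_boxFamily] at hx'
      simp only [LinearMap.sub_apply, hl, edgeVal_apply, sub_pos] at hx'
      exact ⟨x.2, hx'.2⟩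
    · rintro a b ⟨ha, -⟩ ⟨hb, -⟩ hab
      exact Subtype.ext (Prod.ext hab (ha.trans hb.symm))
    · rintro z ⟨hz, hz'⟩
      refine ⟨⟨(z, k), hz⟩, ⟨rfl, fun f hf => Or.inl ?_⟩, rfl⟩
      revert f
      rw [forall_boxFamily]
      simp only [LinearMap.sub_apply, level_apply, edgeVal_apply, sub_pos]
      exact ⟨by omega, hz'⟩
  have hopen0 : ∀ k : ℤ, k ≤ 0 → Slice (boxFamily H ε) (level H) (-q) k = ∅ := by
    intro k hk
    ext x
    simp only [Set.mem_empty_iff_false, iff_false]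
    rintro ⟨hl, hx⟩
    rw [forall_boxFamily] at hx
    have h1 := hx.1.resolve_right fun h => (neg_nonneg.1 h.2).not_gt
      (((forall_boxFamily H ε _).1 hqpos).1)
    omega
  have hclosed : ∀ k : ℤ, 0 ≤ k →
      (Slice (boxFamily H ε) (level H) q k).ncard = (closedFlows H ε k).ncard := by
    intro k hk
    refine Set.ncard_congr (fun x _ => x.1.1) ?_ ?_ ?_
    · rintro x ⟨hl, hx⟩
      have hx' : ∀ f ∈ boxFamily H ε, 0 ≤ f x := fun f hf => (hx f hf).nonneg
      rw [forall_boxFamily] at hx'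
      simp only [LinearMap.sub_apply, hl, edgeVal_apply, sub_nonneg] at hx'
      exact ⟨x.2, hx'.2⟩
    · rintro a b ⟨ha, -⟩ ⟨hb, -⟩ hab
      exact Subtype.ext (Prod.ext hab (ha.trans hb.symm))
    · rintro z ⟨hz, hz'⟩
      have : ∀ f ∈ boxFamily H ε, 0 ≤ f (⟨(z, k), hz⟩ : flowCone H) := by
        rw [forall_boxFamily]
        simp only [LinearMap.sub_apply, level_apply, edgeVal_apply, sub_nonneg]
        exact ⟨hk, hz'⟩
      refine ⟨⟨(z, k), hz⟩, ⟨rfl, fun f hf => ?_⟩, rfl⟩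
      rcases (this f hf).lt_or_eq with h | h
      · exact Or.inl h
      · exact Or.inr ⟨h.symm, (hqpos f hf).le⟩
  refine ⟨P, fun k hk => ?_, fun k => ?_⟩
  · have h := hP k
    rw [hopen k (by omega), hC.slice_neg q (by omega : -(k : ℤ) < 0)] at h
    simpa using h
  · have h := hP (-k)
    rw [neg_neg, hopen0 _ (by omega), hclosed k (by omega)] at h
    simpa using h

/-! ### Counting over all totally cyclic orientations -/

/-- The totally cyclic orientations of `H`. -/
def TCOrientation (H : Multigraph V E) : Type :=
  {ε : E → ℤ // IsOrientation ε ∧ (H.reorient ε).IsTotallyCyclic}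

instance (H : Multigraph V E) : Finite (TCOrientation H) := by
  classical
  have : Set.Finite {ε : E → ℤ | IsOrientation ε ∧ (H.reorient ε).IsTotallyCyclic} := by
    refine (Set.finite_Icc (fun _ : E => (-1 : ℤ)) (fun _ => 1)).subset ?_
    rintro ε ⟨h, -⟩
    exact ⟨fun e => by rcases h e with h | h <;> simp [h],
      fun e => by rcases h e with h | h <;> simp [h]⟩
  exact this.to_subtype

lemma closedFlows_finite (H : Multigraph V E) {ε : E → ℤ} (hε : IsOrientation ε) (k : ℤ) :
    (closedFlows H ε k).Finite := by
  classical
  refine (Set.finite_Icc (fun _ : E => -k) (fun _ => k)).subset ?_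
  rintro x ⟨-, hx⟩
  have hb : ∀ e, -k ≤ x e ∧ x e ≤ k := fun e => by
    have h1 := hx e
    rcases hε e with h | h <;> rw [h] at h1 <;> omega
  exact ⟨fun e => (hb e).1, fun e => (hb e).2⟩

lemma openFlows_finite (H : Multigraph V E) {ε : E → ℤ} (hε : IsOrientation ε) (k : ℤ) :
    (openFlows H ε k).Finite :=
  (closedFlows_finite H hε k).subset fun _ hx => ⟨hx.1, fun e => ⟨(hx.2 e).1.le, (hx.2 e).2.le⟩⟩

/-- The signs of a nowhere-zero flow form a totally cyclic orientation, the only one compatible with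
the flow. -/
lemma card_nowhereZero [Fintype V] (H : Multigraph V E) [Fintype (TCOrientation H)] (k : ℕ) :
    Nat.card {x : E → ℤ // H.IsFlow x ∧ (∀ e, |x e| < (k : ℤ)) ∧ ∀ e, x e ≠ 0} =
      ∑ ε : TCOrientation H, (openFlows H ε.1 k).ncard := by
  have hfin : ∀ ε : TCOrientation H, Finite (openFlows H ε.1 k) := fun ε =>
    (openFlows_finite H ε.2.1 k).to_subtype
  rw [show ∑ ε : TCOrientation H, (openFlows H ε.1 k).ncard =
    Nat.card (Σ ε : TCOrientation H, openFlows H ε.1 k) from Nat.card_sigma.symm]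
  symm
  refine Nat.card_congr (Equiv.ofBijective
    (fun p => ⟨p.2.1, p.2.2.1, fun e => ?_, fun e h0 => ?_⟩) ⟨?_, ?_⟩)
  · have := p.2.2.2 e
    rw [abs_lt]
    rcases p.1.2.1 e with h | h <;> rw [h] at this <;> omega
  · have := (p.2.2.2 e).1
    rw [h0, mul_zero] at this
    exact lt_irrefl _ this
  · rintro ⟨ε, x, hx⟩ ⟨ε', x', hx'⟩ h
    obtain rfl : x = x' := congrArg Subtype.val h
    obtain rfl : ε = ε' := by
      apply Subtype.ext
      funext e
      have h1 := (hx.2 e).1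
      have h2 := (hx'.2 e).1
      rcases ε.2.1 e with h | h <;> rcases ε'.2.1 e with h' | h' <;> rw [h] at h1 ⊢ <;>
        rw [h'] at h2 ⊢ <;> omega
    rfl
  · rintro ⟨x, hx, hk, h0⟩
    have hsign : ∀ e, (x e).sign * x e = |x e| := fun e => Int.sign_mul_self_eq_abs _
    have hor : IsOrientation (fun e => (x e).sign) := by
      intro e
      rcases lt_or_gt_of_ne (h0 e) with h | h
      · right; exact Int.sign_eq_neg_one_of_neg h
      · left; exact Int.sign_eq_one_of_pos h
    have hpos : ∀ e, 0 < (x e).sign * x e := fun e => by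
      rw [hsign]; exact abs_pos.2 (h0 e)
    refine ⟨⟨⟨fun e => (x e).sign, hor, fun e => ?_⟩,
      ⟨x, hx, fun e => ⟨hpos e, by simpa only [hsign] using hk e⟩⟩⟩, rfl⟩
    exact onCycle_of_flow ((isFlow_reorient hor x).2 hx) (fun e => (hpos e).le) (hpos e)

lemma card_pairs (H : Multigraph V E) [Fintype (TCOrientation H)] (k : ℕ) :
    Nat.card {q : (E → ℤ) × (E → ℤ) //
          H.IsFlow q.1 ∧ (∀ e, |q.1 e| < (k : ℤ) + 1) ∧
          IsOrientation q.2 ∧ (H.reorient q.2).IsTotallyCyclic ∧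
          ∀ e, (0 < q.1 e → q.2 e = 1) ∧ (q.1 e < 0 → q.2 e = -1)} =
      ∑ ε : TCOrientation H, (closedFlows H ε.1 k).ncard := by
  have hfin : ∀ ε : TCOrientation H, Finite (closedFlows H ε.1 k) := fun ε =>
    (closedFlows_finite H ε.2.1 k).to_subtype
  rw [show ∑ ε : TCOrientation H, (closedFlows H ε.1 k).ncard =
    Nat.card (Σ ε : TCOrientation H, closedFlows H ε.1 k) from Nat.card_sigma.symm]
  refine Nat.card_congr (Equiv.mk
    (fun q => ⟨⟨q.1.2, q.2.2.2.1, q.2.2.2.2.1⟩, ⟨q.1.1, q.2.1, fun e => ?_⟩⟩)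
    (fun p => ⟨(p.2.1, p.1.1), p.2.2.1, fun e => ?_, p.1.2.1, p.1.2.2, fun e => ?_⟩)
    (fun _ => rfl) (fun _ => rfl))
  · obtain ⟨-, h1, h2, -, h3⟩ := q.2
    have h1 := abs_lt.1 (h1 e)
    have h3 := h3 e
    rcases h2 e with h | h <;> simp only [h] at h3 ⊢ <;> omega
  · have := p.2.2.2 e
    rw [abs_lt]
    rcases p.1.2.1 e with h | h <;> rw [h] at this <;> simp only <;> omega
  · have := p.2.2.2 e
    rcases p.1.2.1 e with h | h <;> rw [h] at this <;>
      exact ⟨fun h' => by simp only at h' ⊢; omega, fun h' => by simp only at h' ⊢; omega⟩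

lemma closedFlows_zero (H : Multigraph V E) {ε : E → ℤ} (hε : IsOrientation ε) :
    closedFlows H ε 0 = {0} := by
  ext x
  rw [Set.mem_singleton_iff]
  constructor
  · rintro ⟨-, hx⟩
    funext e
    have h1 := hx e
    change x e = 0
    rcases hε e with h | h <;> rw [h] at h1 <;> omega
  · rintro rfl
    exact ⟨IsFlow_zero H, by simp⟩

lemma poly_unique {p p' : ℚ[X]} (h : ∀ k : ℕ, 1 ≤ k → p.eval (k : ℚ) = p'.eval (k : ℚ)) :
    p = p' := by
  refine Polynomial.eq_of_infinite_eval_eq p p' ?_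
  have : Set.Infinite ((fun k : ℕ => (k : ℚ)) '' Set.Ici 1) :=
    (Set.Ici_infinite 1).image Nat.cast_injective.injOn
  refine this.mono ?_
  rintro _ ⟨k, hk, rfl⟩
  exact h k hk

end FlowRecip

open Multigraph in
/-- reciprocity for the integral flow polynomial. There is a unique polynomial
`p` with `p(k) = #` nowhere-zero integral `k`-flows for all `k ≥ 1`; for it, `|p(-k)|`
counts pairs of an integral `(k+1)`-flow together with a compatible totally cyclic
orientation, and `|p(0)|` counts totally cyclic orientations. -/
theorem integral_flow_reciprocity (V E : Type) [Fintype V] [Fintype E] [DecidableEq V]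
    (H : Multigraph V E) :
    (∃! p : Polynomial ℚ, ∀ k : ℕ, 1 ≤ k →
        p.eval (k : ℚ) = Nat.card {x : E → ℤ //
          H.IsFlow x ∧ (∀ e, |x e| < (k : ℤ)) ∧ ∀ e, x e ≠ 0}) ∧
    ∀ p : Polynomial ℚ,
      (∀ k : ℕ, 1 ≤ k →
        p.eval (k : ℚ) = Nat.card {x : E → ℤ //
          H.IsFlow x ∧ (∀ e, |x e| < (k : ℤ)) ∧ ∀ e, x e ≠ 0}) →
      (∀ k : ℕ, |p.eval (-(k : ℚ))| =
        Nat.card {q : (E → ℤ) × (E → ℤ) //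
          H.IsFlow q.1 ∧ (∀ e, |q.1 e| < (k : ℤ) + 1) ∧
          IsOrientation q.2 ∧ (H.reorient q.2).IsTotallyCyclic ∧
          ∀ e, (0 < q.1 e → q.2 e = 1) ∧ (q.1 e < 0 → q.2 e = -1)}) ∧
      |p.eval 0| =
        Nat.card {ε : E → ℤ // IsOrientation ε ∧ (H.reorient ε).IsTotallyCyclic} := by
  classical
  have : Fintype (FlowRecip.TCOrientation H) := Fintype.ofFinite _
  choose P hP1 hP2 using fun ε : FlowRecip.TCOrientation H =>
    FlowRecip.exists_orientation_poly H ε.2.1 ε.2.2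
  have hP : ∀ k : ℕ, 1 ≤ k → (∑ ε, P ε).eval (k : ℚ) = Nat.card {x : E → ℤ //
      H.IsFlow x ∧ (∀ e, |x e| < (k : ℤ)) ∧ ∀ e, x e ≠ 0} := by
    intro k hk
    rw [Polynomial.eval_finsetSum, FlowRecip.card_nowhereZero]
    push_cast
    exact Finset.sum_congr rfl fun ε _ => hP1 ε k hk
  have habs : ∀ k : ℕ, |(∑ ε, P ε).eval (-(k : ℚ))| =
      ((∑ ε : FlowRecip.TCOrientation H, (FlowRecip.closedFlows H ε.1 k).ncard : ℕ) : ℚ) := by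
    intro k
    rw [Polynomial.eval_finsetSum, Finset.sum_congr rfl fun ε _ => hP2 ε k, ← Finset.mul_sum,
      abs_mul, abs_neg, abs_pow, abs_neg, abs_one, one_pow, one_mul]
    push_cast
    exact abs_of_nonneg (by positivity)
  refine ⟨⟨∑ ε, P ε, hP, fun p hp => FlowRecip.poly_unique fun k hk => ?_⟩, fun p hp => ?_⟩
  · rw [hp k hk, hP k hk]
  · obtain rfl : p = ∑ ε, P ε :=
      FlowRecip.poly_unique fun k hk => by rw [hp k hk, hP k hk]
    refine ⟨fun k => ?_, ?_⟩
    · rw [habs, FlowRecip.card_pairs]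
    · have h0 := habs 0
      rw [Nat.cast_zero, neg_zero] at h0
      rw [h0]
      congr 1
      have : ∀ ε : FlowRecip.TCOrientation H,
          (FlowRecip.closedFlows H ε.1 (0 : ℕ)).ncard = 1 := fun ε => by
        rw [Nat.cast_zero, FlowRecip.closedFlows_zero H ε.2.1, Set.ncard_singleton]
      rw [Finset.sum_congr rfl fun ε _ => this ε]
      simp only [Finset.sum_const, smul_eq_mul, mul_one, Finset.card_univ]
      exact Nat.card_eq_fintype_card.symm
end

section
/- Let W be a linear subspace of ℝⁿ and set A = W \ ⋃_{i=1}^{n} { z ∈ W : z_i = 0 }. Then the map R ↦ R ∩ (−1,1)ⁿ is a bijection from the set of connected components of A onto the set of connected components of A ∩ (−1,1)ⁿ; in particular, every connected component of A has nonempty connected intersection with the open cube (−1,1)ⁿ. -/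
/-- The points of `W` whose coordinates all have the same strict sign as those of `x`; it is empty
when some coordinate of `x` vanishes. -/
def signCell {n : ℕ} (W : Submodule ℝ (Fin n → ℝ)) (x : Fin n → ℝ) : Set (Fin n → ℝ) :=
  {z | z ∈ W ∧ ∀ i, 0 < z i * x i}

theorem convex_signCell {n : ℕ} (W : Submodule ℝ (Fin n → ℝ)) (x : Fin n → ℝ) :
    Convex ℝ (signCell W x) := by
  refine convex_iff_forall_pos.2 ?_
  rintro y ⟨hyW, hy⟩ z ⟨hzW, hz⟩ a b ha hb -
  refine ⟨W.add_mem (W.smul_mem a hyW) (W.smul_mem b hzW), fun i => ?_⟩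
  have h : (a • y + b • z) i * x i = a * (y i * x i) + b * (z i * x i) := by
    simp only [Pi.add_apply, Pi.smul_apply, smul_eq_mul]
    ring
  rw [h]
  exact add_pos (mul_pos ha (hy i)) (mul_pos hb (hz i))

theorem signCell_smul {n : ℕ} (W : Submodule ℝ (Fin n → ℝ)) (x : Fin n → ℝ) {t : ℝ}
    (ht : 0 < t) : signCell W (t • x) = signCell W x := by
  ext z
  refine and_congr_right fun _ => forall_congr' fun i => ?_
  rw [Pi.smul_apply, smul_eq_mul, mul_left_comm]
  exact mul_pos_iff_of_pos_left ht

/-- Inside a convex set `D`, the component of `x` in the complement of the coordinate hyperplanes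
of `W` is its sign cell cut by `D`. -/
theorem connectedComponentIn_inter_eq {n : ℕ} (W : Submodule ℝ (Fin n → ℝ))
    {D : Set (Fin n → ℝ)} (hD : Convex ℝ D) {x : Fin n → ℝ}
    (hx : x ∈ {z | z ∈ W ∧ ∀ i, z i ≠ 0} ∩ D) :
    connectedComponentIn ({z | z ∈ W ∧ ∀ i, z i ≠ 0} ∩ D) x = signCell W x ∩ D := by
  apply Set.Subset.antisymm
  · intro z hz
    have hzA := connectedComponentIn_subset _ _ hz
    refine ⟨⟨hzA.1.1, fun i => ?_⟩, hzA.2⟩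
    by_contra! hneg
    -- `w ↦ w i * x i` is positive at `x`, so it would vanish somewhere on the component.
    obtain ⟨w, hw, hw0⟩ := isPreconnected_connectedComponentIn.intermediate_value hz
      (mem_connectedComponentIn hx)
      (f := fun w : Fin n → ℝ => w i * x i) (by fun_prop)
      ⟨hneg, mul_self_nonneg (x i)⟩
    exact mul_ne_zero ((connectedComponentIn_subset _ _ hw).1.2 i) (hx.1.2 i) hw0
  · refine ((convex_signCell W x).inter hD).isPreconnected.subset_connectedComponentIn
      ⟨⟨hx.1.1, fun i => mul_self_pos.2 (hx.1.2 i)⟩, hx.2⟩ ?_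
    rintro z ⟨⟨hzW, hz⟩, hzD⟩
    exact ⟨⟨hzW, fun i => left_ne_zero_of_mul (hz i).ne'⟩, hzD⟩

theorem exists_pos_smul_mem_cube {n : ℕ} (x : Fin n → ℝ) :
    ∃ t : ℝ, 0 < t ∧ ∀ i, -1 < (t • x) i ∧ (t • x) i < 1 := by
  have hpos : 0 < 1 + ‖x‖ := by positivity
  refine ⟨(1 + ‖x‖)⁻¹, inv_pos.2 hpos, fun i => abs_lt.1 ?_⟩
  have hi : |x i| ≤ ‖x‖ := norm_le_pi_norm x i
  rw [Pi.smul_apply, smul_eq_mul, abs_mul, abs_of_pos (inv_pos.2 hpos), inv_mul_lt_one₀ hpos]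
  linarith

/-- for `A = W \ ⋃ᵢ {z ∈ W : zᵢ = 0}`, the map `R ↦ R ∩ (-1,1)ⁿ` is a bijection
from the connected components of `A` onto those of `A ∩ (-1,1)ⁿ`; in particular each
component of `A` meets the open cube in a nonempty connected set. -/
theorem components_restrict_to_cube (n : ℕ) (W : Submodule ℝ (Fin n → ℝ)) :
    (∀ A C : Set (Fin n → ℝ),
      A = (W : Set (Fin n → ℝ)) \ ⋃ i : Fin n, {z : Fin n → ℝ | z ∈ W ∧ z i = 0} →
      C = {z : Fin n → ℝ | ∀ i, -1 < z i ∧ z i < 1} →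
      Set.BijOn (fun R : Set (Fin n → ℝ) => R ∩ C)
        {R : Set (Fin n → ℝ) | ∃ x ∈ A, R = connectedComponentIn A x}
        {S : Set (Fin n → ℝ) | ∃ x ∈ A ∩ C, S = connectedComponentIn (A ∩ C) x} ∧
      ∀ R ∈ {R : Set (Fin n → ℝ) | ∃ x ∈ A, R = connectedComponentIn A x},
        IsConnected (R ∩ C)) := by
  intro A C hA hC
  have hA' : A = {z | z ∈ W ∧ ∀ i, z i ≠ 0} := by
    rw [hA]
    ext z
    simp only [Set.mem_sdiff, Set.mem_iUnion, Set.mem_ofPred_eq, SetLike.mem_coe]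
    grind
  have hCconv : Convex ℝ C := by
    have : C = Set.univ.pi fun _ => Set.Ioo (-1 : ℝ) 1 := by
      rw [hC]
      ext z
      simp
    rw [this]
    exact convex_pi fun _ _ => convex_Ioo _ _
  clear hA
  subst hA'
  have hcompA : ∀ x ∈ {z | z ∈ W ∧ ∀ i, z i ≠ 0},
      connectedComponentIn {z | z ∈ W ∧ ∀ i, z i ≠ 0} x = signCell W x := by
    intro x hx
    simpa only [Set.inter_univ] using
      connectedComponentIn_inter_eq W convex_univ (x := x) ⟨hx, Set.mem_univ x⟩
  -- Each component of `A` is the cell of a point of the cube, obtained by rescaling.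
  have hscale : ∀ x ∈ {z | z ∈ W ∧ ∀ i, z i ≠ 0},
      ∃ y ∈ {z | z ∈ W ∧ ∀ i, z i ≠ 0} ∩ C, signCell W y = signCell W x := by
    rintro x ⟨hxW, hx⟩
    obtain ⟨t, ht, htC⟩ := exists_pos_smul_mem_cube x
    refine ⟨t • x, ⟨⟨W.smul_mem t hxW, fun i => mul_ne_zero ht.ne' (hx i)⟩, ?_⟩,
      signCell_smul W x ht⟩
    rw [hC]
    exact htC
  have hself : ∀ y ∈ {z | z ∈ W ∧ ∀ i, z i ≠ 0}, y ∈ signCell W y :=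
    fun y hy => ⟨hy.1, fun i => mul_self_pos.2 (hy.2 i)⟩
  refine ⟨⟨?_, ?_, ?_⟩, ?_⟩
  · rintro _ ⟨x, hx, rfl⟩
    obtain ⟨y, hy, hyx⟩ := hscale x hx
    refine ⟨y, hy, ?_⟩
    rw [connectedComponentIn_inter_eq W hCconv hy, hyx, ← hcompA x hx]
  · rintro _ ⟨x, hx, rfl⟩ _ ⟨x', hx', rfl⟩ heq
    obtain ⟨y, hy, hyx⟩ := hscale x hx
    have hyR : y ∈ connectedComponentIn {z | z ∈ W ∧ ∀ i, z i ≠ 0} x := by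
      rw [hcompA x hx, ← hyx]
      exact hself y hy.1
    -- Two components with the same trace on the cube share the point `y`.
    have hyR' : y ∈ connectedComponentIn {z | z ∈ W ∧ ∀ i, z i ≠ 0} x' :=
      (heq.subset ⟨hyR, hy.2⟩).1
    rw [connectedComponentIn_eq hyR, connectedComponentIn_eq hyR']
  · rintro _ ⟨x, hx, rfl⟩
    refine ⟨_, ⟨x, hx.1, rfl⟩, ?_⟩
    rw [connectedComponentIn_inter_eq W hCconv hx, ← hcompA x hx.1]
  · rintro _ ⟨x, hx, rfl⟩
    obtain ⟨y, hy, hyx⟩ := hscale x hx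
    rw [hcompA x hx, ← hyx]
    exact ⟨⟨y, hself y hy.1, hy.2⟩, ((convex_signCell W y).inter hCconv).isPreconnected⟩
end

section
/- Let G = (V, E, head, tail) be a finite directed multigraph and let p be the unique polynomial such that for every integer k ≥ 1, p(k) equals the number of nowhere-zero ℤ/kℤ-tensions of G. Then for every integer k ≥ 1, |p(−k)| equals the number of pairs (t, ε) where t is a ℤ/kℤ-tension of G (not necessarily nowhere-zero) and ε is an acyclic orientation of the multigraph G \ supp(t) obtained from G by deleting all edges in supp(t) = { e ∈ E : t(e) ≠ 0 }. -/
namespace Multigraph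

open Finset Classical

/-! ### Acyclicity and height functions -/

lemma exists_split_of_not_nodup {α β : Type*} (f : α → β) (l : List α) (h : ¬ (l.map f).Nodup) :
    ∃ a x b y c, l = a ++ x :: (b ++ y :: c) ∧ f x = f y := by
  induction l with
  | nil => simp at h
  | cons z l ih =>
    by_cases hz : f z ∈ l.map f
    · obtain ⟨y, hy, hyz⟩ := List.mem_map.1 hz
      obtain ⟨b, c, rfl⟩ := List.append_of_mem hy
      exact ⟨[], z, b, y, c, by simp, hyz.symm⟩
    · have h' : ¬ (l.map f).Nodup := fun h' =>
        h (by rw [List.map_cons, List.nodup_cons]; exact ⟨hz, h'⟩)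
      obtain ⟨a, x, b, y, c, rfl, hxy⟩ := ih h'
      exact ⟨z :: a, x, b, y, c, by simp, hxy⟩

lemma isWalkFrom_append {V E : Type} (H : Multigraph V E) (l l' : List E) (u w : V) :
    H.IsWalkFrom u w (l ++ l') ↔ ∃ v, H.IsWalkFrom u v l ∧ H.IsWalkFrom v w l' := by
  induction l generalizing u with
  | nil => simp [IsWalkFrom]
  | cons e l ih => simp [IsWalkFrom, ih, and_assoc]

/-- Every nonempty closed directed walk contains a directed cycle: cut at a repeated vertex. -/
lemma exists_isDirectedCycle {V E : Type} (H : Multigraph V E) (n : ℕ) :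
    ∀ (l : List E) (v : V), l.length = n → l ≠ [] → H.IsWalkFrom v v l →
      ∃ w es, H.IsDirectedCycle w es := by
  induction n using Nat.strong_induction_on with
  | _ n ih =>
    intro l v hl hne hw
    by_cases hn : (l.map H.head).Nodup
    · exact ⟨v, l, hne, List.Nodup.of_map _ hn, hn, hw⟩
    · obtain ⟨a, x, b, y, c, rfl, hxy⟩ := exists_split_of_not_nodup _ _ hn
      obtain ⟨v₁, -, hx⟩ := (isWalkFrom_append ..).1 hw
      obtain ⟨v₂, hb, hy⟩ := (isWalkFrom_append ..).1 hx.2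
      refine ih (b ++ [y]).length ?_ (b ++ [y]) (H.head y) rfl (by simp) ?_
      · simp at hl ⊢; omega
      · exact (isWalkFrom_append ..).2 ⟨v₂, hxy ▸ hb, hy.1, rfl⟩

lemma exists_walk_of_transGen {V E : Type} (H : Multigraph V E) {u v : V}
    (h : Relation.TransGen (fun a b => ∃ e, H.tail e = a ∧ H.head e = b) u v) :
    ∃ l, l ≠ [] ∧ H.IsWalkFrom u v l := by
  induction h with
  | single h => obtain ⟨e, he, he'⟩ := h; exact ⟨[e], by simp, he, he'⟩
  | tail _ h ih =>
    obtain ⟨e, he, he'⟩ := h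
    obtain ⟨l, -, hl⟩ := ih
    exact ⟨l ++ [e], by simp, (isWalkFrom_append ..).2 ⟨_, hl, he, he'⟩⟩

lemma height_le_of_walk {V E : Type} (H : Multigraph V E) (h : V → ℤ)
    (hh : ∀ e, h (H.tail e) < h (H.head e)) (l : List E) (u v : V) (hw : H.IsWalkFrom u v l) :
    h u + l.length ≤ h v := by
  induction l generalizing u with
  | nil => simp [IsWalkFrom] at hw; simp [hw]
  | cons e l ih =>
    have h1 := ih _ hw.2
    have h2 := hh e
    rw [hw.1] at h2
    simp only [List.length_cons]; push_cast; linarith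

/-- A finite multigraph is acyclic iff its vertices admit heights increasing along each edge.
The height used is the number of vertices from which the given one can be reached. -/
lemma isAcyclic_iff_exists_height {V E : Type} [Fintype V] (H : Multigraph V E) :
    H.IsAcyclic ↔ ∃ h : V → ℤ, ∀ e, h (H.tail e) < h (H.head e) := by
  constructor
  · intro hac
    set R : V → V → Prop := Relation.TransGen (fun a b => ∃ e, H.tail e = a ∧ H.head e = b) with hR
    have irr : ∀ v, ¬ R v v := by
      intro v hv
      obtain ⟨l, hne, hl⟩ := exists_walk_of_transGen H hv
      obtain ⟨w, es, hc⟩ := exists_isDirectedCycle H _ l v rfl hne hl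
      exact hac w es hc
    refine ⟨fun v => ((univ.filter fun w => R w v).card : ℤ), fun e => ?_⟩
    have hRe : R (H.tail e) (H.head e) := Relation.TransGen.single ⟨e, rfl, rfl⟩
    have : (univ.filter fun w => R w (H.tail e)) ⊂ univ.filter fun w => R w (H.head e) := by
      rw [Finset.ssubset_iff_of_subset]
      · exact ⟨H.tail e, by simpa using hRe, by simpa using irr _⟩
      · intro w hw
        simp only [mem_filter, mem_univ, true_and] at hw ⊢
        exact hw.trans hRe
    exact Nat.cast_lt.2 (Finset.card_lt_card this)
  · rintro ⟨h, hh⟩ v es ⟨hne, -, -, hw⟩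
    have := height_le_of_walk H h hh es v v hw
    have := List.length_pos_iff.2 hne
    omega

/-! ### Counting acyclic orientations -/

/-- The edges in `S`, with those in `P` oriented along `tl → hd` and the others against it, admit
a height function increasing along every edge (that is, this orientation of `S` is acyclic). -/
def HasHeight {V E : Type} (hd tl : E → V) (S P : Finset E) : Prop :=
  ∃ h : V → ℤ, ∀ e ∈ S, if e ∈ P then h (tl e) < h (hd e) else h (hd e) < h (tl e)

/-- The number of connected components of the spanning subgraph with edge set `A`. -/
noncomputable def numComp {V E : Type} (hd tl : E → V) (A : Finset E) : ℕ :=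
  Nat.card (Quot fun u v => ∃ e ∈ A, hd e = u ∧ tl e = v)

/-- Functions constant along the edges of `A` are functions on the components of `A`. -/
lemma card_const_on {V E : Type} [Fintype V] (hd tl : E → V) (A : Finset E)
    (X : Type) [Finite X] :
    Nat.card {c : V → X // ∀ e ∈ A, c (hd e) = c (tl e)} = Nat.card X ^ numComp hd tl A := by
  rw [numComp, ← Nat.card_fun]
  refine Nat.card_congr
    { toFun := fun c => Quot.lift c.1 ?_
      invFun := fun g => ⟨fun v => g (Quot.mk _ v), ?_⟩
      left_inv := fun c => rfl
      right_inv := fun g => ?_ }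
  · rintro a b ⟨e, he, rfl, rfl⟩; exact c.2 e he
  · intro e he; exact congrArg g (Quot.sound ⟨e, he, rfl, rfl⟩)
  · funext q; induction q using Quot.ind; rfl

lemma numComp_empty {V E : Type} (hd tl : E → V) : numComp hd tl ∅ = Nat.card V := by
  refine Nat.card_congr
    { toFun := Quot.lift id (by simp)
      invFun := Quot.mk _
      left_inv := fun q => by induction q using Quot.ind; rfl
      right_inv := fun v => rfl }

lemma numComp_insert_loop {V E : Type} [Fintype V] (hd tl : E → V) (a : E) (h : hd a = tl a)
    (A : Finset E) : numComp hd tl (insert a A) = numComp hd tl A := by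
  refine Nat.pow_right_injective (le_refl 2) ?_
  have h1 := card_const_on hd tl (insert a A) Bool
  have h2 := card_const_on hd tl A Bool
  simp only [Nat.card_eq_fintype_card (α := Bool), Fintype.card_bool, mem_insert,
    forall_eq_or_imp, h, true_and] at h1 h2
  exact h1.symm.trans h2

/-- Redirecting every edge at `hd a` to `tl a` contracts the non-loop `a` and leaves `hd a` behind
as an isolated vertex, which accounts for the extra component. -/
lemma numComp_contract {V E : Type} [Fintype V] (hd tl : E → V) (a : E) (h : hd a ≠ tl a)
    (A : Finset E) :
    numComp (Function.update id (hd a) (tl a) ∘ hd) (Function.update id (hd a) (tl a) ∘ tl) A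
      = numComp hd tl (insert a A) + 1 := by
  refine Nat.pow_right_injective (le_refl 2) ?_
  set f : V → V := Function.update id (hd a) (tl a) with hf
  have fh : f (hd a) = tl a := by simp [hf]
  have fne : ∀ v, v ≠ hd a → f v = v := fun v hv => by simp [hf, hv]
  have h1 := card_const_on hd tl (insert a A) Bool
  have h2 := card_const_on (f ∘ hd) (f ∘ tl) A Bool
  simp only [Nat.card_eq_fintype_card (α := Bool), Fintype.card_bool] at h1 h2
  show 2 ^ _ = 2 ^ _
  rw [← h2, pow_succ, ← h1]
  have : 2 = Nat.card Bool := by simp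
  rw [this, ← Nat.card_prod]
  have key : ∀ c : V → Bool, c (hd a) = c (tl a) → c ∘ f = c := by
    intro c hc; funext v
    by_cases hv : v = hd a
    · subst hv; simp [fh, hc]
    · simp [fne v hv]
  refine Nat.card_congr
    { toFun := fun c => (⟨c.1 ∘ f, ?_⟩, c.1 (hd a))
      invFun := fun q => ⟨Function.update q.1.1 (hd a) q.2, ?_⟩
      left_inv := fun c => ?_
      right_inv := fun q => ?_ }
  · intro e he
    rcases mem_insert.1 he with rfl | he
    · simp [fh, fne _ h.symm]
    · exact c.2 e he
  · have hcomp : ∀ v, Function.update q.1.1 (hd a) q.2 (f v) = q.1.1 v := by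
      intro v
      by_cases hv : v = hd a
      · subst hv; rw [fh, Function.update_of_ne h.symm]; exact (q.1.2 a (by simp)).symm
      · rw [fne v hv, Function.update_of_ne hv]
    intro e he
    simp only [Function.comp, hcomp]
    exact q.1.2 e (by simp [he])
  · apply Subtype.ext; funext v
    by_cases hv : v = hd a
    · subst hv; simp
    · simp [hv, fne v hv]
  · obtain ⟨⟨c, hc⟩, b⟩ := q
    refine Prod.ext (Subtype.ext ?_) (by simp)
    funext v
    by_cases hv : v = hd a
    · subst hv; simp [fh, h.symm, hc a (by simp)]
    · simp [hv, fne v hv]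

/-- Deletion–contraction for acyclic orientations, for a fixed orientation of the edges other
than `a`: the number of acyclic extensions to `a` is the number (0 or 1) of acyclic orientations
without `a` plus the number with `a` contracted. Heights for the two extensions combine linearly
to one that is equal at both ends of `a`; conversely such a height can be perturbed at `hd a`. -/
lemma hasHeight_insert {V E : Type} (hd tl : E → V) (a : E) (h : hd a ≠ tl a)
    (S P : Finset E) (haS : a ∉ S) (haP : a ∉ P) :
    (if HasHeight hd tl (insert a S) P then (1 : ℤ) else 0)
      + (if HasHeight hd tl (insert a S) (insert a P) then 1 else 0)
    = (if HasHeight hd tl S P then 1 else 0)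
      + (if HasHeight (Function.update id (hd a) (tl a) ∘ hd)
          (Function.update id (hd a) (tl a) ∘ tl) S P then 1 else 0) := by
  set f : V → V := Function.update id (hd a) (tl a) with hf
  have fh : f (hd a) = tl a := by simp [hf]
  have fne : ∀ v, v ≠ hd a → f v = v := fun v hv => by simp [hf, hv]
  let good : (V → ℤ) → Prop := fun g =>
    ∀ e ∈ S, if e ∈ P then g (tl e) < g (hd e) else g (hd e) < g (tl e)
  have e1 : HasHeight hd tl (insert a S) P ↔ ∃ g, good g ∧ g (hd a) < g (tl a) := by
    unfold HasHeight
    simp only [mem_insert, forall_eq_or_imp, haP, if_false]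
    exact exists_congr fun g => and_comm
  have e2 : HasHeight hd tl (insert a S) (insert a P) ↔ ∃ g, good g ∧ g (tl a) < g (hd a) := by
    unfold HasHeight
    refine exists_congr fun g => ?_
    rw [and_comm, Finset.forall_mem_insert]
    refine and_congr (by simp) (forall₂_congr fun e he => ?_)
    have : e ≠ a := fun hh => haS (hh ▸ he)
    simp [this]
  have e3 : HasHeight hd tl S P ↔ ∃ g, good g := Iff.rfl
  have e4 : HasHeight (f ∘ hd) (f ∘ tl) S P ↔ ∃ g, good g ∧ g (hd a) = g (tl a) := by
    constructor
    · rintro ⟨g, hg⟩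
      exact ⟨g ∘ f, hg, by simp [fh, fne _ h.symm]⟩
    · rintro ⟨g, hg, hga⟩
      refine ⟨g, ?_⟩
      have : ∀ v, g (f v) = g v := by
        intro v
        by_cases hv : v = hd a
        · subst hv; rw [fh, hga]
        · rw [fne v hv]
      intro e he
      simpa only [Function.comp, this] using hg e he
  have perturb : ∀ g, good g → g (hd a) = g (tl a) → ∀ s : ℤ, s = 1 ∨ s = -1 →
      good (fun v => 2 * g v + if v = hd a then s else 0) := by
    intro g hg hga s hs e he
    have := hg e he
    dsimp only
    split_ifs at this ⊢ <;> omega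
  have i1 : (∃ g, good g ∧ g (hd a) = g (tl a)) → ∃ g, good g ∧ g (hd a) < g (tl a) := by
    rintro ⟨g, hg, hga⟩
    exact ⟨fun v => 2 * g v + if v = hd a then -1 else 0,
      perturb g hg hga (-1) (Or.inr rfl), by simp [Ne.symm h, hga]⟩
  have i2 : (∃ g, good g ∧ g (hd a) = g (tl a)) → ∃ g, good g ∧ g (tl a) < g (hd a) := by
    rintro ⟨g, hg, hga⟩
    exact ⟨fun v => 2 * g v + if v = hd a then 1 else 0,
      perturb g hg hga 1 (Or.inl rfl), by simp [Ne.symm h, hga]⟩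
  have i3 : (∃ g, good g ∧ g (hd a) < g (tl a)) → (∃ g, good g ∧ g (tl a) < g (hd a)) →
      ∃ g, good g ∧ g (hd a) = g (tl a) := by
    rintro ⟨g, hg, hga⟩ ⟨g', hg', hga'⟩
    refine ⟨fun v => (g' (hd a) - g' (tl a)) * g v + (g (tl a) - g (hd a)) * g' v, ?_, by ring⟩
    intro e he
    have h1 := hg e he
    have h2 := hg' e he
    have p1 := sub_pos.2 hga
    have p2 := sub_pos.2 hga'
    split_ifs at h1 h2 ⊢
    · exact add_lt_add (mul_lt_mul_of_pos_left h1 p2) (mul_lt_mul_of_pos_left h2 p1)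
    · exact add_lt_add (mul_lt_mul_of_pos_left h1 p2) (mul_lt_mul_of_pos_left h2 p1)
  have i4 : (∃ g, good g) → (∃ g, good g ∧ g (hd a) < g (tl a)) ∨
      (∃ g, good g ∧ g (tl a) < g (hd a)) ∨ ∃ g, good g ∧ g (hd a) = g (tl a) := by
    rintro ⟨g, hg⟩
    rcases lt_trichotomy (g (hd a)) (g (tl a)) with hh | hh | hh
    · exact Or.inl ⟨g, hg, hh⟩
    · exact Or.inr (Or.inr ⟨g, hg, hh⟩)
    · exact Or.inr (Or.inl ⟨g, hg, hh⟩)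
  have i5 : (∃ g, good g ∧ g (hd a) < g (tl a)) → ∃ g, good g := fun ⟨g, hg, _⟩ => ⟨g, hg⟩
  have i6 : (∃ g, good g ∧ g (tl a) < g (hd a)) → ∃ g, good g := fun ⟨g, hg, _⟩ => ⟨g, hg⟩
  simp only [e1, e2, e3, e4]
  generalize (∃ g, good g ∧ g (hd a) = g (tl a)) = p0 at *
  generalize (∃ g, good g ∧ g (hd a) < g (tl a)) = p1 at *
  generalize (∃ g, good g ∧ g (tl a) < g (hd a)) = p2 at *
  generalize (∃ g, good g) = p3 at *
  by_cases h0 : p0 <;> by_cases h1 : p1 <;> by_cases h2 : p2 <;> by_cases h3 : p3 <;>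
    simp_all

/-- Stanley's theorem in Whitney form: the number of acyclic orientations of the edge set `S`
as an alternating sum over the subsets of `S`. -/
lemma sum_hasHeight {V E : Type} [Fintype V] (S : Finset E) : ∀ hd tl : E → V,
    (∑ P ∈ S.powerset, if HasHeight hd tl S P then (1 : ℤ) else 0)
      = (-1) ^ Nat.card V * ∑ A ∈ S.powerset, (-1) ^ (#A + numComp hd tl A) := by
  induction S using Finset.induction_on with
  | empty =>
    intro hd tl
    simp [HasHeight, numComp_empty, ← pow_add, ← two_mul]
  | insert a S ha ih =>
    intro hd tl
    rw [sum_powerset_insert ha, sum_powerset_insert ha, ← sum_add_distrib]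
    have hmem : ∀ {A}, A ∈ S.powerset → a ∉ A := fun hA h => ha (mem_powerset.1 hA h)
    by_cases h : hd a = tl a
    · have l1 : ∀ P, ¬ HasHeight hd tl (insert a S) P := by
        rintro P ⟨g, hg⟩
        have := hg a (mem_insert_self _ _)
        rw [h] at this
        simp at this
      have l2 : ∑ A ∈ S.powerset, (-1 : ℤ) ^ (#(insert a A) + numComp hd tl (insert a A))
          = - ∑ A ∈ S.powerset, (-1) ^ (#A + numComp hd tl A) := by
        rw [← sum_neg_distrib]
        refine sum_congr rfl fun A hA => ?_
        rw [card_insert_of_notMem (hmem hA), numComp_insert_loop _ _ _ h]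
        ring
      simp [l1, l2]
    · rw [sum_congr rfl fun P hP => hasHeight_insert hd tl a h S P ha (hmem hP),
        sum_add_distrib, ih, ih, ← mul_add]
      congr 2
      refine sum_congr rfl fun A hA => ?_
      rw [card_insert_of_notMem (hmem hA), numComp_contract _ _ _ h]
      ring

/-- Stanley's theorem for `G` with the edge set `B` deleted, where `Z` is the complement of `B`. -/
lemma card_acyclic {V E : Type} [Fintype V] [Fintype E] (G : Multigraph V E) (B : Set E)
    (Z : Finset E) (hZ : ∀ e, e ∈ Z ↔ e ∉ B) :
    (Nat.card {ε : {e : E // e ∉ B} → ℤ //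
          IsOrientation ε ∧ ((G.deleteEdges B).reorient ε).IsAcyclic} : ℤ)
      = (-1) ^ Nat.card V * ∑ A ∈ Z.powerset, (-1) ^ (#A + numComp G.head G.tail A) := by
  rw [← sum_hasHeight, ← Finset.sum_filter, Finset.sum_const, nsmul_one]
  norm_cast
  rw [← Fintype.card_coe, ← Nat.card_eq_fintype_card]
  -- an orientation corresponds to the set of edges on which it is `+1`
  have hpos : ∀ (ε : {e : E // e ∉ B} → ℤ) (e : E) (he : e ∉ B),
      e ∈ ({e | ∃ he : e ∉ B, ε ⟨e, he⟩ = 1} : Finset E) ↔ ε ⟨e, he⟩ = 1 := by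
    intro ε e he; simp [he]
  have hiff : ∀ (ε : {e : E // e ∉ B} → ℤ) (P : Finset E),
      (∀ (e : E) (he : e ∉ B), e ∈ P ↔ ε ⟨e, he⟩ = 1) →
      (((G.deleteEdges B).reorient ε).IsAcyclic ↔ HasHeight G.head G.tail Z P) := by
    intro ε P hP
    rw [isAcyclic_iff_exists_height]
    refine exists_congr fun h => ?_
    rw [Subtype.forall]
    refine forall_congr' fun e => ?_
    rw [hZ]
    refine forall_congr' fun he => ?_
    have := hP e he
    by_cases h1 : ε ⟨e, he⟩ = 1
    · simp [reorient, deleteEdges, h1, this]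
    · simp [reorient, deleteEdges, h1, this]
  refine Nat.card_congr
    { toFun := fun ε => ⟨({e | ∃ he : e ∉ B, ε.1 ⟨e, he⟩ = 1} : Finset E), ?_⟩
      invFun := fun P => ⟨fun e => if e.1 ∈ P.1 then 1 else -1, ?_, ?_⟩
      left_inv := fun ε => ?_
      right_inv := fun P => ?_ }
  · refine mem_filter.2 ⟨mem_powerset.2 fun e he => ?_, (hiff ε.1 _ (hpos ε.1)).1 ε.2.2⟩
    obtain ⟨he', -⟩ := (mem_filter.1 he).2
    exact (hZ e).2 he'
  · intro e
    by_cases h : e.1 ∈ P.1 <;> simp [h]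
  · refine (hiff _ P.1 fun e he => ?_).2 (mem_filter.1 P.2).2
    by_cases h : e ∈ P.1 <;> simp [h]
  · apply Subtype.ext
    funext e
    rcases ε.2.1 e with h | h <;> simp [h, e.2]
  · apply Subtype.ext
    ext e
    have : e ∈ P.1 → e ∉ B := fun he => (hZ e).1 (mem_powerset.1 (mem_filter.1 P.2).1 he)
    by_cases h : e ∈ P.1 <;> simp [h, this]

/-! ### Tensions and potentials -/

/-- The signed sum of `t` along a signed walk. -/
def signedSum {E R : Type} [AddCommGroup R] (t : E → R) (qs : List (E × Bool)) : R :=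
  (qs.map fun q => if q.2 then t q.1 else -t q.1).sum

lemma signedSum_append {E R : Type} [AddCommGroup R] (t : E → R) (l l' : List (E × Bool)) :
    signedSum t (l ++ l') = signedSum t l + signedSum t l' := by simp [signedSum]

lemma signedSum_cons {E R : Type} [AddCommGroup R] (t : E → R) (q : E × Bool)
    (l : List (E × Bool)) :
    signedSum t (q :: l) = (if q.2 then t q.1 else -t q.1) + signedSum t l := by simp [signedSum]

lemma isSignedWalkFrom_append {V E : Type} (H : Multigraph V E) (l l' : List (E × Bool))
    (u w : V) : H.IsSignedWalkFrom u w (l ++ l') ↔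
      ∃ v, H.IsSignedWalkFrom u v l ∧ H.IsSignedWalkFrom v w l' := by
  induction l generalizing u with
  | nil => simp [IsSignedWalkFrom]
  | cons e l ih => simp [IsSignedWalkFrom, ih, and_assoc]

/-- A tension sums to zero along every closed walk: a closed walk that is not a cycle splits into
shorter closed walks at a repeated vertex, or at an edge traversed in both directions. -/
lemma IsTension.closed {V E R : Type} [AddCommGroup R] {H : Multigraph V E} {t : E → R}
    (ht : H.IsTension t) (n : ℕ) : ∀ (l : List (E × Bool)) (v : V), l.length = n →
      H.IsSignedWalkFrom v v l → signedSum t l = 0 := by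
  induction n using Nat.strong_induction_on with
  | _ n ih =>
    intro l v hl hw
    by_cases hne : l = []
    · subst hne; simp [signedSum]
    by_cases hn : (l.map H.dirHead).Nodup
    · by_cases hf : (l.map Prod.fst).Nodup
      · exact ht v l ⟨hne, hf, hn, hw⟩
      · obtain ⟨a, x, b, y, c, rfl, hxy⟩ := exists_split_of_not_nodup _ _ hf
        obtain ⟨v₁, ha, hx⟩ := (isSignedWalkFrom_append ..).1 hw
        obtain ⟨v₂, hb, hy⟩ := (isSignedWalkFrom_append ..).1 hx.2
        have hne : H.dirHead x ≠ H.dirHead y := by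
          intro hh
          simp [List.nodup_append, hh] at hn
        obtain ⟨e, s⟩ := x
        obtain ⟨e', s'⟩ := y
        obtain rfl : e = e' := hxy
        -- the two traversals of `e` have different heads, hence opposite directions
        obtain rfl : s' = !s := by
          cases s <;> cases s' <;> simp_all
        have d1 : H.dirTail (e, !s) = H.dirHead (e, s) := by cases s <;> simp [dirTail, dirHead]
        have d2 : H.dirHead (e, !s) = H.dirTail (e, s) := by cases s <;> simp [dirTail, dirHead]
        have h1 : signedSum t b = 0 := by
          refine ih b.length ?_ b (H.dirHead (e, s)) rfl ?_
          · simp at hl; omega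
          · have := hy.1; rw [d1] at this; rw [← this] at hb; exact this ▸ hb
        have h2 : signedSum t (a ++ c) = 0 := by
          refine ih (a ++ c).length ?_ (a ++ c) v rfl ?_
          · simp at hl ⊢; omega
          · refine (isSignedWalkFrom_append ..).2 ⟨v₁, ha, ?_⟩
            have := hy.2; rw [d2, hx.1] at this; exact this
        simp only [signedSum_append, signedSum_cons, h1] at h2 ⊢
        rw [zero_add, show ∀ p q r w : R, p + (q + (r + w)) = p + w + (q + r) by
          intros; abel, h2]
        cases s <;> simp
    · obtain ⟨a, x, b, y, c, rfl, hxy⟩ := exists_split_of_not_nodup _ _ hn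
      obtain ⟨v₁, ha, hx⟩ := (isSignedWalkFrom_append ..).1 hw
      obtain ⟨v₂, hb, hy⟩ := (isSignedWalkFrom_append ..).1 hx.2
      have h1 : signedSum t (b ++ [y]) = 0 := by
        refine ih (b ++ [y]).length ?_ (b ++ [y]) (H.dirHead y) rfl ?_
        · simp at hl ⊢; omega
        · exact (isSignedWalkFrom_append ..).2 ⟨v₂, hxy ▸ hb, hy.1, rfl⟩
      have h2 : signedSum t (a ++ x :: c) = 0 := by
        refine ih (a ++ x :: c).length ?_ (a ++ x :: c) v rfl ?_
        · simp at hl ⊢; omega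
        · exact (isSignedWalkFrom_append ..).2 ⟨v₁, ha, hx.1, hxy ▸ hy.2⟩
      simp only [signedSum_append, signedSum_cons] at h1 h2 ⊢
      simp only [signedSum, List.map_nil, List.sum_nil, add_zero] at h1
      rw [← h2]
      simp only [signedSum] at *
      rw [show ∀ p q r s w : R, p + (q + (r + (s + w))) = p + (q + w) + (r + s) by
        intros; abel, h1, add_zero]

lemma exists_reverse_walk {V E R : Type} [AddCommGroup R] (H : Multigraph V E) (t : E → R)
    (l : List (E × Bool)) (u v : V) (hw : H.IsSignedWalkFrom u v l) :
    ∃ l', H.IsSignedWalkFrom v u l' ∧ signedSum t l' = - signedSum t l := by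
  induction l generalizing u with
  | nil => exact ⟨[], Eq.symm hw, by simp [signedSum]⟩
  | cons q l ih =>
    obtain ⟨l', hl', hs⟩ := ih _ hw.2
    obtain ⟨e, s⟩ := q
    refine ⟨l' ++ [(e, !s)], (isSignedWalkFrom_append ..).2 ⟨_, hl', ?_, ?_⟩, ?_⟩
    · cases s <;> simp [dirTail, dirHead]
    · have := hw.1
      cases s <;> simpa [dirTail, dirHead, IsSignedWalkFrom] using this
    · rw [signedSum_append, signedSum_cons, signedSum_cons, hs]
      cases s <;> simp [signedSum]

/-- Tensions are exactly the differences of vertex potentials. -/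
lemma isTension_iff {V E R : Type} [AddCommGroup R] (H : Multigraph V E) (t : E → R) :
    H.IsTension t ↔ ∃ c : V → R, ∀ e, t e = c (H.head e) - c (H.tail e) := by
  constructor
  · intro ht
    let s : Setoid V :=
      { r := fun u v => ∃ l, H.IsSignedWalkFrom u v l
        iseqv :=
          { refl := fun u => ⟨[], rfl⟩
            symm := fun ⟨l, hl⟩ => by
              obtain ⟨l', hl', -⟩ := exists_reverse_walk H t l _ _ hl
              exact ⟨l', hl'⟩
            trans := fun ⟨l, hl⟩ ⟨l', hl'⟩ =>
              ⟨l ++ l', (isSignedWalkFrom_append ..).2 ⟨_, hl, hl'⟩⟩ } }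
    have hrep : ∀ v : V, ∃ l, H.IsSignedWalkFrom (Quotient.out (Quotient.mk s v)) v l :=
      fun v => Quotient.mk_out (s := s) v
    choose w hw using hrep
    refine ⟨fun v => signedSum t (w v), fun e => ?_⟩
    have hst : Quotient.mk s (H.tail e) = Quotient.mk s (H.head e) :=
      Quotient.sound ⟨[(e, true)], by simp [IsSignedWalkFrom, dirTail, dirHead]⟩
    obtain ⟨l', hl', hs⟩ := exists_reverse_walk H t _ _ _ (hw (H.head e))
    have h0 := ht.closed _ (w (H.tail e) ++ (e, true) :: l')
      (Quotient.out (Quotient.mk s (H.tail e))) rfl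
      ((isSignedWalkFrom_append ..).2 ⟨_, hw _, by simp [dirTail], by
        rw [hst]; simpa [dirHead] using hl'⟩)
    rw [signedSum_append, signedSum_cons, hs] at h0
    simp only [if_true] at h0
    rw [eq_sub_iff_add_eq, ← sub_eq_zero, ← h0]
    abel
  · rintro ⟨c, hc⟩
    have tele : ∀ (l : List (E × Bool)) (u v : V), H.IsSignedWalkFrom u v l →
        signedSum t l = c v - c u := by
      intro l
      induction l with
      | nil => intro u v h; simp [IsSignedWalkFrom] at h; simp [signedSum, h]
      | cons q l ih =>
        intro u v h
        rw [signedSum_cons, ih _ _ h.2, ← h.1, hc]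
        obtain ⟨e, s⟩ := q
        cases s <;> simp [dirHead, dirTail]
    intro v qs h
    simpa [signedSum] using tele qs v v h.2.2.2

/-- Potentials constant along `A` are, up to potentials constant along every edge, the tensions
vanishing on `A`. -/
lemma card_tension_mul {V E : Type} [Fintype V] [Fintype E] (G : Multigraph V E)
    (A : Finset E) (k : ℕ) [NeZero k] :
    #{t : E → ZMod k | G.IsTension t ∧ ∀ e ∈ A, t e = 0} * k ^ numComp G.head G.tail univ
      = k ^ numComp G.head G.tail A := by
  have h1 := card_const_on G.head G.tail univ (ZMod k)
  have h2 := card_const_on G.head G.tail A (ZMod k)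
  rw [Nat.card_zmod] at h1 h2
  rw [← h1, ← h2, ← Fintype.card_subtype, ← Nat.card_eq_fintype_card, ← Nat.card_prod]
  have hpot : ∀ t : {t : E → ZMod k // G.IsTension t ∧ ∀ e ∈ A, t e = 0},
      ∃ c : V → ZMod k, ∀ e, t.1 e = c (G.head e) - c (G.tail e) :=
    fun t => (isTension_iff G t.1).1 t.2.1
  choose σ hσ using hpot
  refine Nat.card_congr (Equiv.symm
    { toFun := fun c => (⟨fun e => c.1 (G.head e) - c.1 (G.tail e),
        (isTension_iff G _).2 ⟨c.1, fun _ => rfl⟩, fun e he => sub_eq_zero.2 (c.2 e he)⟩,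
        ⟨c.1 - σ ⟨fun e => c.1 (G.head e) - c.1 (G.tail e),
        (isTension_iff G _).2 ⟨c.1, fun _ => rfl⟩, fun e he => sub_eq_zero.2 (c.2 e he)⟩, ?_⟩)
      invFun := fun q => ⟨σ q.1 + q.2.1, ?_⟩
      left_inv := fun c => ?_
      right_inv := fun q => ?_ })
  · intro e _
    have := hσ ⟨fun e => c.1 (G.head e) - c.1 (G.tail e),
        (isTension_iff G _).2 ⟨c.1, fun _ => rfl⟩, fun e he => sub_eq_zero.2 (c.2 e he)⟩ e
    simp only [Pi.sub_apply] at this ⊢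
    linear_combination this
  · intro e he
    have h3 := hσ q.1 e
    rw [q.1.2.2 e he] at h3
    simp only [Pi.add_apply]
    linear_combination q.2.2 e (mem_univ e) - h3
  · apply Subtype.ext; simp
  · have h4 : (⟨fun e => (σ q.1 + q.2.1) (G.head e) - (σ q.1 + q.2.1) (G.tail e),
        (isTension_iff G _).2 ⟨_, fun _ => rfl⟩, fun e he => by
          have h3 := hσ q.1 e
          rw [q.1.2.2 e he] at h3
          simp only [Pi.add_apply]
          linear_combination q.2.2 e (mem_univ e) - h3⟩ :
          {t : E → ZMod k // G.IsTension t ∧ ∀ e ∈ A, t e = 0}) = q.1 := by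
      apply Subtype.ext; funext e
      simp only [Pi.add_apply]
      linear_combination q.2.2 e (mem_univ e) - hσ q.1 e
    refine Prod.ext h4 (Subtype.ext ?_)
    simp only [h4]
    simp

/-- Summing a function of `A` over tensions `t` and sets `A` of zeros of `t`. -/
lemma sum_tension {V E : Type} [Fintype V] [Fintype E] (G : Multigraph V E) (k : ℕ) [NeZero k]
    (F : Finset E → ℤ) :
    (∑ t : E → ZMod k with G.IsTension t, ∑ A ∈ ({e | t e = 0} : Finset E).powerset, F A)
        * (k : ℤ) ^ numComp G.head G.tail univ
      = ∑ A : Finset E, F A * (k : ℤ) ^ numComp G.head G.tail A := by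
  have : ∀ t : E → ZMod k, ∑ A ∈ ({e | t e = 0} : Finset E).powerset, F A
      = ∑ A : Finset E, if ∀ e ∈ A, t e = 0 then F A else 0 := by
    intro t
    rw [← Finset.sum_filter]
    refine sum_congr ?_ fun _ _ => rfl
    ext A; simp [subset_iff]
  simp only [this]
  rw [sum_comm, sum_mul]
  refine sum_congr rfl fun A _ => ?_
  have hc := card_tension_mul G A k
  rw [← Finset.sum_filter, Finset.filter_filter, sum_const, nsmul_eq_mul, mul_comm _ (F A),
    mul_assoc]
  congr 1
  exact_mod_cast hc

end Multigraph

open Multigraph in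
/-- reciprocity for the tension polynomial. If `p(k)` counts nowhere-zero
`ℤ/kℤ`-tensions of `G` for all `k ≥ 1`, then `|p(-k)|` counts pairs `(t, ε)` of a
`ℤ/kℤ`-tension `t` and an acyclic orientation `ε` of `G \ supp t`. -/
theorem tension_reciprocity (V E : Type) [Fintype V] [Fintype E]
    (G : Multigraph V E) (p : Polynomial ℚ)
    (hp : ∀ k : ℕ, 1 ≤ k →
      p.eval (k : ℚ) = Nat.card {t : E → ZMod k // G.IsTension t ∧ ∀ e, t e ≠ 0}) :
    ∀ k : ℕ, 1 ≤ k →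
      |p.eval (-(k : ℚ))| =
      Nat.card (Σ t : {t : E → ZMod k // G.IsTension t},
        {ε : {e : E // e ∉ {e' : E | t.1 e' ≠ 0}} → ℤ //
          IsOrientation ε ∧ ((G.deleteEdges {e' : E | t.1 e' ≠ 0}).reorient ε).IsAcyclic}) := by
  classical
  -- `p * X ^ c(E)` is the chromatic polynomial, in its Whitney expansion
  set q : Polynomial ℚ := ∑ A : Finset E, (-1) ^ A.card * Polynomial.X ^ numComp G.head G.tail A
    with hq
  have hpq : p * Polynomial.X ^ numComp G.head G.tail Finset.univ = q := by
    refine Polynomial.eq_of_infinite_eval_eq _ _ (Set.Infinite.mono ?_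
      (Set.infinite_range_of_injective (f := fun n : ℕ => ((n + 1 : ℕ) : ℚ))
        (fun a b h => by simpa using h)))
    rintro _ ⟨n, rfl⟩
    obtain ⟨k, hk⟩ : ∃ k, k = n + 1 := ⟨_, rfl⟩
    have : NeZero k := ⟨by omega⟩
    dsimp only
    rw [← hk]
    have hs := sum_tension G k (fun A => (-1) ^ A.card)
    simp only [Finset.sum_powerset_neg_one_pow_card] at hs
    have hcard : (Nat.card {t : E → ZMod k // G.IsTension t ∧ ∀ e, t e ≠ 0} : ℤ)
        = ∑ t : E → ZMod k with G.IsTension t,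
          if ({e | t e = 0} : Finset E) = ∅ then 1 else 0 := by
      rw [← Finset.sum_filter, Finset.filter_filter, Nat.card_eq_fintype_card,
        Fintype.card_subtype, Finset.sum_const, nsmul_one]
      simp [Finset.filter_eq_empty_iff]
    rw [← hcard] at hs
    have hs' := congrArg (Int.cast : ℤ → ℚ) hs
    push_cast at hs'
    have := hp k (by omega)
    simp only [Set.mem_ofPred_eq, Polynomial.eval_mul, Polynomial.eval_pow, Polynomial.eval_X, hq,
      Polynomial.eval_finsetSum, Polynomial.eval_neg, Polynomial.eval_one, this]
    exact hs'
  intro k hk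
  have : NeZero k := ⟨by omega⟩
  have hk0 : (0 : ℚ) < (k : ℚ) ^ numComp G.head G.tail Finset.univ := by
    have : (0 : ℚ) < k := by exact_mod_cast hk
    positivity
  set N := Nat.card (Σ t : {t : E → ZMod k // G.IsTension t},
        {ε : {e : E // e ∉ {e' : E | t.1 e' ≠ 0}} → ℤ //
          IsOrientation ε ∧ ((G.deleteEdges {e' : E | t.1 e' ≠ 0}).reorient ε).IsAcyclic}) with hN
  have hNsum : (N : ℤ) = (-1) ^ Nat.card V * ∑ t : E → ZMod k with G.IsTension t,
      ∑ A ∈ ({e | t e = 0} : Finset E).powerset, (-1) ^ (A.card + numComp G.head G.tail A) := by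
    have : ∀ B : Set E, Finite {ε : {e : E // e ∉ B} → ℤ //
        IsOrientation ε ∧ ((G.deleteEdges B).reorient ε).IsAcyclic} := fun B =>
      ((Set.Finite.pi' (fun _ : {e : E // e ∉ B} => Set.toFinite ({1, -1} : Set ℤ))).subset
        (fun ε hε => by simpa [IsOrientation] using hε.1) :
        {ε : {e : E // e ∉ B} → ℤ |
          IsOrientation ε ∧ ((G.deleteEdges B).reorient ε).IsAcyclic}.Finite)
    rw [hN, Nat.card_sigma, Finset.mul_sum, Nat.cast_sum, ← Finset.sum_subtype_eq_sum_filter, Finset.subtype_univ]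
    refine Finset.sum_congr rfl fun t _ => ?_
    exact card_acyclic G _ _ (by simp)
  have hs := sum_tension G k (fun A => (-1) ^ (A.card + numComp G.head G.tail A))
  have key : (N : ℚ) * (k : ℚ) ^ numComp G.head G.tail Finset.univ
      = (-1) ^ Nat.card V * q.eval (-(k : ℚ)) := by
    have h1 : (N : ℤ) * (k : ℤ) ^ numComp G.head G.tail Finset.univ = (-1) ^ Nat.card V *
        ∑ A : Finset E, (-1) ^ (A.card + numComp G.head G.tail A)
          * (k : ℤ) ^ numComp G.head G.tail A := by
      rw [← hs, hNsum, mul_assoc]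
    have h2 := congrArg (Int.cast : ℤ → ℚ) h1
    push_cast at h2
    rw [h2, hq, Polynomial.eval_finsetSum]
    congr 1
    refine Finset.sum_congr rfl fun A _ => ?_
    simp only [Polynomial.eval_mul, Polynomial.eval_pow, Polynomial.eval_neg, Polynomial.eval_one,
      Polynomial.eval_X]
    rw [pow_add, neg_pow (k : ℚ)]
    ring
  rw [← hpq, Polynomial.eval_mul, Polynomial.eval_pow, Polynomial.eval_X] at key
  have key' := congrArg abs key
  simp only [abs_mul, abs_pow, abs_neg, abs_one, one_pow, one_mul, Nat.abs_cast] at key'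
  exact (mul_right_cancel₀ hk0.ne' key').symm
end

section
/- Let H be a finite directed multigraph with incidence matrix D = D(H) ∈ ℝ^{V×E}, and let x ∈ ℝ^{E} satisfy D·x = 0 and x(e) ≠ 0 for all e ∈ E. Define the orientation ε : E → {+1, −1} by ε(e) = +1 if x(e) > 0 and ε(e) = −1 if x(e) < 0. Then ε is a totally cyclic orientation of H, i.e., every edge of the reoriented multigraph H_ε lies on a directed cycle of H_ε. -/
namespace Multigraph

/-- A suffix of a path is a path: a path from `w` to `v` that visits `u` contains one from `u`
to `v`. The vertices visited by a walk `es` starting at `w` are `w :: es.map G.head`. -/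
lemma exists_path_suffix {V E : Type} (G : Multigraph V E) (u v : V) (es : List E) :
    ∀ w, G.IsWalkFrom w v es → (w :: es.map G.head).Nodup → u ∈ w :: es.map G.head →
      ∃ es', G.IsWalkFrom u v es' ∧ (u :: es'.map G.head).Nodup := by
  induction es with
  | nil =>
    intro w hw hn hu
    obtain rfl : u = w := by simpa using hu
    exact ⟨[], hw, hn⟩
  | cons e es ih =>
    intro w hw hn hu
    rcases List.mem_cons.1 hu with rfl | hu
    · exact ⟨e :: es, hw, hn⟩
    · exact ih (G.head e) hw.2 (List.nodup_cons.1 hn).2 hu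

lemma exists_path_of_walk {V E : Type} (G : Multigraph V E) (v : V) (es : List E) :
    ∀ u, G.IsWalkFrom u v es →
      ∃ es', G.IsWalkFrom u v es' ∧ (u :: es'.map G.head).Nodup := by
  induction es with
  | nil => exact fun u hu => ⟨[], hu, by simp⟩
  | cons e es ih =>
    intro u hu
    obtain ⟨es', hw, hn⟩ := ih (G.head e) hu.2
    by_cases hmem : u ∈ G.head e :: es'.map G.head
    · exact G.exists_path_suffix u v es' _ hw hn hmem
    · exact ⟨e :: es', ⟨hu.1, hw⟩, List.nodup_cons.2 ⟨hmem, hn⟩⟩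

/-- In a multigraph carrying a strictly positive circulation `y`, the head of every edge is joined
to its tail by a directed walk. -/
lemma exists_walk_of_circulation {V E : Type} [Fintype V] [Fintype E] [DecidableEq V]
    (G : Multigraph V E) (y : E → ℝ) (hy : ∀ e, 0 < y e) (hflow : G.incMatrix.mulVec y = 0)
    (e : E) : ∃ es, G.IsWalkFrom (G.head e) (G.tail e) es := by
  classical
  let S : Finset V := Finset.univ.filter fun u => ∃ es, G.IsWalkFrom u (G.tail e) es
  have memS : ∀ u, u ∈ S ↔ ∃ es, G.IsWalkFrom u (G.tail e) es := fun u => by simp [S]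
  have hback : ∀ f, G.head f ∈ S → G.tail f ∈ S := by
    intro f hf
    obtain ⟨es, hes⟩ := (memS _).1 hf
    exact (memS _).2 ⟨f :: es, rfl, hes⟩
  -- Summing the conservation law over `S` leaves only the net flow across its boundary.
  have hsum : ∑ f, ((if G.tail f ∈ S then (1 : ℝ) else 0) -
      (if G.head f ∈ S then 1 else 0)) * y f = 0 := by
    have h : ∑ v ∈ S, G.incMatrix.mulVec y v = 0 := by simp [hflow]
    simp only [Matrix.mulVec, dotProduct, incMatrix, Matrix.of_apply] at h
    rw [Finset.sum_comm] at h
    simp only [← Finset.sum_mul, Finset.sum_sub_distrib, Finset.sum_ite_eq'] at h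
    rw [← neg_eq_zero, ← Finset.sum_neg_distrib]
    refine Eq.trans ?_ h
    exact Finset.sum_congr rfl fun f _ => by ring
  have hnonneg : ∀ f ∈ Finset.univ, 0 ≤ ((if G.tail f ∈ S then (1 : ℝ) else 0) -
      (if G.head f ∈ S then 1 else 0)) * y f := by
    intro f _
    refine mul_nonneg ?_ (hy f).le
    have := hback f
    split_ifs <;> simp_all
  have hzero := (Finset.sum_eq_zero_iff_of_nonneg hnonneg).1 hsum e (Finset.mem_univ e)
  have htail : G.tail e ∈ S := (memS _).2 ⟨[], rfl⟩
  refine (memS _).1 ?_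
  by_contra hhead
  simp [htail, hhead, (hy e).ne'] at hzero

lemma reorient_incMatrix_mulVec_abs {V E : Type} [Fintype E] [DecidableEq V]
    (H : Multigraph V E) (x : E → ℝ) :
    (H.reorient fun e => if 0 < x e then 1 else -1).incMatrix.mulVec (fun e => |x e|) =
      H.incMatrix.mulVec x := by
  funext v
  simp only [Matrix.mulVec, dotProduct, incMatrix, Matrix.of_apply, reorient]
  refine Finset.sum_congr rfl fun e _ => ?_
  by_cases hx : 0 < x e
  · simp [hx, abs_of_pos hx]
  · simp only [hx, abs_of_nonpos (not_lt.1 hx), if_false]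
    norm_num
    ring

end Multigraph

open Multigraph in
/-- a nowhere-zero vector in the kernel of the incidence matrix induces,
via its signs, a totally cyclic orientation. -/
theorem kernel_vector_gives_totallyCyclic (V E : Type) [Fintype V] [Fintype E] [DecidableEq V]
    (H : Multigraph V E) (x : E → ℝ)
    (hker : H.incMatrix.mulVec x = 0) (hnz : ∀ e, x e ≠ 0) :
    (H.reorient fun e => if 0 < x e then 1 else -1).IsTotallyCyclic := by
  intro e
  set G := H.reorient fun e => if 0 < x e then 1 else -1 with hG
  obtain ⟨es, hes⟩ := G.exists_walk_of_circulation (fun e => |x e|)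
    (fun e => abs_pos.2 (hnz e)) (by rw [hG, reorient_incMatrix_mulVec_abs, hker]) e
  obtain ⟨p, hp, hn⟩ := G.exists_path_of_walk _ es _ hes
  have hn' : ((e :: p).map G.head).Nodup := hn
  exact ⟨G.tail e, e :: p, ⟨by simp, hn'.of_map, hn', rfl, hp⟩, by simp⟩
end
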